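/- arXiv:math/0609029 — 4 statements merged into one kernel-verified Lean document; each statement's English description precedes it below -/
import Mathlib

section
/- Let q be a power of a prime, let n ≥ 1, and let G = GL(n, 𝔽_q). For every irreducible complex character χ of G, the sum of the values of χ over the unipotent elements of G is nonzero: Σ_{g ∈ G, (g − 1)^n = 0} χ(g) ≠ 0. In other words, every irreducible complex character of G is directly linked across the set of unipotent elements to the trivial character. -/
/-!
By Schur's lemma the sum `z` of the unipotents acts on `χ` by a scalar `c`, and the sum of the
character values is `c * χ(1)`. So it suffices that `z` acts injectively on every representation
over a field of characteristic zero. For this `GL(X)` is replaced by the units of the corner rings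
`e A e` of `A = End X`, with induction on the idempotent `e`. Let `z k = 0`. For `e = p + q` with
orthogonal `p` and `q`, let `U = 1 + p A q` and `U⁻ = 1 + q A p` be the opposite unipotent
radicals.

* Every coset `g U` has as many unipotents `u` as pairs of a unipotent `u` and a complement of the
  range of `p` stabilized by `u`. Hence on `U`-fixed vectors `z` equals the product
  `[U] z_p [U⁻] z_q` of sums of group elements. Here `z_p` and `z_q` are injective by induction,
  and `[U⁻]` and `[U]` are injective on `U`-fixed and `U⁻`-fixed vectors by Howlett and Lehrer. As
  `z` kills the `U`-fixed vector `[U] k`, this vector vanishes; thus `k` is cuspidal.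
* For cuspidal `k`, Möbius inversion over the subspaces of the kernel of `N`, which is nonzero for
  nilpotent `N`, reduces `z k` to a multiple of `k` by a value of the Möbius function, which is
  nonzero by Weisner's theorem.
-/

section Corner

variable {A : Type*} [Ring A]

/-- The Peirce corner `a A b`; for idempotents `a` and `b` the two equations say exactly that
`x` has the form `a * y * b`. -/
def corner (a b : A) : AddSubgroup A where
  carrier := {x | a * x = x ∧ x * b = x}
  zero_mem' := by simp
  add_mem' hx hy := ⟨by rw [mul_add, hx.1, hy.1], by rw [add_mul, hx.2, hy.2]⟩
  neg_mem' hx := ⟨by rw [mul_neg, hx.1], by rw [neg_mul, hx.2]⟩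

theorem mul_mul_mem_corner {a b : A} (ha : a * a = a) (hb : b * b = b) (x : A) :
    a * x * b ∈ corner a b :=
  ⟨by rw [← mul_assoc, ← mul_assoc, ha], by rw [mul_assoc, hb]⟩

theorem mul_mem_corner {a b c d x y : A} (hx : x ∈ corner a b) (hy : y ∈ corner c d) :
    x * y ∈ corner a d :=
  ⟨by rw [← mul_assoc, hx.1], by rw [mul_assoc, hy.2]⟩

theorem corner_mul_right_eq_zero {a b c x : A} (hx : x ∈ corner a b) (h : b * c = 0) :
    x * c = 0 := by
  rw [← hx.2, mul_assoc, h, mul_zero]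

theorem corner_mul_left_eq_zero {a b c x : A} (hx : x ∈ corner a b) (h : c * a = 0) :
    c * x = 0 := by
  rw [← hx.1, ← mul_assoc, h, zero_mul]

theorem corner_mul_corner_eq_zero {a b c d x y : A} (hx : x ∈ corner a b) (hy : y ∈ corner c d)
    (h : b * c = 0) : x * y = 0 :=
  corner_mul_left_eq_zero hy (corner_mul_right_eq_zero hx h)

theorem corner_mono_left {a a' b : A} (h : a' * a = a) : corner a b ≤ corner a' b :=
  fun x hx => ⟨by rw [← hx.1, ← mul_assoc, h], hx.2⟩

theorem corner_mono_right {a b b' : A} (h : b * b' = b) : corner a b ≤ corner a b' :=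
  fun x hx => ⟨hx.1, by rw [← hx.2, mul_assoc, h]⟩

theorem conj_mem_corner {a b n x : A} (ha : a * n * a = n * a) (hb : b * n * b = b * n)
    (hx : x ∈ corner a b) : (1 - n) * x * (1 + n) ∈ corner a b := by
  have hl : a * (n * x) = n * x := by
    rw [← hx.1, ← mul_assoc n, ← mul_assoc, ← mul_assoc, ha]
  have hr : x * n * b = x * n := by
    rw [← hx.2, mul_assoc x b n, mul_assoc, hb]
  refine ⟨?_, ?_⟩
  · rw [← mul_assoc, sub_mul, one_mul, mul_sub, hx.1, hl]
  · rw [mul_assoc (1 - n), mul_assoc, mul_add, mul_one, add_mul, hx.2, hr]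

/-- A pair of orthogonal idempotents. -/
structure IsOrthogonalPair (p q : A) : Prop where
  left_idem : p * p = p
  right_idem : q * q = q
  mul_eq_zero : p * q = 0
  mul_eq_zero' : q * p = 0

namespace IsOrthogonalPair

variable {p q a : A}

theorem symm (h : IsOrthogonalPair p q) : IsOrthogonalPair q p :=
  ⟨h.right_idem, h.left_idem, h.mul_eq_zero', h.mul_eq_zero⟩

theorem left_mul_add (h : IsOrthogonalPair p q) : p * (p + q) = p := by
  rw [mul_add, h.left_idem, h.mul_eq_zero, add_zero]

theorem right_mul_add (h : IsOrthogonalPair p q) : q * (p + q) = q := by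
  rw [mul_add, h.right_idem, h.mul_eq_zero', zero_add]

theorem add_mul_left (h : IsOrthogonalPair p q) : (p + q) * p = p := by
  rw [add_mul, h.left_idem, h.mul_eq_zero', add_zero]

theorem add_mul_right (h : IsOrthogonalPair p q) : (p + q) * q = q := by
  rw [add_mul, h.right_idem, h.mul_eq_zero, zero_add]

theorem add_idem (h : IsOrthogonalPair p q) : (p + q) * (p + q) = p + q := by
  rw [add_mul, h.left_mul_add, h.right_mul_add]

theorem of_mem_corner (hp : p * p = p) (ha : a ∈ corner p p) (haa : a * a = a) :
    IsOrthogonalPair a (p - a) := by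
  constructor <;> simp [sub_mul, mul_sub, hp, ha.1, ha.2, haa]

theorem mono_left (h : IsOrthogonalPair p q) (ha : a ∈ corner p p) (haa : a * a = a) :
    IsOrthogonalPair a q :=
  ⟨haa, h.right_idem, corner_mul_right_eq_zero ha h.mul_eq_zero,
    corner_mul_left_eq_zero ha h.mul_eq_zero'⟩

end IsOrthogonalPair

/-- Von Neumann regularity: every element has a generalized inverse. -/
def IsVonNeumannRegular (A : Type*) [Mul A] : Prop :=
  ∀ y : A, ∃ z, y * z * y = y

theorem IsVonNeumannRegular.exists_reflexive_inverse_mem_corner (hA : IsVonNeumannRegular A)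
    {p q y : A} (hp : p * p = p) (hq : q * q = q) (hy : y ∈ corner q p) :
    ∃ z ∈ corner p q, y * z * y = y ∧ z * y * z = z := by
  obtain ⟨z₀, hz₀⟩ := hA y
  set z := p * z₀ * q with hz
  have hyzy : y * z * y = y := by
    rw [show y * z * y = (y * p) * z₀ * (q * y) by rw [hz]; noncomm_ring, hy.1, hy.2, hz₀]
  refine ⟨z * y * z, ⟨?_, ?_⟩, ?_, ?_⟩
  · simp only [hz, ← mul_assoc, hp]
  · simp only [hz, mul_assoc, hq]
  · rw [show y * (z * y * z) * y = (y * z * y) * z * y by noncomm_ring, hyzy, hyzy]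
  · rw [show z * y * z * y * (z * y * z) = z * (y * z * y * z * y) * z by noncomm_ring,
      hyzy, hyzy]

end Corner

section OneAddSum

theorem finsum_mem_prod {α β M : Type*} [AddCommMonoid M] {S : Set α} {T : Set β}
    (hS : S.Finite) (hT : T.Finite) (f : α × β → M) :
    ∑ᶠ z ∈ S ×ˢ T, f z = ∑ᶠ (x ∈ S) (y ∈ T), f (x, y) := by
  rw [finsum_mem_eq_finite_toFinset_sum f (hS.prod hT), finsum_mem_eq_finite_toFinset_sum _ hS]
  simp only [finsum_mem_eq_finite_toFinset_sum _ hT]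
  rw [← Set.Finite.toFinset_prod hS hT, Finset.sum_product]

theorem finsum_mem_const {α M : Type*} [AddCommMonoid M] {S : Set α} (hS : S.Finite) (c : M) :
    ∑ᶠ _x ∈ S, c = S.ncard • c := by
  rw [finsum_mem_eq_finite_toFinset_sum _ hS, Finset.sum_const, Set.ncard_eq_toFinset_card S hS]

variable {A : Type*} [Ring A] {M : Type*} [AddCommGroup M] [DistribMulAction A M]

/-- The vector `w` is fixed by the elements `1 + x`, `x ∈ a A b`, which form the unipotent radical
of a parabolic subgroup when `b * a = 0`. Only the multiplicative monoid of the ring `A` acts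
on `M`. -/
def IsCornerFixed (a b : A) (w : M) : Prop :=
  ∀ x ∈ corner a b, (1 + x) • w = w

theorem IsCornerFixed.mono_left {a a' b : A} {w : M} (hw : IsCornerFixed a' b w)
    (h : a' * a = a) : IsCornerFixed a b w :=
  fun x hx => hw x (corner_mono_left h hx)

theorem IsCornerFixed.mono_right {a b b' : A} {w : M} (hw : IsCornerFixed a b' w)
    (h : b * b' = b) : IsCornerFixed a b w :=
  fun x hx => hw x (corner_mono_right h hx)

variable (M) in
/-- The action of the sum of the elements `1 + x`, for `x ∈ S`, of the group algebra. -/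
noncomputable def oneAddSum (S : Set A) : M →+ M :=
  ∑ᶠ x ∈ S, DistribSMul.toAddMonoidHom M (1 + x)

variable [Finite A]

theorem oneAddSum_apply (S : Set A) (w : M) : oneAddSum M S w = ∑ᶠ x ∈ S, (1 + x) • w :=
  (AddMonoidHom.eval w).map_finsum_mem _ S.toFinite

theorem map_oneAddSum {N : Type*} [AddCommMonoid N] (f : M →+ N) (S : Set A) (w : M) :
    f (oneAddSum M S w) = ∑ᶠ x ∈ S, f ((1 + x) • w) := by
  rw [oneAddSum_apply, f.map_finsum_mem _ S.toFinite]

theorem smul_oneAddSum (g : A) (S : Set A) (w : M) :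
    g • oneAddSum M S w = ∑ᶠ x ∈ S, (g * (1 + x)) • w :=
  (map_oneAddSum (DistribSMul.toAddMonoidHom M g) S w).trans
    (finsum_mem_congr rfl fun _ _ => smul_smul _ _ _)

theorem oneAddSum_singleton_zero (w : M) : oneAddSum M ({0} : Set A) w = w := by
  rw [oneAddSum_apply, finsum_mem_singleton, add_zero, one_smul]

theorem oneAddSum_smul_of_bijOn {S T : Set A} {g g' : A} {f : A → A} (hf : Set.BijOn f S T)
    (h : ∀ x ∈ S, (1 + x) * g = g' * (1 + f x)) (w : M) :
    oneAddSum M S (g • w) = g' • oneAddSum M T w := by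
  rw [oneAddSum_apply, smul_oneAddSum]
  exact finsum_mem_eq_of_bijOn f hf fun x hx => by rw [smul_smul, h x hx]

theorem oneAddSum_oneAddSum {S T U : Set A}
    (h : Set.BijOn (fun x : A × A => x.1 + x.2 + x.1 * x.2) (S ×ˢ T) U) (w : M) :
    oneAddSum M S (oneAddSum M T w) = oneAddSum M U w := by
  simp only [oneAddSum_apply S, oneAddSum_apply U, smul_oneAddSum]
  rw [← finsum_mem_prod S.toFinite T.toFinite fun z => ((1 + z.1) * (1 + z.2)) • w]
  refine finsum_mem_eq_of_bijOn _ h fun z _ => ?_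
  congr 1
  noncomm_ring

theorem smul_oneAddSum_eq_self {S : Set A} {h : A} {w : M}
    (H : ∀ x ∈ S, ∃ h', h * (1 + x) = (1 + x) * h' ∧ h' • w = w) :
    h • oneAddSum M S w = oneAddSum M S w := by
  rw [smul_oneAddSum, oneAddSum_apply]
  refine finsum_mem_congr rfl fun x hx => ?_
  obtain ⟨h', h₁, h₂⟩ := H x hx
  rw [h₁, mul_smul, h₂]

omit [Ring A] [DistribMulAction A M] in
theorem eq_zero_of_ncard_smul_eq_zero [IsAddTorsionFree M] {S : Set A} (hS : S.Nonempty) {w : M}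
    (h : S.ncard • w = 0) : w = 0 :=
  (smul_eq_zero.1 h).resolve_left ((Set.ncard_pos S.toFinite).2 hS).ne'

end OneAddSum

section CornerSums

variable {A : Type*} [Ring A]

theorem bijOn_add_corner_right {p₁ p₂ : A} (q : A) (h : IsOrthogonalPair p₁ p₂) :
    Set.BijOn (fun x : A × A => x.1 + x.2) ((corner q p₁ : Set A) ×ˢ (corner q p₂ : Set A))
      (corner q (p₁ + p₂)) := by
  refine Set.InvOn.bijOn (f' := fun x => (x * p₁, x * p₂))
    ⟨fun x hx => ?_, fun x hx => ?_⟩ (fun x hx => ?_) fun x hx => ⟨?_, ?_⟩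
  · simp only [add_mul, hx.1.2, hx.2.2, corner_mul_right_eq_zero hx.1 h.mul_eq_zero,
      corner_mul_right_eq_zero hx.2 h.mul_eq_zero', add_zero, zero_add]
  · simp only [← mul_add, hx.2]
  · exact add_mem (corner_mono_right h.left_mul_add hx.1) (corner_mono_right h.right_mul_add hx.2)
  · exact mul_mem_corner hx ⟨h.left_idem, h.left_idem⟩
  · exact mul_mem_corner hx ⟨h.right_idem, h.right_idem⟩

theorem bijOn_add_corner_left {p₁ p₂ : A} (q : A) (h : IsOrthogonalPair p₁ p₂) :
    Set.BijOn (fun x : A × A => x.1 + x.2) ((corner p₁ q : Set A) ×ˢ (corner p₂ q : Set A))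
      (corner (p₁ + p₂) q) := by
  refine Set.InvOn.bijOn (f' := fun x => (p₁ * x, p₂ * x))
    ⟨fun x hx => ?_, fun x hx => ?_⟩ (fun x hx => ?_) fun x hx => ⟨?_, ?_⟩
  · simp only [mul_add, hx.1.1, hx.2.1, corner_mul_left_eq_zero hx.1 h.mul_eq_zero',
      corner_mul_left_eq_zero hx.2 h.mul_eq_zero, add_zero, zero_add]
  · simp only [← add_mul, hx.1]
  · exact add_mem (corner_mono_left h.add_mul_left hx.1) (corner_mono_left h.add_mul_right hx.2)
  · exact mul_mem_corner ⟨h.left_idem, h.left_idem⟩ hx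
  · exact mul_mem_corner ⟨h.right_idem, h.right_idem⟩ hx

theorem oneAdd_mul_oneAdd {x y : A} (h : x * y = 0) : (1 + x) * (1 + y) = 1 + (x + y) := by
  rw [mul_add, mul_one, add_mul, h, one_mul, add_zero, add_assoc]

theorem oneAdd_mul_oneSub {n : A} (hn : n * n = 0) :
    (1 + n) * (1 - n) = 1 ∧ (1 - n) * (1 + n) = 1 := by
  constructor <;> simp [mul_sub, sub_mul, mul_add, add_mul, hn]

theorem oneAdd_mul_oneAdd_eq_mul_conj {n : A} (hn : n * n = 0) (x : A) :
    (1 + x) * (1 + n) = (1 + n) * (1 + (1 - n) * x * (1 + n)) := by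
  rw [mul_add (1 + n), ← mul_assoc, ← mul_assoc, (oneAdd_mul_oneSub hn).1, one_mul, mul_one,
    ← one_add_mul]

theorem bijOn_conj_of_mul_self_eq_zero {S : Set A} {n : A} (hn : n * n = 0)
    (h : ∀ x ∈ S, (1 - n) * x * (1 + n) ∈ S) (h' : ∀ x ∈ S, (1 + n) * x * (1 - n) ∈ S) :
    Set.BijOn (fun x => (1 - n) * x * (1 + n)) S S := by
  obtain ⟨h₁, h₂⟩ := oneAdd_mul_oneSub hn
  refine Set.InvOn.bijOn (f' := fun x => (1 + n) * x * (1 - n))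
    ⟨fun x _ => ?_, fun x _ => ?_⟩ h h'
  · simp only [← mul_assoc, h₁, one_mul]
    rw [mul_assoc, h₁, mul_one]
  · simp only [← mul_assoc, h₂, one_mul]
    rw [mul_assoc, h₂, mul_one]

variable [Finite A] {M : Type*} [AddCommGroup M] [DistribMulAction A M]

variable (M) in
/-- The sum over the unipotent radical `1 + a A b`. -/
noncomputable abbrev cornerSum (a b : A) : M →+ M :=
  oneAddSum M (corner a b : Set A)

theorem smul_cornerSum {a b x : A} (hba : b * a = 0) (hx : x ∈ corner a b) (w : M) :
    (1 + x) • cornerSum M a b w = cornerSum M a b w := by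
  have hbij : Set.BijOn (-x + ·) (corner a b : Set A) (corner a b) :=
    (Equiv.addLeft (-x)).bijOn fun y => (corner a b).add_mem_cancel_left (neg_mem hx)
  rw [← oneAddSum_smul_of_bijOn hbij (g := 1), one_smul]
  intro y hy
  rw [mul_one, oneAdd_mul_oneAdd (corner_mul_corner_eq_zero hx (hbij.mapsTo hy) hba),
    add_neg_cancel_left]

theorem cornerSum_smul {a b x : A} (hba : b * a = 0) (hx : x ∈ corner a b) (w : M) :
    cornerSum M a b ((1 + x) • w) = cornerSum M a b w := by
  have hbij : Set.BijOn (· + x) (corner a b : Set A) (corner a b) :=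
    (Equiv.addRight x).bijOn fun y => (corner a b).add_mem_cancel_right hx
  rw [oneAddSum_smul_of_bijOn hbij (g' := 1), one_smul]
  intro y hy
  rw [oneAdd_mul_oneAdd (corner_mul_corner_eq_zero hy hx hba), one_mul]

theorem cornerSum_add_right {q p₁ p₂ : A} (h : IsOrthogonalPair p₁ p₂)
    (hq : p₁ * q = 0) (w : M) :
    cornerSum M q p₁ (cornerSum M q p₂ w)
      = cornerSum M q (p₁ + p₂) w := by
  refine oneAddSum_oneAddSum ((bijOn_add_corner_right q h).congr fun x hx => ?_) w
  rw [corner_mul_corner_eq_zero hx.1 hx.2 hq, add_zero]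

theorem cornerSum_add_left {p q₁ q₂ : A} (h : IsOrthogonalPair q₁ q₂)
    (hp : p * q₂ = 0) (w : M) :
    cornerSum M q₁ p (cornerSum M q₂ p w)
      = cornerSum M (q₁ + q₂) p w := by
  refine oneAddSum_oneAddSum ((bijOn_add_corner_left p h).congr fun x hx => ?_) w
  rw [corner_mul_corner_eq_zero hx.1 hx.2 hp, add_zero]

theorem IsCornerFixed.cornerSum_eq {a b : A} {w : M} (h : IsCornerFixed a b w) :
    cornerSum M a b w = (corner a b : Set A).ncard • w := by
  rw [cornerSum, oneAddSum_apply, finsum_mem_congr rfl h, finsum_mem_const (Set.toFinite _)]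

theorem IsCornerFixed.oneAddSum_of_conj_mem {a b : A} {T : Set A} {w : M}
    (hw : IsCornerFixed a b w) (hT : ∀ n ∈ T, n * n = 0)
    (hab : ∀ n ∈ T, ∀ x ∈ corner a b, (1 - n) * x * (1 + n) ∈ corner a b) :
    IsCornerFixed a b (oneAddSum M T w) :=
  fun x hx => smul_oneAddSum_eq_self fun n hn =>
    ⟨_, oneAdd_mul_oneAdd_eq_mul_conj (hT n hn) x, hw _ (hab n hn x hx)⟩

theorem oneAddSum_oneAddSum_eq_zero_of_conj_mem {S : Set A} {T : AddSubgroup A} {w : M}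
    (h₀ : oneAddSum M S w = 0) (hT : ∀ n ∈ T, n * n = 0)
    (hS : ∀ n ∈ T, ∀ x ∈ S, (1 - n) * x * (1 + n) ∈ S) :
    oneAddSum M S (oneAddSum M (T : Set A) w) = 0 := by
  rw [map_oneAddSum]
  refine finsum_mem_eq_zero_of_forall_eq_zero fun n hn => ?_
  have hbij := bijOn_conj_of_mul_self_eq_zero (hT n hn) (hS n hn) fun x hx => by
    simpa [sub_eq_add_neg] using hS _ (neg_mem hn) x hx
  rw [oneAddSum_smul_of_bijOn hbij fun x _ => oneAdd_mul_oneAdd_eq_mul_conj (hT n hn) x, h₀,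
    smul_zero]

end CornerSums

section HowlettLehrer

variable {A : Type*} [Ring A] [Finite A] {M : Type*} [AddCommGroup M] [DistribMulAction A M]

theorem cornerSum_eq_zero_of_split_left {p₁ p₂ q : A} (h : IsOrthogonalPair p₁ p₂)
    (h₁q : IsOrthogonalPair p₁ q) (h₂q : IsOrthogonalPair p₂ q)
    (inj₁ : ∀ v : M, IsCornerFixed p₁ q v → cornerSum M q p₁ v = 0 → v = 0)
    (inj₂ : ∀ v : M, IsCornerFixed p₂ q v → cornerSum M q p₂ v = 0 → v = 0)
    {w : M} (hw : IsCornerFixed (p₁ + p₂) q w)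
    (h₀ : cornerSum M q (p₁ + p₂) w = 0) : cornerSum M p₁ p₂ w = 0 := by
  have hsq : ∀ n ∈ corner p₁ p₂, n * n = 0 := fun n hn =>
    corner_mul_corner_eq_zero hn hn h.mul_eq_zero'
  have hnl : ∀ n ∈ corner p₁ p₂, (p₁ + p₂) * n = n := fun n hn =>
    (corner_mono_left h.add_mul_left hn).1
  have hnr : ∀ n ∈ corner p₁ p₂, n * (p₁ + p₂) = n := fun n hn =>
    (corner_mono_right h.right_mul_add hn).2
  have hqn : ∀ n ∈ corner p₁ p₂, q * n = 0 := fun n hn =>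
    corner_mul_left_eq_zero hn h₁q.mul_eq_zero'
  have hnq : ∀ n ∈ corner p₁ p₂, n * q = 0 := fun n hn =>
    corner_mul_right_eq_zero hn h₂q.mul_eq_zero
  set v := cornerSum M p₁ p₂ w
  have hv_fixed : IsCornerFixed (p₁ + p₂) q v :=
    hw.oneAddSum_of_conj_mem hsq fun n hn x hx =>
      conj_mem_corner (by rw [hnl n hn]) (by rw [hqn n hn, zero_mul]) hx
  have hv_sum : cornerSum M q (p₁ + p₂) v = 0 :=
    oneAddSum_oneAddSum_eq_zero_of_conj_mem h₀ hsq fun n hn x hx =>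
      conj_mem_corner (by rw [hqn n hn, hnq n hn, zero_mul]) (by rw [hnl n hn, hnr n hn]) hx
  refine inj₂ v (hv_fixed.mono_left h.add_mul_right) (inj₁ _ (fun x hx => ?_) ?_)
  · refine smul_oneAddSum_eq_self fun y hy => ⟨(1 + x) * (1 + x * y), ?_, ?_⟩
    · have hyx : y * x = 0 := corner_mul_corner_eq_zero hy hx h.mul_eq_zero'
      have hxx : x * x = 0 := corner_mul_corner_eq_zero hx hx h₁q.mul_eq_zero'
      linear_combination (norm := noncomm_ring) -(hxx * y) - hyx * (1 + y + x * y)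
    · rw [mul_smul, smul_cornerSum h.mul_eq_zero' (mul_mem_corner hx hy)]
      exact hv_fixed.mono_left h.add_mul_left x hx
  · rw [cornerSum_add_right h h₁q.mul_eq_zero, hv_sum]

theorem cornerSum_eq_zero_of_split_right {p q₁ q₂ : A} (h : IsOrthogonalPair q₁ q₂)
    (h₁p : IsOrthogonalPair q₁ p) (h₂p : IsOrthogonalPair q₂ p)
    (inj₁ : ∀ v : M, IsCornerFixed p q₁ v → cornerSum M q₁ p v = 0 → v = 0)
    (inj₂ : ∀ v : M, IsCornerFixed p q₂ v → cornerSum M q₂ p v = 0 → v = 0)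
    {w : M} (hw : IsCornerFixed p (q₁ + q₂) w)
    (h₀ : cornerSum M (q₁ + q₂) p w = 0) : cornerSum M q₁ q₂ w = 0 := by
  have hsq : ∀ n ∈ corner q₁ q₂, n * n = 0 := fun n hn =>
    corner_mul_corner_eq_zero hn hn h.mul_eq_zero'
  have hnl : ∀ n ∈ corner q₁ q₂, (q₁ + q₂) * n = n := fun n hn =>
    (corner_mono_left h.add_mul_left hn).1
  have hnr : ∀ n ∈ corner q₁ q₂, n * (q₁ + q₂) = n := fun n hn =>
    (corner_mono_right h.right_mul_add hn).2
  have hpn : ∀ n ∈ corner q₁ q₂, p * n = 0 := fun n hn =>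
    corner_mul_left_eq_zero hn h₁p.mul_eq_zero'
  have hnp : ∀ n ∈ corner q₁ q₂, n * p = 0 := fun n hn =>
    corner_mul_right_eq_zero hn h₂p.mul_eq_zero
  set v := cornerSum M q₁ q₂ w
  have hv_fixed : IsCornerFixed p (q₁ + q₂) v :=
    hw.oneAddSum_of_conj_mem hsq fun n hn x hx =>
      conj_mem_corner (by rw [hpn n hn, hnp n hn, zero_mul]) (by rw [hnl n hn, hnr n hn]) hx
  have hv_sum : cornerSum M (q₁ + q₂) p v = 0 :=
    oneAddSum_oneAddSum_eq_zero_of_conj_mem h₀ hsq fun n hn x hx =>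
      conj_mem_corner (by rw [hnl n hn, hnr n hn]) (by rw [hpn n hn, zero_mul]) hx
  refine inj₁ v (hv_fixed.mono_right h.left_mul_add) (inj₂ _ (fun x hx => ?_) ?_)
  · refine smul_oneAddSum_eq_self fun y hy => ⟨(1 + x) * (1 + -(y * x)), ?_, ?_⟩
    · have hxy : x * y = 0 := corner_mul_corner_eq_zero hx hy h.mul_eq_zero'
      have hyy : y * y = 0 := corner_mul_corner_eq_zero hy hy h₁p.mul_eq_zero'
      linear_combination (norm := noncomm_ring) hxy * (1 + x) + hyy * x + y * hxy * x
    · rw [mul_smul, smul_cornerSum h.mul_eq_zero' (neg_mem (mul_mem_corner hy hx))]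
      exact hv_fixed.mono_right h.right_mul_add x hx
  · rw [cornerSum_add_left h.symm h₁p.mul_eq_zero', add_comm, hv_sum]

theorem cornerSum_smul_eq_zero_of_oneAddSum_eq_zero [IsAddTorsionFree M] {p q y : A} {w : M}
    (hqp : q * p = 0) (hw : IsCornerFixed p q w) {S : Set A} (hS : S.Nonempty)
    (h₀ : oneAddSum M S w = 0)
    (H : ∀ φ ∈ S, ∃ x ∈ corner p q, (1 + x) * (1 + y) = (1 + y) * ((1 + φ) * (1 + x))) :
    cornerSum M p q ((1 + y) • w) = 0 := by
  have habsorb : ∀ φ ∈ S,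
      cornerSum M p q ((1 + y) • (1 + φ) • w) = cornerSum M p q ((1 + y) • w) := by
    intro φ hφ
    obtain ⟨x, hx, hxy⟩ := H φ hφ
    rw [← cornerSum_smul hqp hx ((1 + y) • w), smul_smul (1 + x), hxy, mul_smul, mul_smul, hw x hx]
  let f : M →+ M := (cornerSum M p q).comp (DistribSMul.toAddMonoidHom M (1 + y))
  refine eq_zero_of_ncard_smul_eq_zero hS ?_
  calc S.ncard • cornerSum M p q ((1 + y) • w)
      = ∑ᶠ φ ∈ S, f ((1 + φ) • w) := by
        rw [← finsum_mem_const S.toFinite]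
        exact (finsum_mem_congr rfl habsorb).symm
    _ = f (oneAddSum M S w) := (map_oneAddSum f S w).symm
    _ = 0 := by rw [h₀, map_zero]

section Cuspidal

variable {p q y z : A} {w : M}

theorem cornerSum_smul_eq_zero_of_cuspidal_left [IsAddTorsionFree M] (h : IsOrthogonalPair p q)
    (hy : y ∈ corner q p) (hz : z ∈ corner p q) (hyzy : y * z * y = y)
    (hw : IsCornerFixed p q w) (hc : cornerSum M (p - z * y) (z * y) w = 0) :
    cornerSum M p q ((1 + y) • w) = 0 := by
  have hzy : z * y ∈ corner p p := mul_mem_corner hz hy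
  refine cornerSum_smul_eq_zero_of_oneAddSum_eq_zero h.mul_eq_zero' hw ⟨0, zero_mem _⟩ hc
    fun φ hφ => ⟨φ * z, ?_, ?_⟩
  · exact mul_mem_corner (corner_mono_left (by rw [mul_sub, h.left_idem, hzy.1]) hφ) hz
  · have hyφ : y * φ = 0 :=
      corner_mul_left_eq_zero hφ (by rw [mul_sub, hy.2, ← mul_assoc, hyzy, sub_self])
    have hφφ : φ * φ = 0 := by
      rw [← hφ.2, mul_assoc, mul_assoc z, ← mul_assoc y, hyφ, zero_mul, mul_zero, mul_zero]
    have hφzy : φ * (z * y) = φ := hφ.2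
    linear_combination (norm := noncomm_ring) hφzy - hφφ * z - hyφ * (1 + z + φ * z)

theorem cornerSum_smul_eq_zero_of_cuspidal_right [IsAddTorsionFree M] (h : IsOrthogonalPair p q)
    (hy : y ∈ corner q p) (hz : z ∈ corner p q) (hyzy : y * z * y = y)
    (hw : IsCornerFixed p q w) (hc : cornerSum M (y * z) (q - y * z) w = 0) :
    cornerSum M p q ((1 + y) • w) = 0 := by
  have hyz : y * z ∈ corner q q := mul_mem_corner hy hz
  refine cornerSum_smul_eq_zero_of_oneAddSum_eq_zero h.mul_eq_zero' hw ⟨0, zero_mem _⟩ hc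
    fun φ hφ => ⟨-(z * φ), ?_, ?_⟩
  · exact neg_mem (mul_mem_corner hz
      (corner_mono_right (by rw [sub_mul, h.right_idem, hyz.2]) hφ))
  · have hφy : φ * y = 0 :=
      corner_mul_right_eq_zero hφ (by rw [sub_mul, hy.1, hyzy, sub_self])
    have hφz : φ * z = 0 := corner_mul_right_eq_zero hφ (by
      rw [sub_mul, mul_assoc, corner_mul_corner_eq_zero hz hz h.mul_eq_zero', mul_zero, sub_zero,
        corner_mul_left_eq_zero hz h.mul_eq_zero'])
    have hyφ : y * φ = 0 :=
      corner_mul_left_eq_zero hφ (by rw [← mul_assoc,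
        corner_mul_corner_eq_zero hy hy h.mul_eq_zero, zero_mul])
    have hyzφ : y * z * φ = φ := hφ.1
    linear_combination (norm := noncomm_ring)
      hyzφ - z * hφy - hyφ + hφz * φ + hyφ * z * φ

theorem cornerSum_smul_eq_zero_of_inverse (h : IsOrthogonalPair p q)
    (hy : y ∈ corner q p) (hz : z ∈ corner p q) (hzy : z * y = p) (hyz : y * z = q)
    (hw : IsCornerFixed p q w) (h₀ : cornerSum M q p w = 0) :
    cornerSum M p q ((1 + y) • w) = 0 := by
  have hzz : z * z = 0 := corner_mul_corner_eq_zero hz hz h.mul_eq_zero'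
  have hzp : z * p = 0 := corner_mul_right_eq_zero hz h.mul_eq_zero'
  have hqz : q * z = 0 := corner_mul_left_eq_zero hz h.mul_eq_zero'
  have hpz : p * z = z := hz.1
  have hzq : z * q = z := hz.2
  -- In `GL₂` this is the factorization of a lower unipotent matrix through the Weyl element.
  have hbruhat : 1 + y = (1 + z) * ((1 - p - q + y - z) * (1 + z)) := by
    simp only [add_mul, mul_add, sub_mul, mul_sub, one_mul, mul_one, hzz, hzy, hyz, hpz, hzq,
      mul_zero, hzp, hqz]
    abel
  have hbij : Set.BijOn (fun x => -(y * x * y)) (corner p q : Set A) (corner q p) := by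
    refine Set.InvOn.bijOn (f' := fun x => -(z * x * z)) ⟨fun x hx => ?_, fun x hx => ?_⟩
      (fun x hx => neg_mem (mul_mem_corner (mul_mem_corner hy hx) hy))
      fun x hx => neg_mem (mul_mem_corner (mul_mem_corner hz hx) hz)
    · simp only
      rw [show -(z * -(y * x * y) * z) = (z * y) * x * (y * z) by noncomm_ring, hzy, hyz, hx.1,
        hx.2]
    · simp only
      rw [show -(y * -(z * x * z) * y) = (y * z) * x * (z * y) by noncomm_ring, hzy, hyz, hx.1,
        hx.2]
  rw [hbruhat, mul_smul, cornerSum_smul h.mul_eq_zero' hz, mul_smul, hw z hz,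
    oneAddSum_smul_of_bijOn hbij (g' := 1 - p - q + y - z), h₀, smul_zero]
  intro x hx
  have hxp : x * p = 0 := corner_mul_right_eq_zero hx h.mul_eq_zero'
  have hxz : x * z = 0 := corner_mul_corner_eq_zero hx hz h.mul_eq_zero'
  have hpy : p * y = 0 := corner_mul_left_eq_zero hy h.mul_eq_zero
  have hyy : y * y = 0 := corner_mul_corner_eq_zero hy hy h.mul_eq_zero
  have hxq : x * q = x := hx.2
  have hpx : p * x = x := hx.1
  have hqy : q * y = y := hy.1
  linear_combination (norm := noncomm_ring) -hxp - hxz - hxq - hpy * x * y - hqy * x * y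
    + hyy * x * y - hzy * x * y - hpx * y

/-- The vector `w` is killed by the sums over the unipotent radicals of all maximal proper
parabolic subgroups of the unit group of `e A e`. -/
def IsCuspidal (e : A) (w : M) : Prop :=
  ∀ a b : A, IsOrthogonalPair a b → a + b = e → a ≠ 0 → b ≠ 0 → cornerSum M a b w = 0

theorem eq_zero_of_isCuspidal [IsAddTorsionFree M] (hA : IsVonNeumannRegular A)
    (h : IsOrthogonalPair p q) (hw : IsCornerFixed p q w) (h₀ : cornerSum M q p w = 0)
    (hp : IsCuspidal p w) (hq : IsCuspidal q w) : w = 0 := by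
  have hvanish : ∀ y ∈ corner q p, y ≠ 0 → cornerSum M p q ((1 + y) • w) = 0 := by
    intro y hy hy0
    obtain ⟨z, hz, hyzy, hzyz⟩ :=
      hA.exists_reflexive_inverse_mem_corner h.left_idem h.right_idem hy
    have hzy0 : z * y ≠ 0 := fun h0 => hy0 (by rw [← hyzy, mul_assoc, h0, mul_zero])
    have hyz0 : y * z ≠ 0 := fun h0 => hy0 (by rw [← hyzy, h0, zero_mul])
    have hzy_pair : IsOrthogonalPair (z * y) (p - z * y) :=
      .of_mem_corner h.left_idem (mul_mem_corner hz hy) (by rw [← mul_assoc, hzyz])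
    have hyz_pair : IsOrthogonalPair (y * z) (q - y * z) :=
      .of_mem_corner h.right_idem (mul_mem_corner hy hz) (by rw [← mul_assoc, hyzy])
    by_cases hzy : z * y = p
    · by_cases hyz : y * z = q
      · exact cornerSum_smul_eq_zero_of_inverse h hy hz hzy hyz hw h₀
      · exact cornerSum_smul_eq_zero_of_cuspidal_right h hy hz hyzy hw
          (hq _ _ hyz_pair (add_sub_cancel _ _) hyz0 (sub_ne_zero.2 (Ne.symm hyz)))
    · exact cornerSum_smul_eq_zero_of_cuspidal_left h hy hz hyzy hw
        (hp _ _ hzy_pair.symm (sub_add_cancel _ _) (sub_ne_zero.2 (Ne.symm hzy)) hzy0)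
  refine eq_zero_of_ncard_smul_eq_zero (S := (corner p q : Set A)) ⟨0, zero_mem _⟩ ?_
  calc (corner p q : Set A).ncard • w
      = cornerSum M p q w := hw.cornerSum_eq.symm
    _ = cornerSum M p q (cornerSum M q p w) := by
      rw [map_oneAddSum]
      rw [finsum_eq_single _ (0 : A)]
      · simp
      · exact fun y hy0 => (finsum_congr fun hy => hvanish y hy hy0).trans finsum_zero
    _ = 0 := by rw [h₀, map_zero]

end Cuspidal

omit [Finite A] in
theorem corner_self_le_add {a b : A} (h : IsOrthogonalPair a b) :
    corner a a ≤ corner (a + b) (a + b) :=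
  (corner_mono_left h.add_mul_left).trans (corner_mono_right h.left_mul_add)

theorem ncard_corner_self_lt {a b : A} (h : IsOrthogonalPair a b) (hb : b ≠ 0) :
    (corner a a : Set A).ncard < (corner (a + b) (a + b) : Set A).ncard := by
  refine Set.ncard_lt_ncard ⟨corner_self_le_add h, fun hle => hb ?_⟩ (Set.toFinite _)
  have hb_mem : b ∈ corner a a := hle ⟨h.add_mul_right, h.right_mul_add⟩
  rw [← hb_mem.1, h.mul_eq_zero]

theorem ncard_corner_self_lt' {a b : A} (h : IsOrthogonalPair a b) (ha : a ≠ 0) :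
    (corner b b : Set A).ncard < (corner (a + b) (a + b) : Set A).ncard := by
  rw [add_comm]
  exact ncard_corner_self_lt h.symm ha

/-- The Howlett–Lehrer injectivity theorem. -/
theorem eq_zero_of_cornerSum_eq_zero [IsAddTorsionFree M] (hA : IsVonNeumannRegular A) {p q : A}
    (h : IsOrthogonalPair p q) {w : M} (hw : IsCornerFixed p q w)
    (h₀ : cornerSum M q p w = 0) : w = 0 := by
  induction hn : (corner p p : Set A).ncard + (corner q q : Set A).ncard
    using Nat.strong_induction_on generalizing p q w with
  | _ n ih =>
  subst hn
  refine eq_zero_of_isCuspidal hA h hw h₀ ?_ ?_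
  · rintro a b hab rfl ha hb
    have haq : IsOrthogonalPair a q :=
      h.mono_left ⟨hab.add_mul_left, hab.left_mul_add⟩ hab.left_idem
    have hbq : IsOrthogonalPair b q :=
      h.mono_left ⟨hab.add_mul_right, hab.right_mul_add⟩ hab.right_idem
    exact cornerSum_eq_zero_of_split_left hab haq hbq
      (fun v hv hv₀ => ih _ (Nat.add_lt_add_right (ncard_corner_self_lt hab hb) _) haq hv hv₀ rfl)
      (fun v hv hv₀ => ih _ (Nat.add_lt_add_right (ncard_corner_self_lt' hab ha) _) hbq hv hv₀ rfl)
      hw h₀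
  · rintro a b hab rfl ha hb
    have hap : IsOrthogonalPair a p :=
      h.symm.mono_left ⟨hab.add_mul_left, hab.left_mul_add⟩ hab.left_idem
    have hbp : IsOrthogonalPair b p :=
      h.symm.mono_left ⟨hab.add_mul_right, hab.right_mul_add⟩ hab.right_idem
    exact cornerSum_eq_zero_of_split_right hab hap hbp
      (fun v hv hv₀ => ih _ (Nat.add_lt_add_left (ncard_corner_self_lt hab hb) _) hap.symm hv hv₀
        rfl)
      (fun v hv hv₀ => ih _ (Nat.add_lt_add_left (ncard_corner_self_lt' hab ha) _) hbp.symm hv hv₀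
        rfl)
      hw h₀

end HowlettLehrer

section Moebius

open Finset IncidenceAlgebra

section Weisner

variable {α : Type*} [SemilatticeSup α] [OrderBot α] [LocallyFiniteOrder α] [DecidableEq α]
  [WellFoundedLT α] {𝕜 : Type*} [Ring 𝕜]

/-- Weisner's theorem. -/
theorem sum_mu_bot_filter_sup_eq_zero {l : α} (hl : l ≠ ⊥) (z : α) :
    ∑ a ∈ Icc ⊥ z with a ⊔ l = z, mu 𝕜 ⊥ a = 0 := by
  induction z using WellFoundedLT.induction with
  | _ z ih =>
  by_cases hlz : l ≤ z
  · have hz : ⊥ ≠ z := fun h => hl (le_bot_iff.1 (h ▸ hlz))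
    have hsum := sum_Icc_mu_right (𝕜 := 𝕜) ⊥ z
    rw [if_neg hz, ← sum_fiberwise_of_maps_to (t := Icc ⊥ z) (g := (· ⊔ l)) fun a ha => by
      simpa using ⟨(mem_Icc.1 ha).2, hlz⟩, sum_eq_single z] at hsum
    · exact hsum
    · intro y hy hne
      have hyz := (mem_Icc.1 hy).2
      rw [← ih y (lt_of_le_of_ne hyz hne)]
      refine sum_congr (ext fun a => ?_) fun _ _ => rfl
      simp only [mem_filter, mem_Icc, bot_le, true_and, and_congr_left_iff]
      rintro rfl
      exact ⟨fun _ => le_sup_left, fun h => h.trans hyz⟩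
    · simp
  · refine sum_eq_zero fun a ha => absurd ?_ hlz
    exact (mem_filter.1 ha).2 ▸ le_sup_right

end Weisner

section Inversion

variable {α : Type*} [PartialOrder α] [OrderBot α] [Fintype α] [LocallyFiniteOrder α]
  [DecidableEq α]

theorem sum_mu_bot_filter_ne_bot [DecidableLE α] {w : α} (hw : w ≠ ⊥) :
    ∑ z with z ≠ ⊥ ∧ z ≤ w, mu ℤ ⊥ z = -1 := by
  have hsum := sum_Icc_mu_right (𝕜 := ℤ) ⊥ w
  rw [if_neg hw.symm, ← add_sum_erase _ _ (left_mem_Icc.2 bot_le), mu_self] at hsum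
  rw [← eq_neg_of_add_eq_zero_right hsum]
  exact sum_congr (by ext; simp) fun _ _ => rfl

theorem finsum_mem_eq_neg_sum_mu {ι M : Type*} [AddCommGroup M] {s : Set ι} (hs : s.Finite)
    {w : ι → α} (hw : ∀ i ∈ s, w i ≠ ⊥) (f : ι → M) :
    ∑ᶠ i ∈ s, f i = -∑ z with z ≠ ⊥, mu ℤ ⊥ z • ∑ᶠ i ∈ {i ∈ s | z ≤ w i}, f i := by
  classical
  have hfilter : ∀ z, ∑ᶠ i ∈ {i ∈ s | z ≤ w i}, f i = ∑ i ∈ hs.toFinset with z ≤ w i, f i :=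
    fun z => finsum_mem_eq_sum_of_inter_support_eq _ (by ext; simp)
  simp only [hfilter, smul_sum]
  rw [sum_comm' (t' := hs.toFinset) (s' := fun i => {z | z ≠ ⊥ ∧ z ≤ w i})
    (fun z i => by simp; tauto), finsum_mem_eq_finite_toFinset_sum _ hs, ← sum_neg_distrib]
  refine sum_congr rfl fun i hi => ?_
  rw [← sum_smul, sum_mu_bot_filter_ne_bot (hw i (hs.mem_toFinset.1 hi)), neg_one_smul, neg_neg]

end Inversion

theorem ncard_eq_of_ncard_filter_eq {α ι κ : Type*} [PartialOrder α] [OrderBot α] [Finite α]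
    {s : Set ι} {t : Set κ} (hs : s.Finite) (ht : t.Finite) {v : ι → α} {w : κ → α}
    (hv : ∀ i ∈ s, v i ≠ ⊥) (hw : ∀ j ∈ t, w j ≠ ⊥)
    (h : ∀ z, z ≠ ⊥ → {i ∈ s | z ≤ v i}.ncard = {j ∈ t | z ≤ w j}.ncard) :
    s.ncard = t.ncard := by
  classical
  have := Fintype.ofFinite α
  have : LocallyFiniteOrder α := Fintype.toLocallyFiniteOrder
  have hcast : s.ncard • (1 : ℤ) = t.ncard • 1 := by
    rw [← finsum_mem_const hs, ← finsum_mem_const ht, finsum_mem_eq_neg_sum_mu hs hv,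
      finsum_mem_eq_neg_sum_mu ht hw]
    refine congrArg _ (sum_congr rfl fun z hz => ?_)
    rw [finsum_mem_const (hs.sep _), finsum_mem_const (ht.sep _), h z (mem_filter.1 hz).2]
  simpa using hcast

section Sign

variable {F X : Type*} [Field F] [AddCommGroup X] [Module F X] [FiniteDimensional F X]
  [LocallyFiniteOrder (Submodule F X)] [DecidableEq (Submodule F X)]

theorem neg_one_pow_finrank_mul_mu_pos (Z : Submodule F X) :
    0 < (-1) ^ Module.finrank F Z * mu ℤ ⊥ Z := by
  induction hd : Module.finrank F Z generalizing Z with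
  | zero =>
    rw [Submodule.finrank_eq_zero.1 hd]
    simp
  | succ d ih =>
    have hZ : Z ≠ ⊥ := by rintro rfl; simp at hd
    obtain ⟨v, hv, hv0⟩ := Submodule.exists_mem_ne_zero_of_ne_bot hZ
    have hl : F ∙ v ≠ ⊥ := by simpa using hv0
    have hlZ : F ∙ v ≤ Z := by simpa using hv
    have hsum := sum_mu_bot_filter_sup_eq_zero (𝕜 := ℤ) hl Z
    rw [← add_sum_erase _ _ (a := Z) (by simpa using hv)] at hsum
    have hpos : ∀ B ∈ ({B ∈ Icc ⊥ Z | B ⊔ F ∙ v = Z} : Finset _).erase Z,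
        0 < (-1) ^ d * mu ℤ ⊥ B := by
      intro B hB
      obtain ⟨hne, -, hsup⟩ := by simpa only [mem_erase, mem_filter] using hB
      refine ih B ?_
      have hvB : v ∉ B := fun h => hne (by
        rw [← hsup, left_eq_sup, Submodule.span_singleton_le_iff_mem]; exact h)
      have hfinrank := Submodule.finrank_sup_add_finrank_inf_eq B (F ∙ v)
      rw [hsup, ((Submodule.disjoint_span_singleton' hv0).2 hvB).eq_bot, finrank_bot, hd,
        finrank_span_singleton hv0] at hfinrank
      lia
    have hnonempty : (({B ∈ Icc ⊥ Z | B ⊔ F ∙ v = Z} : Finset _).erase Z).Nonempty := by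
      obtain ⟨C, hC⟩ := exists_isCompl (F ∙ v)
      refine ⟨C ⊓ Z, ?_⟩
      simp only [mem_erase, mem_filter, mem_Icc, bot_le, inf_le_right, true_and]
      refine ⟨fun h => hl (le_bot_iff.1 (hC.1 le_rfl (hlZ.trans (inf_eq_right.1 h)))), ?_⟩
      rw [sup_comm, ← sup_inf_assoc_of_le _ hlZ, hC.sup_eq_top, top_inf_eq]
    have hlt := sum_pos hpos hnonempty
    rw [← mul_sum] at hlt
    rw [pow_succ]
    linear_combination hlt + (-1) ^ d * hsum

end Sign

end Moebius

section UnipotentShifts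

variable {A : Type*} [Ring A]

theorem isNilpotent_mul_comm {a b : A} : IsNilpotent (a * b) ↔ IsNilpotent (b * a) := by
  suffices H : ∀ {a b : A}, IsNilpotent (a * b) → IsNilpotent (b * a) from ⟨H, H⟩
  rintro a b ⟨n, hn⟩
  refine ⟨n + 1, ?_⟩
  rw [pow_succ', mul_assoc, ← mul_pow_mul, hn, zero_mul, mul_zero]

theorem isNilpotent_compress_sub_iff {z e k : A} (h : IsOrthogonalPair z e)
    (hk : k ∈ corner (z + e) (z + e)) (hkz : k * z = z) :
    IsNilpotent (e * k * e - e) ↔ IsNilpotent (k - (z + e)) := by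
  have hke : k * e = k - z := by rw [eq_sub_iff_add_eq', ← hkz, ← mul_add, hk.2]
  have hleft : e * (k - (z + e)) = e * k * e - e := by
    rw [mul_assoc, hke, ← sub_sub, mul_sub, h.right_idem]
  have hright : (k - (z + e)) * e = k - (z + e) := by
    rw [sub_mul, hke, h.add_mul_right, sub_sub]
  rw [← hleft, isNilpotent_mul_comm, hright]

theorem mul_eq_zero_iff_of_isNilpotent_sub {e k y : A} (hk : IsNilpotent (k - e))
    (hy : e * y = y) : k * y = 0 ↔ y = 0 := by
  refine ⟨fun h => ?_, fun h => by rw [h, mul_zero]⟩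
  have hfix : (e - k) * y = y := by rw [sub_mul, hy, h, sub_zero]
  have hpow : ∀ n, (e - k) ^ n * y = y := fun n => by
    induction n with
    | zero => rw [pow_zero, one_mul]
    | succ n ih => rw [pow_succ, mul_assoc, hfix, ih]
  obtain ⟨n, hn⟩ := hk
  rw [← hpow n, ← neg_sub, neg_pow, hn, mul_zero, zero_mul]

/-- The `φ ∈ p A q` such that `g * (1 + φ)` is unipotent in the corner ring of `p + q`. -/
def unipotentShifts (p q g : A) : Set A :=
  {φ ∈ corner p q | IsNilpotent (g * (p + q + φ) - (p + q))}

/-- The pairs `(φ, ψ)` such that the unipotent `g * (1 + φ)` stabilizes the range of the idempotent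
`q - ψ`; these idempotents have the complements of the range of `p` as ranges. -/
def stabilizedShifts (p q g : A) : Set (A × A) :=
  {x | x.1 ∈ unipotentShifts p q g ∧ x.2 ∈ corner p q ∧
    (p + x.2) * (g * (p + q + x.1)) * (q - x.2) = 0}

/-- On average over the complements of the range of `p`, the unipotents of any coset
`g * (1 + p A q)` stabilize exactly one. -/
def StabilizedCountEq (p q : A) : Prop :=
  ∀ g ∈ corner (p + q) (p + q), (unipotentShifts p q g).ncard = (stabilizedShifts p q g).ncard

theorem IsOrthogonalPair.mul_add_eq {a p q x : A} (h : IsOrthogonalPair p q)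
    (hx : x ∈ corner a q) : x * (p + q) = x :=
  (corner_mono_right h.right_mul_add hx).2

theorem IsOrthogonalPair.add_mul_eq {b p q x : A} (h : IsOrthogonalPair p q)
    (hx : x ∈ corner p b) : (p + q) * x = x :=
  (corner_mono_left h.add_mul_left hx).1

theorem IsOrthogonalPair.of_add_right {p q z : A} (h : IsOrthogonalPair p q)
    (hz : IsOrthogonalPair z (p + q)) : IsOrthogonalPair z p ∧ IsOrthogonalPair z q :=
  ⟨(hz.symm.mono_left ⟨h.add_mul_left, h.left_mul_add⟩ h.left_idem).symm,
    (hz.symm.mono_left ⟨h.add_mul_right, h.right_mul_add⟩ h.right_idem).symm⟩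

section FixedIdempotent

variable {z p q g a b φ ψ : A}

theorem compress_mul_add (h : IsOrthogonalPair p q) (hz : IsOrthogonalPair z (p + q))
    (hgz : g * z = z) (ha : a ∈ corner z q) (hφ : φ ∈ corner p q) :
    (p + q) * (g * (z + (p + q) + (a + φ))) * (p + q) =
      (p + q) * g * (p + q) * (p + q + φ) := by
  have hga : g * a = a := by rw [← ha.1, ← mul_assoc, hgz]
  have hea : (p + q) * a = 0 := corner_mul_left_eq_zero ha hz.mul_eq_zero'
  have hright : (z + (p + q) + (a + φ)) * (p + q) = p + q + φ + a := by
    linear_combination (norm := noncomm_ring) hz.mul_eq_zero + h.add_idem + h.mul_add_eq ha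
      + h.mul_add_eq hφ
  linear_combination (norm := noncomm_ring) (p + q) * g * hright + (p + q) * hga + hea
    - (p + q) * g * h.add_idem - (p + q) * g * h.add_mul_eq hφ

theorem isNilpotent_mul_add_iff (h : IsOrthogonalPair p q) (hz : IsOrthogonalPair z (p + q))
    (hg : g ∈ corner (z + (p + q)) (z + (p + q))) (hgz : g * z = z) (ha : a ∈ corner z q)
    (hφ : φ ∈ corner p q) :
    IsNilpotent ((p + q) * g * (p + q) * (p + q + φ) - (p + q)) ↔
      IsNilpotent (g * (z + (p + q) + (a + φ)) - (z + (p + q))) := by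
  obtain ⟨hzp, hzq⟩ := h.of_add_right hz
  rw [← compress_mul_add h hz hgz ha hφ]
  refine isNilpotent_compress_sub_iff hz ⟨?_, ?_⟩ ?_
  · rw [← mul_assoc, hg.1]
  · rw [mul_assoc, add_mul, hz.add_idem, add_mul, hz.mul_add_eq ⟨ha.1, h.mul_add_eq ha⟩,
      hz.mul_add_eq ⟨hφ.1, h.mul_add_eq hφ⟩]
  · rw [mul_assoc, add_mul, hz.add_mul_left, corner_mul_right_eq_zero ((corner (z + p) q).add_mem
      (corner_mono_left hzp.add_mul_left ha) (corner_mono_left hzp.add_mul_right hφ))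
      hzq.mul_eq_zero', add_zero, hgz]

theorem add_mul_mul_sub_compress (h : IsOrthogonalPair p q) (hz : IsOrthogonalPair z (p + q))
    (hgz : g * z = z) (ha : a ∈ corner z q) (hφ : φ ∈ corner p q) (hb : b ∈ corner z q)
    (hψ : ψ ∈ corner p q) :
    (p + ψ) * (g * (z + (p + q) + (a + φ))) * (q - (b + ψ)) =
      (p + ψ) * ((p + q) * g * (p + q) * (p + q + φ)) * (q - ψ) := by
  obtain ⟨hzp, hzq⟩ := h.of_add_right hz
  have hgab : g * (a - b) = a - b := by rw [← (sub_mem ha hb).1, ← mul_assoc, hgz]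
  have hleft : (p + ψ) * (p + q) = p + ψ := by
    rw [add_mul, h.left_mul_add, h.mul_add_eq hψ]
  have hleft' : (p + ψ) * (a - b) = 0 := by
    rw [add_mul, corner_mul_left_eq_zero (sub_mem ha hb) hzp.mul_eq_zero',
      corner_mul_corner_eq_zero hψ (sub_mem ha hb) hzq.mul_eq_zero', add_zero]
  have hmid : (p + q) * (p + q + φ) = p + q + φ := by
    rw [mul_add, h.add_idem, h.add_mul_eq hφ]
  have hright : (z + (p + q) + (a + φ)) * (q - (b + ψ)) = (p + q + φ) * (q - ψ) + (a - b) := by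
    have hab : (a + φ) * b = 0 := by
      rw [add_mul, corner_mul_corner_eq_zero ha hb hzq.mul_eq_zero',
        corner_mul_corner_eq_zero hφ hb hzq.mul_eq_zero', add_zero]
    linear_combination (norm := noncomm_ring) hzq.mul_eq_zero + ha.2 - hb.1 - hab
      - corner_mul_left_eq_zero hb hz.mul_eq_zero' - corner_mul_left_eq_zero hψ hzp.mul_eq_zero
      - corner_mul_corner_eq_zero ha hψ h.mul_eq_zero'
  linear_combination (norm := noncomm_ring) (p + ψ) * g * hright + (p + ψ) * hgab + hleft'
    - hleft * g * (p + q) * (p + q + φ) * (q - ψ) - (p + ψ) * g * hmid * (q - ψ)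

end FixedIdempotent

end UnipotentShifts

section FixedIdempotent

variable {A : Type*} [Ring A] {z p q g a b φ ψ : A}

theorem add_mem_unipotentShifts_iff (h : IsOrthogonalPair p q)
    (hz : IsOrthogonalPair z (p + q)) (hg : g ∈ corner (z + (p + q)) (z + (p + q)))
    (hgz : g * z = z) (ha : a ∈ corner z q) (hφ : φ ∈ corner p q) :
    a + φ ∈ unipotentShifts (z + p) q g ↔
      φ ∈ unipotentShifts p q ((p + q) * g * (p + q)) := by
  have hmem : a + φ ∈ corner (z + p) q :=
    (bijOn_add_corner_left q (h.of_add_right hz).1).mapsTo (x := (a, φ)) ⟨ha, hφ⟩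
  simp only [unipotentShifts, Set.mem_ofPred_eq, hmem, hφ, true_and, add_assoc z p q]
  exact (isNilpotent_mul_add_iff h hz hg hgz ha hφ).symm

theorem add_mem_stabilizedShifts_iff (h : IsOrthogonalPair p q)
    (hz : IsOrthogonalPair z (p + q)) (hg : g ∈ corner (z + (p + q)) (z + (p + q)))
    (hgz : g * z = z) (ha : a ∈ corner z q) (hφ : φ ∈ corner p q) (hb : b ∈ corner z q)
    (hψ : ψ ∈ corner p q) :
    (a + φ, b + ψ) ∈ stabilizedShifts (z + p) q g ↔
      a = -((z + b) * (g * (z + (p + q) + φ)) * (q - (b + ψ))) ∧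
        (φ, ψ) ∈ stabilizedShifts p q ((p + q) * g * (p + q)) := by
  obtain ⟨hzp, hzq⟩ := h.of_add_right hz
  have hmem : b + ψ ∈ corner (z + p) q :=
    (bijOn_add_corner_left q hzp).mapsTo (x := (b, ψ)) ⟨hb, hψ⟩
  have hga : g * a = a := by rw [← ha.1, ← mul_assoc, hgz]
  have haz : a * (b + ψ) = 0 := by
    rw [mul_add, corner_mul_corner_eq_zero ha hb hzq.mul_eq_zero',
      corner_mul_corner_eq_zero ha hψ h.mul_eq_zero', add_zero]
  have hzb : (z + b) * (g * (z + (p + q) + (a + φ))) * (q - (b + ψ)) =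
      a + (z + b) * (g * (z + (p + q) + φ)) * (q - (b + ψ)) := by
    linear_combination (norm := noncomm_ring) (z + b) * hga * (q - (b + ψ))
      + ha.1 * (q - (b + ψ)) + ha.2 - haz
      + corner_mul_corner_eq_zero hb ha hzq.mul_eq_zero' * (q - (b + ψ))
  have hsplit : (z + p + (b + ψ)) * (g * (z + p + q + (a + φ))) * (q - (b + ψ)) = 0 ↔
      (z + b) * (g * (z + (p + q) + (a + φ))) * (q - (b + ψ)) = 0 ∧
        (p + ψ) * (g * (z + (p + q) + (a + φ))) * (q - (b + ψ)) = 0 := by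
    rw [add_add_add_comm, add_mul, add_mul, add_assoc z p q]
    refine ⟨fun h0 => ?_, fun h0 => by rw [h0.1, h0.2, add_zero]⟩
    have h0z : (z + b) * (g * (z + (p + q) + (a + φ))) * (q - (b + ψ)) = 0 := by
      have hzψ := corner_mul_left_eq_zero hψ hzp.mul_eq_zero
      linear_combination (norm := noncomm_ring) z * h0
        - (hzp.mul_eq_zero + hzψ + hzp.left_idem + hb.1)
          * (g * (z + (p + q) + (a + φ))) * (q - (b + ψ))
    exact ⟨h0z, by rwa [h0z, zero_add] at h0⟩
  simp only [stabilizedShifts, Set.mem_ofPred_eq, add_mem_unipotentShifts_iff h hz hg hgz ha hφ,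
    hmem, hψ, hsplit, hzb, add_mul_mul_sub_compress h hz hgz ha hφ hb hψ, add_eq_zero_iff_eq_neg,
    true_and]
  tauto

theorem ncard_unipotentShifts_add (h : IsOrthogonalPair p q)
    (hz : IsOrthogonalPair z (p + q)) (hg : g ∈ corner (z + (p + q)) (z + (p + q)))
    (hgz : g * z = z) :
    (unipotentShifts (z + p) q g).ncard = (corner z q : Set A).ncard *
      (unipotentShifts p q ((p + q) * g * (p + q))).ncard := by
  rw [← Set.ncard_prod]
  have hbij := bijOn_add_corner_left q (h.of_add_right hz).1
  refine (Set.BijOn.ncard_eq (f := fun x => x.1 + x.2) ⟨fun x hx => ?_, ?_, fun y hy => ?_⟩).symm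
  · exact (add_mem_unipotentShifts_iff h hz hg hgz hx.1 hx.2.1).2 hx.2
  · exact hbij.injOn.mono (Set.prod_mono_right fun φ hφ => hφ.1)
  · obtain ⟨x, hx, rfl⟩ := hbij.surjOn hy.1
    exact ⟨x, ⟨hx.1, (add_mem_unipotentShifts_iff h hz hg hgz hx.1 hx.2).1 hy⟩, rfl⟩

theorem ncard_stabilizedShifts_add (h : IsOrthogonalPair p q)
    (hz : IsOrthogonalPair z (p + q)) (hg : g ∈ corner (z + (p + q)) (z + (p + q)))
    (hgz : g * z = z) :
    (stabilizedShifts (z + p) q g).ncard = (corner z q : Set A).ncard *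
      (stabilizedShifts p q ((p + q) * g * (p + q))).ncard := by
  rw [← Set.ncard_prod]
  have hbij := bijOn_add_corner_left q (h.of_add_right hz).1
  let α (b φ ψ : A) : A := -((z + b) * (g * (z + (p + q) + φ)) * (q - (b + ψ)))
  have hα : ∀ b ∈ corner z q, ∀ φ, ∀ ψ ∈ corner p q, α b φ ψ ∈ corner z q := by
    refine fun b hb φ ψ hψ => neg_mem ⟨?_, ?_⟩
    · rw [← mul_assoc, ← mul_assoc, mul_add, (h.of_add_right hz).1.left_idem, hb.1]
    · rw [mul_assoc, sub_mul, add_mul b ψ, h.right_idem, hψ.2, hb.2]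
  refine (Set.BijOn.ncard_eq (f := fun x => (α x.1 x.2.1 x.2.2 + x.2.1, x.1 + x.2.2))
    ⟨?_, ?_, ?_⟩).symm
  · rintro ⟨b, φ, ψ⟩ ⟨hb, hx⟩
    exact (add_mem_stabilizedShifts_iff h hz hg hgz (hα b hb φ ψ hx.2.1) hx.1.1 hb hx.2.1).2
      ⟨rfl, hx⟩
  · rintro ⟨b, φ, ψ⟩ ⟨hb, hx⟩ ⟨b', φ', ψ'⟩ ⟨hb', hx'⟩ heq
    have h₁ : α b φ ψ + φ = α b' φ' ψ' + φ' := congrArg Prod.fst heq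
    have h₂ : b + ψ = b' + ψ' := congrArg Prod.snd heq
    have hbψ := hbij.injOn (x₁ := (b, ψ)) (x₂ := (b', ψ')) ⟨hb, hx.2.1⟩ ⟨hb', hx'.2.1⟩ h₂
    have hαφ := hbij.injOn (x₁ := (_, φ)) (x₂ := (_, φ')) ⟨hα b hb φ ψ hx.2.1, hx.1.1⟩
      ⟨hα b' hb' φ' ψ' hx'.2.1, hx'.1.1⟩ h₁
    simp_all only [Prod.mk.injEq]
  · rintro ⟨y₁, y₂⟩ hy
    obtain ⟨⟨a, φ⟩, ⟨ha, hφ⟩, rfl⟩ := hbij.surjOn hy.1.1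
    obtain ⟨⟨b, ψ⟩, ⟨hb, hψ⟩, rfl⟩ := hbij.surjOn hy.2.1
    obtain ⟨haα, hx⟩ := (add_mem_stabilizedShifts_iff h hz hg hgz ha hφ hb hψ).1 hy
    exact ⟨(b, φ, ψ), ⟨hb, hx⟩, Prod.ext (congrArg (· + φ) haα.symm) rfl⟩

end FixedIdempotent

section Complements

variable {A : Type*} [Ring A] {p q g n φ ψ φ₀ : A}

theorem IsOrthogonalPair.sub_add (h : IsOrthogonalPair p q) (hn : n ∈ corner p q) :
    IsOrthogonalPair (p - n) (q + n) := by
  have hnp := corner_mul_right_eq_zero hn h.mul_eq_zero'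
  have hqn := corner_mul_left_eq_zero hn h.mul_eq_zero'
  have hnn := corner_mul_corner_eq_zero hn hn h.mul_eq_zero'
  constructor <;>
    simp [add_mul, mul_add, sub_mul, mul_sub, h.left_idem, h.right_idem, h.mul_eq_zero,
      h.mul_eq_zero', hn.1, hn.2, hnp, hqn, hnn]

theorem corner_sub_add (h : IsOrthogonalPair p q) (hn : n ∈ corner p q) :
    corner (p - n) (q + n) = corner p q := by
  refine le_antisymm ?_ ?_
  · refine (corner_mono_left ?_).trans (corner_mono_right ?_)
    · rw [mul_sub, h.left_idem, hn.1]
    · rw [add_mul, h.right_idem, hn.2]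
  · refine (corner_mono_left ?_).trans (corner_mono_right ?_)
    · rw [sub_mul, h.left_idem, corner_mul_right_eq_zero hn h.mul_eq_zero', sub_zero]
    · rw [mul_add, h.right_idem, corner_mul_left_eq_zero hn h.mul_eq_zero', add_zero]

theorem unipotentShifts_sub_add (h : IsOrthogonalPair p q) (hn : n ∈ corner p q) :
    unipotentShifts (p - n) (q + n) g = unipotentShifts p q g := by
  rw [unipotentShifts, corner_sub_add h hn, sub_add_add_cancel, unipotentShifts]

theorem mem_stabilizedShifts_sub_add (h : IsOrthogonalPair p q) (hn : n ∈ corner p q) :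
    (φ, ψ + n) ∈ stabilizedShifts (p - n) (q + n) g ↔ (φ, ψ) ∈ stabilizedShifts p q g := by
  simp only [stabilizedShifts, Set.mem_ofPred_eq, unipotentShifts_sub_add h hn,
    corner_sub_add h hn, AddSubgroup.add_mem_cancel_right _ hn, sub_add_add_cancel,
    add_sub_add_right_eq_sub]

theorem mul_add_mul_add (h : IsOrthogonalPair p q) (hφ₀ : φ₀ ∈ corner p q)
    (hφ : φ ∈ corner p q) : g * (p + q + φ₀) * (p + q + φ) = g * (p + q + (φ₀ + φ)) := by
  rw [mul_assoc, mul_add (p + q + φ₀), add_mul _ φ₀, add_mul _ φ₀, h.add_idem, h.mul_add_eq hφ₀,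
    h.add_mul_eq hφ, corner_mul_corner_eq_zero hφ₀ hφ h.mul_eq_zero', add_zero, add_assoc]

theorem mem_unipotentShifts_mul (h : IsOrthogonalPair p q) (hφ₀ : φ₀ ∈ corner p q) :
    φ ∈ unipotentShifts p q (g * (p + q + φ₀)) ↔ φ₀ + φ ∈ unipotentShifts p q g :=
  (and_congr_right fun hφ => by rw [mul_add_mul_add h hφ₀ hφ]).trans
    (and_congr_left' (AddSubgroup.add_mem_cancel_left _ hφ₀).symm)

theorem mem_stabilizedShifts_mul (h : IsOrthogonalPair p q) (hφ₀ : φ₀ ∈ corner p q) :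
    (φ, ψ) ∈ stabilizedShifts p q (g * (p + q + φ₀)) ↔
      (φ₀ + φ, ψ) ∈ stabilizedShifts p q g :=
  (and_congr_right fun hφ => by rw [mul_add_mul_add h hφ₀ hφ.1]).trans
    (and_congr_left' (mem_unipotentShifts_mul h hφ₀))

end Complements

section FixedQuotient

variable {A : Type*} [Ring A] {z p q g φ : A}

theorem mul_add_mul_eq_iff (h : IsOrthogonalPair p q) (hz : IsOrthogonalPair z (p + q))
    (hgz : g * z = z) (hu : IsNilpotent (g - (z + (p + q)))) (hφ : φ ∈ corner p (z + q)) :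
    g * (z + (p + q) + φ) * z = z ↔ φ ∈ corner p q := by
  obtain ⟨hzp, hzq⟩ := h.of_add_right hz
  have hez : g * (z + (p + q) + φ) * z = z + g * (φ * z) := by
    rw [mul_assoc, add_mul, hz.add_mul_left, mul_add, hgz]
  have heφ : (z + (p + q)) * (φ * z) = φ * z := by
    rw [← mul_assoc, add_mul, h.add_mul_eq hφ, corner_mul_left_eq_zero hφ hzp.mul_eq_zero,
      zero_add]
  rw [hez, add_eq_left, mul_eq_zero_iff_of_isNilpotent_sub hu heφ]
  refine ⟨fun h0 => ⟨hφ.1, ?_⟩, fun h0 => corner_mul_right_eq_zero h0 hzq.mul_eq_zero'⟩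
  nth_rw 2 [← hφ.2]
  rw [mul_add, h0, zero_add]

theorem setOf_fixed_unipotentShifts (h : IsOrthogonalPair p q)
    (hz : IsOrthogonalPair z (p + q)) (hg : g ∈ corner (z + (p + q)) (z + (p + q)))
    (hgz : g * z = z) (hu : IsNilpotent (g - (z + (p + q)))) :
    {φ ∈ unipotentShifts p (z + q) g | g * (p + (z + q) + φ) * z = z} =
      unipotentShifts p q ((p + q) * g * (p + q)) := by
  have hle : corner p q ≤ corner p (z + q) :=
    corner_mono_right (h.of_add_right hz).2.right_mul_add
  ext φ
  have key : φ ∈ corner p q → _ := fun hφ =>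
    isNilpotent_mul_add_iff h hz hg hgz (zero_mem (corner z q)) hφ
  simp only [zero_add] at key
  simp only [unipotentShifts, Set.mem_ofPred_eq, add_left_comm p z q]
  constructor
  · rintro ⟨⟨hφ, hn⟩, hfix⟩
    have hφ' := (mul_add_mul_eq_iff h hz hgz hu hφ).1 hfix
    exact ⟨hφ', (key hφ').2 hn⟩
  · rintro ⟨hφ, hn⟩
    exact ⟨⟨hle hφ, (key hφ).1 hn⟩, (mul_add_mul_eq_iff h hz hgz hu (hle hφ)).2 hφ⟩

theorem setOf_fixed_stabilizedShifts (h : IsOrthogonalPair p q)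
    (hz : IsOrthogonalPair z (p + q)) (hg : g ∈ corner (z + (p + q)) (z + (p + q)))
    (hgz : g * z = z) (hu : IsNilpotent (g - (z + (p + q)))) :
    {x ∈ stabilizedShifts p (z + q) g | g * (p + (z + q) + x.1) * z = z ∧ (p + x.2) * z = 0} =
      stabilizedShifts p q ((p + q) * g * (p + q)) := by
  obtain ⟨hzp, hzq⟩ := h.of_add_right hz
  have hψz {ψ : A} (hψ : ψ ∈ corner p (z + q)) : (p + ψ) * z = 0 ↔ ψ ∈ corner p q := by
    rw [add_mul, hzp.mul_eq_zero', zero_add]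
    refine ⟨fun h0 => ⟨hψ.1, ?_⟩, fun h0 => corner_mul_right_eq_zero h0 hzq.mul_eq_zero'⟩
    nth_rw 2 [← hψ.2]
    rw [mul_add, h0, zero_add]
  have hle : corner p q ≤ corner p (z + q) := corner_mono_right hzq.right_mul_add
  have key {φ ψ : A} (hφ : φ ∈ corner p q) (hψ : ψ ∈ corner p q)
      (hfix : g * (p + (z + q) + φ) * z = z) :
      (p + ψ) * (g * (p + (z + q) + φ)) * (z + q - ψ) =
        (p + ψ) * ((p + q) * g * (p + q) * (p + q + φ)) * (q - ψ) := by
    have := add_mul_mul_sub_compress h hz hgz (zero_mem (corner z q)) hφ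
      (zero_mem (corner z q)) hψ
    rw [zero_add, zero_add, ← add_left_comm p z q] at this
    rw [← this, add_sub_assoc, mul_add, mul_assoc _ _ z, hfix, (hψz (hle hψ)).2 hψ, zero_add]
  ext ⟨φ, ψ⟩
  simp only [stabilizedShifts, ← setOf_fixed_unipotentShifts h hz hg hgz hu, Set.mem_ofPred_eq]
  constructor
  · rintro ⟨⟨hφ, hψ, hst⟩, hfix, h0⟩
    have hφ' := (setOf_fixed_unipotentShifts h hz hg hgz hu).le ⟨hφ, hfix⟩
    have hψ' := (hψz hψ).1 h0
    exact ⟨⟨hφ, hfix⟩, hψ', (key hφ'.1 hψ' hfix).symm.trans hst⟩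
  · rintro ⟨⟨hφ, hfix⟩, hψ, hst⟩
    have hφ' := (setOf_fixed_unipotentShifts h hz hg hgz hu).le ⟨hφ, hfix⟩
    exact ⟨⟨hφ, hle hψ, (key hφ'.1 hψ hfix).trans hst⟩, hfix, (hψz (hle hψ)).2 hψ⟩

theorem IsOrthogonalPair.add_right_of_add_right (h : IsOrthogonalPair p q)
    (hz : IsOrthogonalPair z (p + q)) : IsOrthogonalPair p (z + q) := by
  obtain ⟨hzp, hzq⟩ := h.of_add_right hz
  refine ⟨h.left_idem, hzq.add_idem, ?_, ?_⟩
  · rw [mul_add, hzp.mul_eq_zero', h.mul_eq_zero, add_zero]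
  · rw [add_mul, hzp.mul_eq_zero, h.mul_eq_zero', add_zero]

theorem ncard_fixed_unipotentShifts_mul {φ₀ : A} (h : IsOrthogonalPair p q)
    (hφ₀ : φ₀ ∈ corner p q) :
    {φ ∈ unipotentShifts p q (g * (p + q + φ₀)) |
        g * (p + q + φ₀) * (p + q + φ) * z = z}.ncard =
      {φ ∈ unipotentShifts p q g | g * (p + q + φ) * z = z}.ncard := by
  refine Set.BijOn.ncard_eq ((Equiv.addLeft φ₀).bijOn fun φ => ?_)
  rw [Set.mem_sep_iff, Set.mem_sep_iff, mem_unipotentShifts_mul h hφ₀]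
  exact and_congr_right fun hφ => by
    rw [mul_add_mul_add h hφ₀ ((AddSubgroup.add_mem_cancel_left _ hφ₀).1 hφ.1),
      Equiv.coe_addLeft]

theorem ncard_fixed_stabilizedShifts_mul {φ₀ : A} (h : IsOrthogonalPair p q)
    (hφ₀ : φ₀ ∈ corner p q) :
    {x ∈ stabilizedShifts p q (g * (p + q + φ₀)) |
        g * (p + q + φ₀) * (p + q + x.1) * z = z ∧ (p + x.2) * z = 0}.ncard =
      {x ∈ stabilizedShifts p q g |
        g * (p + q + x.1) * z = z ∧ (p + x.2) * z = 0}.ncard := by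
  refine Set.BijOn.ncard_eq (((Equiv.addLeft φ₀).prodCongr (Equiv.refl A)).bijOn fun x => ?_)
  rw [Set.mem_sep_iff, Set.mem_sep_iff, mem_stabilizedShifts_mul h hφ₀]
  exact and_congr_right fun hx => by
    rw [mul_add_mul_add h hφ₀ ((AddSubgroup.add_mem_cancel_left _ hφ₀).1 hx.1.1)]
    rfl

theorem ncard_fixed_eq_of_orthogonal (h : IsOrthogonalPair p q)
    (hz : IsOrthogonalPair z (p + q)) (hg : g ∈ corner (z + (p + q)) (z + (p + q)))
    (ih : StabilizedCountEq p q) :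
    {φ ∈ unipotentShifts p (z + q) g | g * (p + (z + q) + φ) * z = z}.ncard =
      {x ∈ stabilizedShifts p (z + q) g |
        g * (p + (z + q) + x.1) * z = z ∧ (p + x.2) * z = 0}.ncard := by
  by_cases hex : ∃ φ₀ ∈ unipotentShifts p (z + q) g, g * (p + (z + q) + φ₀) * z = z
  swap
  · push Not at hex
    rw [(Set.sep_eq_empty_iff_mem_false).2 hex,
      (Set.sep_eq_empty_iff_mem_false).2 fun x hx h0 => hex _ hx.1 h0.1, Set.ncard_empty,
      Set.ncard_empty]
  obtain ⟨φ₀, hφ₀, hfix⟩ := hex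
  have h' := h.add_right_of_add_right hz
  rw [← ncard_fixed_unipotentShifts_mul h' hφ₀.1, ← ncard_fixed_stabilizedShifts_mul h' hφ₀.1]
  set k := g * (p + (z + q) + φ₀) with hk
  have hk_mem : k ∈ corner (z + (p + q)) (z + (p + q)) := by
    refine ⟨by rw [hk, ← mul_assoc, hg.1], ?_⟩
    rw [hk, mul_assoc, add_left_comm z p q, add_mul, h'.add_idem, h'.mul_add_eq hφ₀.1]
  have hku : IsNilpotent (k - (z + (p + q))) := by
    rw [add_left_comm z p q]
    exact hφ₀.2
  rw [setOf_fixed_unipotentShifts h hz hk_mem hfix hku,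
    setOf_fixed_stabilizedShifts h hz hk_mem hfix hku]
  exact ih _ ⟨by simp only [← mul_assoc, h.add_idem], by rw [mul_assoc, h.add_idem]⟩

theorem ncard_fixed_sub_add {n : A} (h : IsOrthogonalPair p q) (hn : n ∈ corner p q) :
    {x ∈ stabilizedShifts (p - n) (q + n) g |
        g * (p + q + x.1) * z = z ∧ (p - n + x.2) * z = 0}.ncard =
      {x ∈ stabilizedShifts p q g | g * (p + q + x.1) * z = z ∧ (p + x.2) * z = 0}.ncard := by
  refine (Set.BijOn.ncard_eq (((Equiv.refl A).prodCongr (Equiv.addRight n)).bijOn ?_)).symm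
  rintro ⟨φ, ψ⟩
  refine and_congr (mem_stabilizedShifts_sub_add h hn) ?_
  simp only [Equiv.prodCongr_apply, Prod.map, Equiv.refl_apply, Equiv.coe_addRight,
    sub_add_add_cancel]

theorem ncard_fixed_eq (h : IsOrthogonalPair p q) (hzz : z * z = z)
    (hz : z ∈ corner (p + q) (p + q)) (hzp : z * p = 0) (hg : g ∈ corner (p + q) (p + q))
    (ih : ∀ p' q', IsOrthogonalPair p' q' → p' + q' = p + q - z → StabilizedCountEq p' q') :
    {φ ∈ unipotentShifts p q g | g * (p + q + φ) * z = z}.ncard =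
      {x ∈ stabilizedShifts p q g |
        g * (p + q + x.1) * z = z ∧ (p + x.2) * z = 0}.ncard := by
  have hzq : z * q = z := by simpa only [mul_add, hzp, zero_add] using hz.2
  have hpqz : p * z + q * z = z := by rw [← add_mul, hz.1]
  have hn : p * z ∈ corner p q :=
    ⟨by rw [← mul_assoc, h.left_idem], by rw [mul_assoc, hzq]⟩
  have h' := h.sub_add hn
  have hzpz : z * (p * z) = 0 := by rw [← mul_assoc, hzp, zero_mul]
  have hzq' : z ∈ corner (q + p * z) (q + p * z) :=
    ⟨by linear_combination (norm := noncomm_ring) hpqz + p * hzz,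
      by linear_combination (norm := noncomm_ring) hzq + hzpz⟩
  have hq'' : IsOrthogonalPair z (q + p * z - z) := .of_mem_corner h'.right_idem hzq' hzz
  have h'' : IsOrthogonalPair (p - p * z) (q + p * z - z) :=
    (h'.symm.mono_left ⟨by rw [mul_sub, h'.right_idem, hzq'.1],
      by rw [sub_mul, h'.right_idem, hzq'.2]⟩ hq''.right_idem).symm
  have hsum : p - p * z + (q + p * z - z) = p + q - z := by abel
  have hze : IsOrthogonalPair z (p - p * z + (q + p * z - z)) :=
    hsum ▸ .of_mem_corner h.add_idem hz hzz
  have key := ncard_fixed_eq_of_orthogonal (g := g) h'' hze (by rwa [hsum, add_sub_cancel])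
    (ih _ _ h'' hsum)
  rwa [add_sub_cancel, unipotentShifts_sub_add h hn, sub_add_add_cancel,
    ncard_fixed_sub_add h hn] at key

end FixedQuotient

section Endomorphisms

open LinearMap

variable {F X : Type*} [Field F] [AddCommGroup X] [Module F X]

theorem exists_idempotent_of_disjoint {Z Y : Submodule F X} (h : Disjoint Z Y) :
    ∃ z : Module.End F X, z * z = z ∧ range z = Z ∧ Y ≤ ker z := by
  obtain ⟨C, hYC, hC⟩ := h.symm.exists_isCompl
  refine ⟨Z.projection C hC.symm, Submodule.isIdempotentElem_projection hC.symm, ?_, ?_⟩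
  · simp
  · simpa using hYC

theorem range_le_ker_sub_one_iff {f z : Module.End F X} : range z ≤ ker (f - 1) ↔ f * z = z := by
  rw [range_le_ker_iff, ← Module.End.mul_eq_comp, sub_mul, one_mul, sub_eq_zero]

theorem exists_idempotent_mem_corner {e p : Module.End F X} {Z : Submodule F X}
    (he : e * e = e) (hp : e * p = p) (hZe : Z ≤ ker (e - 1)) (hZp : Disjoint Z (range p)) :
    ∃ z, z * z = z ∧ z ∈ corner e e ∧ z * p = 0 ∧ range z = Z := by
  have hfix : ∀ v ∈ Z, e v = v := fun v hv => sub_eq_zero.1 (hZe hv)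
  have hdisj : Disjoint Z (range p ⊔ ker e) := by
    rw [Submodule.disjoint_def] at hZp ⊢
    intro v hv hv'
    obtain ⟨_, ⟨u, rfl⟩, w, hw, rfl⟩ := Submodule.mem_sup.1 hv'
    refine hZp _ hv ⟨u, ?_⟩
    rw [← hfix _ hv, map_add, mem_ker.1 hw, add_zero, ← Module.End.mul_apply, hp]
  obtain ⟨z, hzz, rfl, hker⟩ := exists_idempotent_of_disjoint hdisj
  have hze : z * (1 - e) = 0 :=
    range_le_ker_iff.1 ((range_le_ker_iff.2 (show e * (1 - e) = 0 by
      rw [mul_sub, mul_one, he, sub_self])).trans (le_sup_right.trans hker))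
  rw [mul_sub, mul_one, sub_eq_zero] at hze
  exact ⟨z, hzz, ⟨range_le_ker_sub_one_iff.1 hZe, hze.symm⟩,
    range_le_ker_iff.1 (le_sup_left.trans hker), rfl⟩

theorem ker_inf_ne_bot_of_isNilpotent {N : Module.End F X} (hN : IsNilpotent N)
    {W : Submodule F X} (hW : W ≠ ⊥) (hNW : W ≤ W.comap N) : ker N ⊓ W ≠ ⊥ := by
  have hpow : ∀ k, ∀ w ∈ W, w ≠ 0 → (N ^ k) w = 0 → ∃ v ∈ W, v ≠ 0 ∧ N v = 0 := fun k => by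
    induction k with
    | zero => exact fun w _ hw0 hw => absurd hw hw0
    | succ k ih =>
      intro w hw hw0 hk
      by_cases hNw : N w = 0
      · exact ⟨w, hw, hw0, hNw⟩
      · exact ih (N w) (hNW hw) hNw (by rwa [← Module.End.mul_apply, ← pow_succ])
  obtain ⟨w, hw, hw0⟩ := W.ne_bot_iff.1 hW
  obtain ⟨k, hk⟩ := hN
  obtain ⟨v, hv, hv0, hNv⟩ := hpow k w hw hw0 (by rw [hk, LinearMap.zero_apply])
  exact (Submodule.ne_bot_iff _).2 ⟨v, ⟨hNv, hv⟩, hv0⟩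

theorem ker_sub_one_inf_range_ne_bot {e k f : Module.End F X} (hk : IsNilpotent (k - e))
    (hf : f ≠ 0) (hef : e * f = f) (hff : f * f = f) (hkf : f * (k * f) = k * f) :
    ker (k - 1) ⊓ range f ≠ ⊥ := by
  have hstable : range f ≤ (range f).comap (k - e) := by
    rintro _ ⟨x, rfl⟩
    refine ⟨(k * f - f) x, ?_⟩
    rw [← Module.End.mul_apply, ← Module.End.mul_apply, mul_sub, hkf, hff, sub_mul, hef]
  refine ne_of_eq_of_ne ?_ (ker_inf_ne_bot_of_isNilpotent hk (range_eq_bot.not.2 hf) hstable)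
  ext v
  simp only [Submodule.mem_inf, mem_ker, and_congr_left_iff]
  rintro ⟨x, rfl⟩
  rw [← Module.End.mul_apply, ← Module.End.mul_apply, sub_mul, sub_mul, hef, one_mul]

variable {p q g φ ψ : Module.End F X}

theorem ker_sub_one_ne_bot_of_mem_unipotentShifts (h : IsOrthogonalPair p q) (hq : q ≠ 0)
    (hg : g ∈ corner (p + q) (p + q)) (hφ : φ ∈ unipotentShifts p q g) :
    ker (g * (p + q + φ) - 1) ≠ ⊥ := by
  have he : p + q ≠ 0 := fun h0 => hq (by rw [← h.right_mul_add, h0, mul_zero])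
  refine ne_bot_of_le_ne_bot (ker_sub_one_inf_range_ne_bot hφ.2 he h.add_idem h.add_idem ?_)
    inf_le_left
  rw [← mul_assoc, ← mul_assoc, hg.1]

theorem ker_sub_one_inf_ker_ne_bot_of_mem_stabilizedShifts (h : IsOrthogonalPair p q)
    (hq : q ≠ 0) (hg : g ∈ corner (p + q) (p + q)) (hx : (φ, ψ) ∈ stabilizedShifts p q g) :
    ker (g * (p + q + φ) - 1) ⊓ ker (p + ψ) ≠ ⊥ := by
  obtain ⟨hφ, hψ, hst⟩ :
      φ ∈ _ ∧ ψ ∈ corner p q ∧ (p + ψ) * (g * (p + q + φ)) * (q - ψ) = 0 := hx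
  have h' : IsOrthogonalPair (p + ψ) (q - ψ) := by
    simpa only [sub_neg_eq_add, ← sub_eq_add_neg] using h.sub_add (neg_mem hψ)
  have hsum : p + ψ + (q - ψ) = p + q := by abel
  have hq' : q - ψ ≠ 0 := fun h0 => hq <| calc
    q = q * (q - ψ) := by
      rw [mul_sub, h.right_idem, corner_mul_left_eq_zero hψ h.mul_eq_zero', sub_zero]
    _ = 0 := by rw [h0, mul_zero]
  refine ne_bot_of_le_ne_bot (ker_sub_one_inf_range_ne_bot hφ.2 hq' ?_ h'.right_idem ?_)
    (inf_le_inf_left _ (range_le_ker_iff.2 h'.mul_eq_zero))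
  · rw [← hsum, h'.add_mul_right]
  · have hgk : (p + q) * (g * (p + q + φ) * (q - ψ)) = g * (p + q + φ) * (q - ψ) := by
      rw [← mul_assoc, ← mul_assoc, hg.1]
    rwa [← hsum, add_mul, ← mul_assoc, hsum, hst, zero_add] at hgk

variable [Finite X]

instance finite_moduleEnd : Finite (Module.End F X) :=
  DFunLike.finite _

theorem ncard_unipotentShifts_eq_of_fixed_free (h : IsOrthogonalPair p q) (hq : q ≠ 0)
    (hg : g ∈ corner (p + q) (p + q)) (hfix : ∀ v, p v = v → g v = v → v = 0)
    (ih : ∀ p' q' : Module.End F X, IsOrthogonalPair p' q' →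
      (corner (p' + q') (p' + q') : Set (Module.End F X)).ncard <
        (corner (p + q) (p + q) : Set (Module.End F X)).ncard → StabilizedCountEq p' q') :
    (unipotentShifts p q g).ncard = (stabilizedShifts p q g).ncard := by
  refine ncard_eq_of_ncard_filter_eq (Set.toFinite _) (Set.toFinite _)
    (fun _ => ker_sub_one_ne_bot_of_mem_unipotentShifts h hq hg)
    (fun _ => ker_sub_one_inf_ker_ne_bot_of_mem_stabilizedShifts h hq hg) fun Z hZ => ?_
  by_cases hex : ∃ φ ∈ unipotentShifts p q g, Z ≤ ker (g * (p + q + φ) - 1)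
  swap
  · push Not at hex
    rw [(Set.sep_eq_empty_iff_mem_false).2 hex, (Set.sep_eq_empty_iff_mem_false).2
      fun x hx h0 => hex _ hx.1 (h0.trans inf_le_left), Set.ncard_empty, Set.ncard_empty]
  obtain ⟨φ, hφ, hZφ⟩ := hex
  have hk : ∀ v ∈ Z, (g * (p + q + φ)) v = v := fun v hv => sub_eq_zero.1 (hZφ hv)
  have hZe : Z ≤ ker (p + q - 1) := fun v hv => sub_eq_zero.2 <| by
    rw [← hk v hv, ← Module.End.mul_apply, ← mul_assoc, hg.1, Module.End.one_apply]
  have hkp : g * (p + q + φ) * p = g * p := by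
    rw [mul_assoc, add_mul, h.add_mul_left, corner_mul_right_eq_zero hφ.1 h.mul_eq_zero',
      add_zero]
  have hZp : Disjoint Z (range p) := by
    rw [Submodule.disjoint_def]
    rintro _ hv ⟨u, rfl⟩
    have hpu : p (p u) = p u := by rw [← Module.End.mul_apply, h.left_idem]
    refine hfix _ hpu ?_
    rw [← Module.End.mul_apply, ← hkp, Module.End.mul_apply, hk _ hv]
  obtain ⟨z, hzz, hz, hzp, rfl⟩ := exists_idempotent_mem_corner h.add_idem h.add_mul_left hZe hZp
  have hz0 : z ≠ 0 := fun h0 => hZ (by rw [h0, range_zero])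
  have hlt := ncard_corner_self_lt' (.of_mem_corner h.add_idem hz hzz) hz0
  rw [add_sub_cancel] at hlt
  simp only [le_inf_iff, range_le_ker_sub_one_iff]
  simp only [range_le_ker_iff, ← Module.End.mul_eq_comp]
  exact ncard_fixed_eq h hzz hz hzp hg fun p' q' h' hsum => ih p' q' h' (by rwa [hsum])

theorem ncard_unipotentShifts_eq_of_fixed (h : IsOrthogonalPair p q)
    (hg : g ∈ corner (p + q) (p + q)) {v : X} (hv : v ≠ 0) (hpv : p v = v) (hgv : g v = v)
    (ih : ∀ p' q' : Module.End F X, IsOrthogonalPair p' q' →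
      (corner (p' + q') (p' + q') : Set (Module.End F X)).ncard <
        (corner (p + q) (p + q) : Set (Module.End F X)).ncard → StabilizedCountEq p' q') :
    (unipotentShifts p q g).ncard = (stabilizedShifts p q g).ncard := by
  have hle {f : Module.End F X} (hf : f v = v) : F ∙ v ≤ ker (f - 1) := by
    rw [Submodule.span_singleton_le_iff_mem]
    exact sub_eq_zero.2 hf
  obtain ⟨z, hzz, hz, -, hrange⟩ := exists_idempotent_mem_corner h.left_idem (mul_zero p)
    (hle hpv) (by rw [range_zero]; exact disjoint_bot_right)
  have hz0 : z ≠ 0 := by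
    rintro rfl
    rw [range_zero, eq_comm, Submodule.span_singleton_eq_bot] at hrange
    exact hv hrange
  have hgz : g * z = z := range_le_ker_sub_one_iff.1 (hrange.trans_le (hle hgv))
  have hp' : IsOrthogonalPair z (p - z) := .of_mem_corner h.left_idem hz hzz
  have hqz : q * z = 0 := corner_mul_left_eq_zero hz h.mul_eq_zero'
  have hze : z ∈ corner (p + q) (p + q) :=
    ⟨by rw [add_mul, hz.1, hqz, add_zero], by
      rw [mul_add, hz.2, corner_mul_right_eq_zero hz h.mul_eq_zero, add_zero]⟩
  have hsub : p - z + q = p + q - z := sub_add_eq_add_sub p z q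
  have hz' : IsOrthogonalPair z (p - z + q) := by
    rw [hsub]
    exact .of_mem_corner h.add_idem hze hzz
  have hpz : IsOrthogonalPair (p - z) q :=
    h.mono_left ⟨by rw [mul_sub, h.left_idem, hz.1], by rw [sub_mul, h.left_idem, hz.2]⟩
      hp'.right_idem
  have hadd : z + (p - z + q) = p + q := by rw [hsub, add_sub_cancel]
  have hlt := ncard_corner_self_lt' hz' hz0
  rw [hadd] at hlt
  have hg' : g ∈ corner (z + (p - z + q)) (z + (p - z + q)) := by rwa [hadd]
  have hU := ncard_unipotentShifts_add hpz hz' hg' hgz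
  have hS := ncard_stabilizedShifts_add hpz hz' hg' hgz
  rw [add_sub_cancel] at hU hS
  rw [hU, hS, ih _ _ hpz hlt _ (mul_mul_mem_corner hpz.add_idem hpz.add_idem g)]

theorem stabilizedCountEq (h : IsOrthogonalPair p q) : StabilizedCountEq p q := by
  induction hn : (corner (p + q) (p + q) : Set (Module.End F X)).ncard
    using Nat.strong_induction_on generalizing p q with
  | _ n ih =>
  subst hn
  intro g hg
  replace ih (p' q' : Module.End F X) (h' : IsOrthogonalPair p' q') hlt := ih _ hlt h' rfl
  by_cases hq : q = 0
  · subst hq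
    refine Set.BijOn.ncard_eq (f := fun φ => (φ, 0))
      ⟨fun φ hφ => ⟨hφ, zero_mem _, by rw [sub_zero, mul_zero]⟩,
        fun φ _ φ' _ heq => congrArg Prod.fst heq, fun x hx => ⟨x.1, hx.1, ?_⟩⟩
    exact Prod.ext rfl (by rw [← hx.2.1.2, mul_zero])
  by_cases hfix : ∃ v, v ≠ 0 ∧ p v = v ∧ g v = v
  · obtain ⟨v, hv, hpv, hgv⟩ := hfix
    exact ncard_unipotentShifts_eq_of_fixed h hg hv hpv hgv ih
  · push Not at hfix
    exact ncard_unipotentShifts_eq_of_fixed_free h hq hg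
      (fun v hpv hgv => by_contra fun hv => hfix v hv hpv hgv) ih

end Endomorphisms

section UnipotentSum

variable {A : Type*} [Ring A]

theorem isNilpotent_add_iff_of_mul_eq_zero {a b : A} (h : a * b = 0) :
    IsNilpotent (a + b) ↔ IsNilpotent a ∧ IsNilpotent b := by
  have ha (k : ℕ) : a * (a + b) ^ k = a ^ (k + 1) := by
    induction k with
    | zero => rw [pow_zero, mul_one, zero_add, pow_one]
    | succ k ih =>
      rw [pow_succ, ← mul_assoc, ih, mul_add, ← pow_succ, pow_succ a k, mul_assoc _ a b, h,
        mul_zero, add_zero]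
  have hb (k : ℕ) : (a + b) ^ k * b = b ^ (k + 1) := by
    induction k with
    | zero => rw [pow_zero, one_mul, zero_add, pow_one]
    | succ k ih =>
      rw [pow_succ', mul_assoc, ih, add_mul, ← pow_succ', pow_succ' b k, ← mul_assoc a, h,
        zero_mul, zero_add]
  constructor
  · rintro ⟨n, hn⟩
    exact ⟨⟨n + 1, by rw [← ha, hn, mul_zero]⟩, ⟨n + 1, by rw [← hb, hn, zero_mul]⟩⟩
  · rintro ⟨⟨m, hm⟩, n, hn⟩
    refine ⟨n + 1 + m, ?_⟩
    rw [pow_add, pow_succ, mul_add, hb, pow_succ b, hn, zero_mul, add_zero, mul_assoc, ha,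
      pow_succ', hm, mul_zero, mul_zero]

/-- The nilpotent elements of `a A b`. For an idempotent `e`, the elements `1 + N` with
`N ∈ cornerNilpotents e e` are the unipotents of the unit group of `e A e`. -/
def cornerNilpotents (a b : A) : Set A :=
  {N ∈ corner a b | IsNilpotent N}

/-- The nilpotent elements of the corner ring of `p + q` which are block triangular, with
diagonal blocks in `p A p` and `q A q` and the remaining block in `q A p`. -/
def triangularNilpotents (p q : A) : Set A :=
  {N ∈ cornerNilpotents (p + q) (p + q) | p * N * q = 0}

theorem conj_mem_cornerNilpotents {e n N : A} (hn : n * n = 0) (hne : n ∈ corner e e)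
    (hN : N ∈ cornerNilpotents e e) : (1 - n) * N * (1 + n) ∈ cornerNilpotents e e := by
  refine ⟨conj_mem_corner (by rw [hne.1, hne.2]) (by rw [hne.1, hne.2]) hN.1, ?_⟩
  rw [isNilpotent_mul_comm, ← mul_assoc, (oneAdd_mul_oneSub hn).1, one_mul]
  exact hN.2

variable {p q : A}

theorem IsOrthogonalPair.corner_le (h : IsOrthogonalPair p q) :
    corner p q ≤ corner (p + q) (p + q) :=
  (corner_mono_left h.add_mul_left).trans (corner_mono_right h.right_mul_add)

theorem bijOn_add_row_nilpotents (h : IsOrthogonalPair p q) :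
    Set.BijOn (fun x : A × A => x.1 + x.2) ((corner q p : Set A) ×ˢ cornerNilpotents q q)
      (cornerNilpotents q (p + q)) := by
  convert (bijOn_add_corner_right q h).subset_right (r := cornerNilpotents q (p + q))
    fun _ hN => hN.1 using 1
  ext ⟨c, b⟩
  have hnil : c ∈ corner q p → b ∈ corner q q → (IsNilpotent (c + b) ↔ IsNilpotent b) :=
    fun hc hb => (isNilpotent_add_iff_of_mul_eq_zero
      (corner_mul_corner_eq_zero hc hb h.mul_eq_zero)).trans <| and_iff_right
        ⟨2, by rw [sq, corner_mul_corner_eq_zero hc hc h.mul_eq_zero]⟩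
  constructor
  · rintro ⟨hc, hb, hn⟩
    have hcb := (bijOn_add_corner_right q h).mapsTo (x := (c, b)) ⟨hc, hb⟩
    exact ⟨⟨hc, hb⟩, hcb, (hnil hc hb).2 hn⟩
  · rintro ⟨⟨hc, hb⟩, -, hn⟩
    exact ⟨hc, hb, (hnil hc hb).1 hn⟩

theorem bijOn_add_triangularNilpotents (h : IsOrthogonalPair p q) :
    Set.BijOn (fun x : A × A => x.1 + x.2)
      (cornerNilpotents p p ×ˢ cornerNilpotents q (p + q)) (triangularNilpotents p q) := by
  convert (bijOn_add_corner_left (p + q) h).subset_right (r := triangularNilpotents p q)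
    fun _ hN => hN.1.1 using 1
  ext ⟨a, b⟩
  have hpb : b ∈ corner q (p + q) → p * b = 0 :=
    fun hb => corner_mul_left_eq_zero hb h.mul_eq_zero
  have hnil : a ∈ corner p p → b ∈ corner q (p + q) →
      (IsNilpotent (a + b) ↔ IsNilpotent a ∧ IsNilpotent b) := fun ha hb =>
    isNilpotent_add_iff_of_mul_eq_zero (corner_mul_corner_eq_zero ha hb h.mul_eq_zero)
  constructor
  · rintro ⟨⟨ha, hna⟩, hb, hnb⟩
    have ha' := corner_mono_right h.left_mul_add ha
    have hab := (bijOn_add_corner_left (p + q) h).mapsTo (x := (a, b)) ⟨ha', hb⟩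
    refine ⟨⟨ha', hb⟩, ⟨hab, (hnil ha hb).2 ⟨hna, hnb⟩⟩, ?_⟩
    rw [mul_add, hpb hb, add_zero, ha.1, corner_mul_right_eq_zero ha h.mul_eq_zero]
  · rintro ⟨⟨(ha : a ∈ corner p (p + q)), hb⟩, ⟨-, hn⟩, (h₀ : p * (a + b) * q = 0)⟩
    have haq : a * q = 0 := by rwa [mul_add, hpb hb, add_zero, ha.1] at h₀
    have ha' : a ∈ corner p p := ⟨ha.1, by rw [← ha.2, mul_add, haq, add_zero, mul_assoc,
      h.left_idem]⟩
    exact ⟨⟨ha', ((hnil ha' hb).1 hn).1⟩, hb, ((hnil ha' hb).1 hn).2⟩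

variable [Finite A] {M : Type*} [AddCommGroup M] [DistribMulAction A M]

variable (M) in
/-- The sum of the unipotents of the unit group of the corner ring `e A e`. -/
noncomputable abbrev unipotentSum (e : A) : M →+ M :=
  oneAddSum M (cornerNilpotents e e)

theorem IsCornerFixed.unipotentSum {a b : A} {w : M} (hba : b * a = 0)
    (hw : IsCornerFixed a b w) : IsCornerFixed a b (unipotentSum M b w) := by
  refine fun x hx => smul_oneAddSum_eq_self fun N hN => ⟨1 + (x + x * N), ?_,
    hw _ (add_mem hx (mul_mem_corner hx hN.1))⟩
  have hNx := corner_mul_corner_eq_zero hN.1 hx hba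
  linear_combination (norm := noncomm_ring) -hNx - hNx * N

theorem oneAddSum_triangularNilpotents (h : IsOrthogonalPair p q) (w : M) :
    oneAddSum M (triangularNilpotents p q) w =
      unipotentSum M p (cornerSum M q p (unipotentSum M q w)) := by
  have hrow : cornerSum M q p (unipotentSum M q w) = oneAddSum M (cornerNilpotents q (p + q)) w :=
    oneAddSum_oneAddSum ((bijOn_add_row_nilpotents h).congr fun x hx => by
      rw [corner_mul_corner_eq_zero hx.1 hx.2.1 h.mul_eq_zero, add_zero]) w
  rw [hrow]
  exact (oneAddSum_oneAddSum ((bijOn_add_triangularNilpotents h).congr fun x hx => by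
    rw [corner_mul_corner_eq_zero hx.1.1 hx.2.1 h.mul_eq_zero, add_zero]) w).symm

end UnipotentSum

section DoubleCounting

theorem finsum_mem_ncard_smul {α β M : Type*} [Finite α] [Finite β] [AddCommMonoid M]
    {S : Set α} {T : α → Set β} {S' : β → Set α} {T' : Set β}
    (h : ∀ a b, a ∈ S ∧ b ∈ T a ↔ a ∈ S' b ∧ b ∈ T') (f : α → M) :
    ∑ᶠ a ∈ S, (T a).ncard • f a = ∑ᶠ b ∈ T', ∑ᶠ a ∈ S' b, f a := by
  simp only [← finsum_mem_const (Set.toFinite (T _)),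
    finsum_mem_eq_finite_toFinset_sum _ (Set.toFinite _)]
  exact Finset.sum_comm' (by simpa using h)

variable {A : Type*} [Ring A]

theorem bijOn_mul_add_sub {e φ : A} (he : e * e = e) (hφ : φ ∈ corner e e) (hφφ : φ * φ = 0) :
    Set.BijOn (fun g => g * (e + φ) - e) (corner e e : Set A) (corner e e) := by
  have hmem : e ∈ corner e e := ⟨he, he⟩
  have h₁ : (e + φ) * (e - φ) = e := by
    simp only [add_mul, mul_sub, he, hφ.1, hφ.2, hφφ]; abel
  have h₂ : (e - φ) * (e + φ) = e := by
    simp only [sub_mul, mul_add, he, hφ.1, hφ.2, hφφ]; abel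
  refine Set.InvOn.bijOn (f' := fun N => (e + N) * (e - φ)) ⟨fun g hg => ?_, fun N hN => ?_⟩
    (fun g hg => ?_) fun N hN => ?_
  · change (e + (g * (e + φ) - e)) * (e - φ) = g
    rw [add_sub_cancel, mul_assoc, h₁, hg.2]
  · change (e + N) * (e - φ) * (e + φ) - e = N
    rw [mul_assoc, h₂, (add_mem hmem hN).2, add_sub_cancel_left]
  · exact sub_mem (mul_mem_corner hg (add_mem hmem hφ)) hmem
  · exact mul_mem_corner (add_mem hmem hN) (sub_mem hmem hφ)

variable {p q φ : A}

theorem bijOn_mul_add_sub_of_mem_corner (h : IsOrthogonalPair p q) (hφ : φ ∈ corner p q) :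
    Set.BijOn (fun g => g * (p + q + φ) - (p + q)) (corner (p + q) (p + q) : Set A)
      (corner (p + q) (p + q)) :=
  bijOn_mul_add_sub h.add_idem (h.corner_le hφ)
    (corner_mul_corner_eq_zero hφ hφ h.mul_eq_zero')

variable [Finite A] {M : Type*} [AddCommGroup M] [DistribMulAction A M] {w : M}

/-- The translates `g * (1 + φ)` act on `w` as `g` does. -/
theorem finsum_mem_coset_eq_oneAddSum (h : IsOrthogonalPair p q) (hφ : φ ∈ corner p q)
    (hw : IsCornerFixed p q w) {T : Set A} (hT : T ⊆ (corner (p + q) (p + q) : Set A)) :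
    ∑ᶠ g ∈ {g ∈ corner (p + q) (p + q) | g * (p + q + φ) - (p + q) ∈ T},
      (1 - (p + q) + g) • w = oneAddSum M T w := by
  rw [oneAddSum_apply]
  refine finsum_mem_eq_of_bijOn _ ((bijOn_mul_add_sub_of_mem_corner h hφ).subset_right hT)
    fun g hg => ?_
  have hge : g * (p + q) = g := hg.1.2
  have heφ : (p + q) * φ = φ := (h.corner_le hφ).1
  nth_rw 1 [← hw φ hφ]
  rw [smul_smul]
  congr 1
  linear_combination (norm := noncomm_ring) -hge - heφ

/-- The unipotents of `p + q` stabilizing the range of the idempotent `q - ψ`. -/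
def stabilizingNilpotents (p q ψ : A) : Set A :=
  {N ∈ cornerNilpotents (p + q) (p + q) | (p + ψ) * (p + q + N) * (q - ψ) = 0}

theorem finsum_ncard_unipotentShifts_smul (h : IsOrthogonalPair p q) (hw : IsCornerFixed p q w) :
    ∑ᶠ g ∈ corner (p + q) (p + q), (unipotentShifts p q g).ncard • (1 - (p + q) + g) • w =
      (corner p q : Set A).ncard • unipotentSum M (p + q) w := by
  rw [← finsum_mem_const (Set.toFinite _)]
  refine (finsum_mem_ncard_smul (S := (corner (p + q) (p + q) : Set A)) (T' := corner p q)
    (S' := fun φ => {g ∈ corner (p + q) (p + q) |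
      g * (p + q + φ) - (p + q) ∈ cornerNilpotents (p + q) (p + q)}) ?_ _).trans ?_
  · exact fun g φ => ⟨fun ⟨hg, hφ, hn⟩ =>
        ⟨⟨hg, (bijOn_mul_add_sub_of_mem_corner h hφ).mapsTo hg, hn⟩, hφ⟩,
      fun ⟨⟨hg, hn⟩, hφ⟩ => ⟨hg, hφ, hn.2⟩⟩
  · exact finsum_mem_congr rfl fun φ hφ => finsum_mem_coset_eq_oneAddSum h hφ hw fun _ hN => hN.1

theorem finsum_ncard_stabilizedShifts_smul (h : IsOrthogonalPair p q) (hw : IsCornerFixed p q w) :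
    ∑ᶠ g ∈ corner (p + q) (p + q), (stabilizedShifts p q g).ncard • (1 - (p + q) + g) • w =
      (corner p q : Set A).ncard •
        ∑ᶠ ψ ∈ corner p q, oneAddSum M (stabilizingNilpotents p q ψ) w := by
  rw [← finsum_mem_const (Set.toFinite _)]
  refine (finsum_mem_ncard_smul (S := (corner (p + q) (p + q) : Set A))
    (T' := (corner p q : Set A) ×ˢ (corner p q : Set A)) (S' := fun x => {g ∈
      corner (p + q) (p + q) | g * (p + q + x.1) - (p + q) ∈ stabilizingNilpotents p q x.2})
      ?_ _).trans ?_
  · have hadd (g φ : A) : p + q + (g * (p + q + φ) - (p + q)) = g * (p + q + φ) :=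
      add_sub_cancel _ _
    rintro g ⟨φ, ψ⟩
    constructor
    · rintro ⟨hg, ⟨hφ, hn⟩, hψ, hs⟩
      exact ⟨⟨hg, ⟨(bijOn_mul_add_sub_of_mem_corner h hφ).mapsTo hg, hn⟩, by rwa [hadd]⟩, hφ, hψ⟩
    · rintro ⟨⟨hg, hn, hs⟩, hφ, hψ⟩
      exact ⟨hg, ⟨hφ, hn.2⟩, hψ, by rwa [hadd] at hs⟩
  · rw [finsum_mem_prod (Set.toFinite _) (Set.toFinite _)]
    exact finsum_mem_congr rfl fun φ hφ => finsum_mem_congr rfl fun ψ _ =>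
      finsum_mem_coset_eq_oneAddSum h hφ hw fun _ hN => hN.1.1

theorem unipotentSum_eq_finsum_stabilizing [IsAddTorsionFree M] (h : IsOrthogonalPair p q)
    (hcount : StabilizedCountEq p q) (hw : IsCornerFixed p q w) :
    unipotentSum M (p + q) w =
      ∑ᶠ ψ ∈ corner p q, oneAddSum M (stabilizingNilpotents p q ψ) w := by
  have hpos : (corner p q : Set A).ncard ≠ 0 :=
    ((Set.ncard_pos (Set.toFinite _)).2 ⟨0, zero_mem _⟩).ne'
  apply IsAddTorsionFree.nsmul_right_injective hpos
  change (corner p q : Set A).ncard • _ = (corner p q : Set A).ncard • _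
  rw [← finsum_ncard_unipotentShifts_smul h hw, ← finsum_ncard_stabilizedShifts_smul h hw]
  exact finsum_mem_congr rfl fun g hg => by rw [hcount g hg]

theorem oneAddSum_stabilizingNilpotents (h : IsOrthogonalPair p q) (hφ : φ ∈ corner p q)
    (hw : IsCornerFixed p q w) :
    oneAddSum M (stabilizingNilpotents p q (-φ)) w =
      (1 + φ) • oneAddSum M (triangularNilpotents p q) w := by
  have hφφ := corner_mul_corner_eq_zero hφ hφ h.mul_eq_zero'
  have hφe := h.corner_le hφ
  have hconj := bijOn_conj_of_mul_self_eq_zero hφφ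
    (fun N => conj_mem_cornerNilpotents hφφ hφe) fun N hN => by
      simpa [sub_eq_add_neg] using
        conj_mem_cornerNilpotents (n := -φ) (by simpa using hφφ) (neg_mem hφe) hN
  have hblock (N : A) : p * ((1 - φ) * N * (1 + φ)) * q =
      (p + -φ) * (p + q + N) * (q - -φ) := by
    have hp : p * (1 - φ) = p - φ := by rw [mul_sub, mul_one, hφ.1]
    have hq : (1 + φ) * q = q + φ := by rw [add_mul, one_mul, hφ.2, add_comm]
    have hpq : (p - φ) * (p + q) * (q + φ) = 0 := by
      have hφp := corner_mul_right_eq_zero hφ h.mul_eq_zero'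
      simp [sub_mul, mul_add, add_mul, h.left_idem, h.mul_eq_zero, hφ.1, hφ.2, hφp, hφφ]
    rw [← sub_eq_add_neg, sub_neg_eq_add, mul_add (p - φ), add_mul, hpq, zero_add, ← hp, ← hq]
    simp only [mul_assoc]
  have hbij : Set.BijOn (fun N => (1 - φ) * N * (1 + φ)) (stabilizingNilpotents p q (-φ))
      (triangularNilpotents p q) := by
    convert hconj.subset_right (r := triangularNilpotents p q) fun _ hN => hN.1 using 1
    ext N
    exact ⟨fun hN => ⟨hN.1, hconj.mapsTo hN.1, (hblock N).trans hN.2⟩,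
      fun hN => ⟨hN.1, (hblock N).symm.trans hN.2.2⟩⟩
  nth_rw 1 [← hw φ hφ]
  exact oneAddSum_smul_of_bijOn hbij (fun N _ => oneAdd_mul_oneAdd_eq_mul_conj hφφ N) w

theorem unipotentSum_eq_cornerSum_triangular [IsAddTorsionFree M] (h : IsOrthogonalPair p q)
    (hcount : StabilizedCountEq p q) (hw : IsCornerFixed p q w) :
    unipotentSum M (p + q) w = cornerSum M p q (oneAddSum M (triangularNilpotents p q) w) := by
  rw [unipotentSum_eq_finsum_stabilizing h hcount hw, oneAddSum_apply]
  refine (finsum_mem_eq_of_bijOn (-·) ((Equiv.neg A).bijOn fun φ => neg_mem_iff) fun φ hφ =>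
    (oneAddSum_stabilizingNilpotents h hφ hw).symm).symm

theorem eq_zero_of_unipotentSum_eq_zero_of_isCornerFixed [IsAddTorsionFree M]
    (hA : IsVonNeumannRegular A) (h : IsOrthogonalPair p q) (hcount : StabilizedCountEq p q)
    (hp : ∀ v : M, unipotentSum M p v = 0 → v = 0) (hq : ∀ v : M, unipotentSum M q v = 0 → v = 0)
    (hw : IsCornerFixed p q w) (h₀ : unipotentSum M (p + q) w = 0) : w = 0 := by
  rw [unipotentSum_eq_cornerSum_triangular h hcount hw, oneAddSum_triangularNilpotents h] at h₀
  have hfix : IsCornerFixed q p (unipotentSum M p (cornerSum M q p (unipotentSum M q w))) :=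
    .unipotentSum h.mul_eq_zero fun x hx => smul_cornerSum h.mul_eq_zero hx _
  have h₁ := eq_zero_of_cornerSum_eq_zero hA h.symm hfix h₀
  have h₂ := eq_zero_of_cornerSum_eq_zero hA h (hw.unipotentSum h.mul_eq_zero') (hp _ h₁)
  exact hq _ h₂

end DoubleCounting

section Annihilating

variable {A : Type*} [Ring A] [Finite A] {M : Type*} [AddCommGroup M] [DistribMulAction A M]

theorem oneAddSum_annihilating_eq_zero [IsAddTorsionFree M] {p r : A} {w : M}
    (h : IsOrthogonalPair p r) (h₀ : cornerSum M p r w = 0) :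
    oneAddSum M {N ∈ cornerNilpotents (p + r) (p + r) | N * p = 0} w = 0 := by
  set S := {N ∈ cornerNilpotents (p + r) (p + r) | N * p = 0}
  have hmul : ∀ φ ∈ corner p r, ∀ N ∈ S, N * φ = 0 := fun φ hφ N hN =>
    corner_mul_left_eq_zero hφ hN.2
  have hadd : ∀ φ ∈ corner p r, ∀ N ∈ S, N + φ ∈ S := fun φ hφ N hN =>
    ⟨⟨add_mem hN.1.1 (h.corner_le hφ), (isNilpotent_add_iff_of_mul_eq_zero (hmul φ hφ N hN)).2
      ⟨hN.1.2, 2, by rw [sq, corner_mul_corner_eq_zero hφ hφ h.mul_eq_zero']⟩⟩,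
      by rw [add_mul, hN.2, corner_mul_right_eq_zero hφ h.mul_eq_zero', add_zero]⟩
  have hbij : ∀ φ ∈ corner p r, Set.BijOn (· + φ) S S := fun φ hφ =>
    (Equiv.addRight φ).bijOn fun N =>
      ⟨fun hN => by simpa using hadd _ (neg_mem hφ) _ hN, hadd φ hφ N⟩
  refine eq_zero_of_ncard_smul_eq_zero (S := (corner p r : Set A)) ⟨0, zero_mem _⟩ ?_
  rw [← finsum_mem_const (Set.toFinite _), ← map_zero (oneAddSum M S), ← h₀, map_oneAddSum]
  refine finsum_mem_congr rfl fun φ hφ => ?_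
  rw [oneAddSum_smul_of_bijOn (g' := 1) (hbij φ hφ) (fun N hN => ?_) w, one_smul]
  rw [oneAdd_mul_oneAdd (hmul φ hφ N hN), one_mul]

end Annihilating

section Injectivity

open LinearMap

variable {F X : Type*} [Field F] [AddCommGroup X] [Module F X]

theorem isVonNeumannRegular_moduleEnd : IsVonNeumannRegular (Module.End F X) := fun y => by
  obtain ⟨g, hg⟩ := y.rangeRestrict.exists_rightInverse_of_surjective y.range_rangeRestrict
  obtain ⟨z, hz⟩ := g.exists_extend
  refine ⟨z, LinearMap.ext fun x => ?_⟩
  have hzy : z (y x) = g (y.rangeRestrict x) := LinearMap.congr_fun hz (y.rangeRestrict x)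
  rw [Module.End.mul_apply, Module.End.mul_apply, hzy]
  exact congrArg Subtype.val (LinearMap.congr_fun hg (y.rangeRestrict x))

variable {e : Module.End F X}

theorem ker_inf_range_ne_bot_of_mem_cornerNilpotents (he : e ≠ 0) {N : Module.End F X}
    (hN : N ∈ cornerNilpotents e e) : ker N ⊓ range e ≠ ⊥ := by
  refine ker_inf_ne_bot_of_isNilpotent hN.2 (range_eq_bot.not.2 he) ?_
  rintro _ ⟨x, rfl⟩
  exact ⟨N x, by rw [← Module.End.mul_apply, ← Module.End.mul_apply, hN.1.1, hN.1.2]⟩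

theorem cornerNilpotents_sep_range_le (e : Module.End F X) :
    {N ∈ cornerNilpotents e e | range e ≤ ker N ⊓ range e} = {0} := by
  ext N
  constructor
  · rintro ⟨hN, hle⟩
    exact hN.1.2.symm.trans (range_le_ker_iff.1 (hle.trans inf_le_left))
  · rintro rfl
    exact ⟨⟨zero_mem _, .zero⟩, by simp⟩

variable [Finite X] {M : Type*} [AddCommGroup M] [DistribMulAction (Module.End F X) M]
  [IsAddTorsionFree M] {w : M}

theorem oneAddSum_sep_le_eq_zero_of_isCuspidal (he : e * e = e) (hw : IsCuspidal e w)
    {Z : Submodule F X} (hZ : Z ≠ ⊥) (hZe : Z ≠ range e) :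
    oneAddSum M {N ∈ cornerNilpotents e e | Z ≤ ker N ⊓ range e} w = 0 := by
  by_cases hle : Z ≤ range e
  · obtain ⟨z, hzz, hz, -, rfl⟩ := exists_idempotent_mem_corner he (mul_zero e)
      (hle.trans (range_le_ker_sub_one_iff.2 he)) (by rw [range_zero]; exact disjoint_bot_right)
    have hpair : IsOrthogonalPair z (e - z) := .of_mem_corner he hz hzz
    have hann := oneAddSum_annihilating_eq_zero hpair <| hw z (e - z) hpair (add_sub_cancel _ _)
      (by rintro rfl; exact hZ range_zero) (sub_ne_zero.2 (by rintro rfl; exact hZe rfl))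
    rw [add_sub_cancel] at hann
    simpa only [le_inf_iff, hle, and_true, range_le_ker_iff, ← Module.End.mul_eq_comp] using hann
  · rw [Set.sep_eq_empty_iff_mem_false.2 fun N _ h => hle (h.trans inf_le_right),
      oneAddSum_apply, finsum_mem_empty]

theorem eq_zero_of_unipotentSum_eq_zero_of_isCuspidal (he : e * e = e) (hw : IsCuspidal e w)
    (h₀ : unipotentSum M e w = 0) : w = 0 := by
  classical
  have := Fintype.ofFinite (Submodule F X)
  have := Fintype.toLocallyFiniteOrder (α := Submodule F X)
  by_cases he0 : e = 0
  · have hzero : cornerNilpotents e e = {0} := by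
      rw [← cornerNilpotents_sep_range_le e, he0]; simp
    rwa [unipotentSum, hzero, oneAddSum_singleton_zero] at h₀
  rw [oneAddSum_apply, finsum_mem_eq_neg_sum_mu (Set.toFinite _)
    (fun N hN => ker_inf_range_ne_bot_of_mem_cornerNilpotents he0 hN), neg_eq_zero,
    Finset.sum_eq_single (range e), cornerNilpotents_sep_range_le, finsum_mem_singleton, add_zero,
    one_smul] at h₀
  · refine (smul_eq_zero.1 h₀).resolve_left fun hmu => ?_
    simpa [hmu] using neg_one_pow_finrank_mul_mu_pos (range e)
  · intro Z hZ hZe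
    rw [← oneAddSum_apply, oneAddSum_sep_le_eq_zero_of_isCuspidal he hw
      (Finset.mem_filter.1 hZ).2 hZe, smul_zero]
  · exact fun h => absurd (by simpa [range_eq_bot] using he0) h

theorem eq_zero_of_unipotentSum_eq_zero (he : e * e = e) (h₀ : unipotentSum M e w = 0) :
    w = 0 := by
  induction hn : (corner e e : Set (Module.End F X)).ncard
    using Nat.strong_induction_on generalizing e w with
  | _ n ih =>
  subst hn
  refine eq_zero_of_unipotentSum_eq_zero_of_isCuspidal he ?_ h₀
  rintro a b h rfl ha hb
  have hsq : ∀ n ∈ corner a b, n * n = 0 := fun n hn =>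
    corner_mul_corner_eq_zero hn hn h.mul_eq_zero'
  refine eq_zero_of_unipotentSum_eq_zero_of_isCornerFixed isVonNeumannRegular_moduleEnd h
    (stabilizedCountEq h) (fun v hv => ih _ (ncard_corner_self_lt h hb) h.left_idem hv rfl)
    (fun v hv => ih _ (ncard_corner_self_lt' h ha) h.right_idem hv rfl)
    (fun x hx => smul_cornerSum h.mul_eq_zero' hx w) ?_
  exact oneAddSum_oneAddSum_eq_zero_of_conj_mem h₀ hsq fun n hn N hN =>
    conj_mem_cornerNilpotents (hsq n hn) (h.corner_le hn) hN

end Injectivity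

section ZeroExtension

variable {A B : Type*} [Monoid A] [IsDedekindFiniteMonoid A] [MonoidWithZero B]

open Classical in
/-- The extension by zero to a monoid `A` of a homomorphism defined on its group of units. It
turns a representation of `GL` into a multiplicative action of the whole matrix ring. -/
noncomputable def extendUnitsByZero (f : Aˣ →* B) : A →* B where
  toFun a := if h : IsUnit a then f h.unit else 0
  map_one' := by simp
  map_mul' x y := by
    by_cases hx : IsUnit x
    · by_cases hy : IsUnit y
      · rw [dif_pos hx, dif_pos hy, dif_pos (hx.mul hy), ← map_mul]
        exact congrArg f (Units.ext rfl)
      · rw [dif_neg hy, dif_neg fun h => hy (IsUnit.mul_iff.1 h).2, mul_zero]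
    · rw [dif_neg hx, dif_neg fun h => hx (IsUnit.mul_iff.1 h).1, zero_mul]

theorem extendUnitsByZero_apply (f : Aˣ →* B) (u : Aˣ) : extendUnitsByZero f u = f u :=
  (dif_pos u.isUnit).trans (congrArg f u.isUnit.unit_of_val_units)

end ZeroExtension

section GeneralLinear

variable {ι F : Type*} [Fintype ι] [DecidableEq ι] [Field F]

theorem matrix_isNilpotent_iff_pow_card_eq_zero {N : Matrix ι ι F} :
    IsNilpotent N ↔ N ^ Fintype.card ι = 0 := by
  refine ⟨fun h => Matrix.toLinAlgEquiv'.injective ?_, fun h => ⟨_, h⟩⟩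
  have haeval := LinearMap.aeval_self_charpoly (Matrix.toLinAlgEquiv' N)
  rwa [(LinearMap.isNilpotent_iff_charpoly _).1 (h.map Matrix.toLinAlgEquiv'), map_pow,
    Polynomial.aeval_X, ← map_pow, Module.finrank_fintype_fun_eq_card,
    ← map_zero Matrix.toLinAlgEquiv'] at haeval

variable [Fintype F] [DecidableEq F]

variable (ι F) in
/-- The unipotent elements of `GL ι F`. -/
def unipotents : Finset (Matrix.GeneralLinearGroup ι F) :=
  {g | ((g : Matrix ι ι F) - 1) ^ Fintype.card ι = 0}

theorem mem_unipotents {g : Matrix.GeneralLinearGroup ι F} :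
    g ∈ unipotents ι F ↔ IsNilpotent ((g : Matrix ι ι F) - 1) := by
  rw [unipotents, Finset.mem_filter_univ, matrix_isNilpotent_iff_pow_card_eq_zero]

theorem conj_mem_unipotents (g : Matrix.GeneralLinearGroup ι F) {u}
    (hu : u ∈ unipotents ι F) : g * u * g⁻¹ ∈ unipotents ι F := by
  rw [mem_unipotents] at hu ⊢
  rw [show ((g * u * g⁻¹ : Matrix.GeneralLinearGroup ι F) : Matrix ι ι F) - 1 =
    g * ((u - 1) * (g⁻¹ : Matrix.GeneralLinearGroup ι F)) by
      rw [sub_mul, mul_sub, one_mul, Units.mul_inv, Units.val_mul, Units.val_mul, mul_assoc],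
    isNilpotent_mul_comm, mul_assoc, Units.inv_mul, mul_one]
  exact hu

theorem bijOn_toLinAlgEquiv_unipotents :
    Set.BijOn (fun g : Matrix.GeneralLinearGroup ι F =>
        Matrix.toLinAlgEquiv' ((g : Matrix ι ι F) - 1)) (unipotents ι F)
      (cornerNilpotents (1 : Module.End F (ι → F)) 1) := by
  refine ⟨fun g hg => ⟨⟨one_mul _, mul_one _⟩, ?_⟩, fun g _ h _ hgh => ?_, fun N hN => ?_⟩
  · exact (mem_unipotents.1 hg).map _
  · exact Units.ext (sub_left_injective (b := 1) (Matrix.toLinAlgEquiv'.injective hgh))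
  · have hn := hN.2.map Matrix.toLinAlgEquiv'.symm
    obtain ⟨u, hu⟩ := hn.isUnit_one_add
    have hu' : (u : Matrix ι ι F) - 1 = Matrix.toLinAlgEquiv'.symm N := by
      rw [hu, add_sub_cancel_left]
    refine ⟨u, mem_unipotents.2 (by rwa [hu']), ?_⟩
    simp only [hu', AlgEquiv.apply_symm_apply]

theorem eq_zero_of_sum_unipotents_eq_zero {K M : Type*} [CommRing K] [AddCommGroup M] [Module K M]
    [IsAddTorsionFree M] (ρ : Representation K (Matrix.GeneralLinearGroup ι F) M) {w : M}
    (hw : ∑ g ∈ unipotents ι F, ρ g w = 0) : w = 0 := by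
  let E : Matrix ι ι F ≃ₐ[F] Module.End F (ι → F) := Matrix.toLinAlgEquiv'
  let : DistribMulAction (Module.End F (ι → F)) M :=
    .compHom M ((extendUnitsByZero ρ).comp (E.symm : Module.End F (ι → F) →* Matrix ι ι F))
  have hsmul (g : Matrix.GeneralLinearGroup ι F) : E g • w = ρ g w := by
    rw [← extendUnitsByZero_apply]
    exact congrArg (extendUnitsByZero ρ · w) (E.symm_apply_apply g)
  refine eq_zero_of_unipotentSum_eq_zero (F := F) (X := ι → F) (e := 1) (one_mul 1) ?_
  rw [oneAddSum_apply, ← hw, ← finsum_mem_coe_finset]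
  refine (finsum_mem_eq_of_bijOn _ bijOn_toLinAlgEquiv_unipotents fun g _ => ?_).symm
  rw [← hsmul, map_sub, map_one, add_sub_cancel]

theorem commute_sum_unipotents {K M : Type*} [CommRing K] [AddCommGroup M] [Module K M]
    (ρ : Representation K (Matrix.GeneralLinearGroup ι F) M)
    (g : Matrix.GeneralLinearGroup ι F) : Commute (ρ g) (∑ u ∈ unipotents ι F, ρ u) := by
  rw [Commute, SemiconjBy, Finset.mul_sum, Finset.sum_mul]
  refine Finset.sum_bij' (fun u _ => g * u * g⁻¹) (fun u _ => g⁻¹ * u * g)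
    (fun u => conj_mem_unipotents g) (fun u hu => ?_) ?_ ?_ ?_
  · simpa using conj_mem_unipotents g⁻¹ hu
  · intro u _; group
  · intro u _; group
  · intro u _
    rw [← map_mul, ← map_mul, inv_mul_cancel_right]

end GeneralLinear

section Schur

open CategoryTheory

variable {K G : Type*} [Field K] [Monoid G] (V : FDRep K G) [Simple V]

/-- Schur's lemma. -/
theorem exists_eq_smul_one_of_commute [IsAlgClosed K] (f : Module.End K V)
    (hf : ∀ g, Commute (V.ρ g) f) : ∃ c : K, f = c • 1 := by
  let φ : V ⟶ V := ⟨InducedCategory.homMk (ModuleCat.ofHom f), fun g => by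
    ext1
    exact (hf g).symm⟩
  obtain ⟨c, hc⟩ := endomorphism_simple_eq_smul_id K φ
  exact ⟨c, congrArg (fun ψ : V ⟶ V => ψ.hom.hom.hom) hc.symm⟩

theorem nontrivial_of_simple : Nontrivial V := by
  by_contra h
  rw [not_nontrivial_iff_subsingleton] at h
  refine id_nonzero V (Action.hom_ext _ _ ?_)
  ext x
  exact Subsingleton.elim (α := V) _ _

end Schur

theorem unipotent_sum_character_ne_zero_general {ι F K : Type*} [Fintype ι] [DecidableEq ι]
    [Field F] [Fintype F] [DecidableEq F] [Field K] [IsAlgClosed K] [CharZero K]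
    (χ : FDRep K (Matrix.GeneralLinearGroup ι F)) [CategoryTheory.Simple χ] :
    ∑ g ∈ unipotents ι F, χ.character g ≠ 0 := by
  obtain ⟨c, hc⟩ := exists_eq_smul_one_of_commute χ _ (commute_sum_unipotents χ.ρ)
  have := nontrivial_of_simple χ
  have hsum : ∑ g ∈ unipotents ι F, χ.character g = c * Module.finrank K χ := by
    have htrace := congrArg (LinearMap.trace K χ) hc
    rwa [map_sum, map_smul, LinearMap.trace_one, smul_eq_mul] at htrace
  rw [hsum]
  refine mul_ne_zero ?_ (Nat.cast_ne_zero.2 Module.finrank_pos.ne')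
  rintro rfl
  have := IsAddTorsionFree.of_isTorsionFree K χ
  obtain ⟨w, hw⟩ := exists_ne (0 : χ)
  refine hw (eq_zero_of_sum_unipotents_eq_zero χ.ρ ?_)
  rw [← LinearMap.sum_apply, hc, zero_smul, LinearMap.zero_apply]

/-- Let `q = p ^ k` be a prime power, `n ≥ 1`, and `G = GL(n, 𝔽_q)`.
For every irreducible complex character `χ` of `G`, the sum of the values of `χ`
over the unipotent elements of `G` (those `g` with `(g - 1) ^ n = 0`) is nonzero;
i.e. `χ` is directly linked across the unipotent elements to the trivial character. -/
theorem unipotent_sum_character_ne_zero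
    (p k n : ℕ) (hp : p.Prime) (hk : 0 < k) (hn : 1 ≤ n)
    (F : Type) [Field F] [Fintype F] [DecidableEq F]
    (hq : Fintype.card F = p ^ k)
    (χ : FDRep ℂ (Matrix.GeneralLinearGroup (Fin n) F))
    (hχ : CategoryTheory.Simple χ) :
    ∑ g ∈ Finset.univ.filter
        (fun g : Matrix.GeneralLinearGroup (Fin n) F =>
          ((g : Matrix (Fin n) (Fin n) F) - 1) ^ n = 0),
      χ.character g ≠ 0 := by
  simpa only [unipotents, Fintype.card_fin] using unipotent_sum_character_ne_zero_general χ
end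

section
/- Let q be a power of a prime, let n ≥ 1, let G = GL(n, 𝔽_q), and let G_u be the set of unipotent elements of G. Then the equivalence relation on the set of irreducible complex characters of G generated by direct linking across G_u has exactly one equivalence class: any two irreducible complex characters of G are linked across G_u (indeed each is directly linked across G_u to the trivial character). Equivalently, the only 1-block of G is the whole of Irr(G). -/
/-!
The Steinberg representation `St` is realised on the functions on the flag variety whose sum over
each fibre of the projections to the quotients by the minimal parabolic subgroups vanishes. By the
Bruhat decomposition such a function is determined by its values on the big cell, on which the
group `U` of unitriangular matrices acts simply transitively, and the translates of the alternating
sum over an apartment show that these values are arbitrary. So `St` restricts to the regular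
representation of `U`, and its character vanishes at every nontrivial unipotent element. Averaging
over `U` shows that every nonzero subrepresentation contains the sum of these translates, so `St`
is irreducible. For every irreducible `χ`, the sum of `St(g) χ(g⁻¹)` over the unipotent elements is
therefore `St(1) χ(1) ≠ 0`: every `χ` is directly linked to `St`.
-/

namespace Steinberg

open Matrix hiding swap
open Equiv (Perm swap swap_apply_right)

section Groups

variable {F : Type*} [Field F] {n : ℕ}

/-- The parabolic subgroup of `GL n F` of invertible matrices that are block triangular with
respect to `b`. -/
def parabolic {α : Type*} [LinearOrder α] (b : Fin n → α) : Subgroup (GL (Fin n) F) where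
  carrier := {g | (g : Matrix (Fin n) (Fin n) F).BlockTriangular b}
  mul_mem' hg hh := by
    simpa using! BlockTriangular.mul hg hh
  one_mem' := by simpa using! blockTriangular_one
  inv_mem' {g} hg := by
    have := g.invertible
    simpa using! blockTriangular_inv_of_blockTriangular hg

variable (F n) in
/-- The Borel subgroup of invertible upper triangular matrices. -/
def borel : Subgroup (GL (Fin n) F) := parabolic id

theorem mem_borel {g : GL (Fin n) F} : g ∈ borel F n ↔ ∀ i j, j < i → g i j = 0 := Iff.rfl

theorem borel_le_parabolic {α : Type*} [LinearOrder α] {b : Fin n → α} (hb : Monotone b) :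
    borel F n ≤ parabolic b :=
  fun _ hg _ _ hij => hg (hb.reflect_lt hij)

theorem mul_apply_diag_of_mem_borel {g h : GL (Fin n) F} (hg : g ∈ borel F n)
    (hh : h ∈ borel F n) (i : Fin n) : (g * h) i i = g i i * h i i := by
  rw [Units.val_mul, Matrix.mul_apply]
  refine Finset.sum_eq_single i (fun j _ hj => ?_) (by simp)
  rcases lt_or_gt_of_ne hj with hji | hij
  · rw [mem_borel.1 hg _ _ hji, zero_mul]
  · rw [mem_borel.1 hh _ _ hij, mul_zero]

variable (F n) in
/-- The group of upper unitriangular matrices, the unipotent radical of `borel`. -/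
def unitriangular : Subgroup (GL (Fin n) F) where
  carrier := {g | g ∈ borel F n ∧ ∀ i, g i i = 1}
  mul_mem' hg hh := ⟨mul_mem hg.1 hh.1, fun i => by
    rw [mul_apply_diag_of_mem_borel hg.1 hh.1, hg.2, hh.2, mul_one]⟩
  one_mem' := ⟨one_mem _, fun i => by simp⟩
  inv_mem' {g} hg := ⟨inv_mem hg.1, fun i => by
    have hdiag := mul_apply_diag_of_mem_borel hg.1 (inv_mem hg.1) i
    rw [mul_inv_cancel, hg.2, one_mul] at hdiag
    simpa using hdiag.symm⟩

theorem unitriangular_le_borel : unitriangular F n ≤ borel F n :=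
  fun _ hg => hg.1

variable (F) in
/-- The permutation matrix sending the basis vector `e j` to `e (σ j)`: the Weyl group of `GL n F`
as a subgroup. -/
def weyl : Perm (Fin n) →* GL (Fin n) F :=
  MonoidHom.toHomUnits
    { toFun := fun σ => Matrix.of fun i j => if i = σ j then 1 else 0
      map_one' := rfl
      map_mul' := fun σ τ => by
        ext i j
        simp only [Matrix.mul_apply, of_apply, mul_ite, mul_one, mul_zero, Finset.sum_ite_eq',
          Finset.mem_univ, if_true]
        rfl }

theorem weyl_apply (σ : Perm (Fin n)) (i j : Fin n) :
    weyl F σ i j = if i = σ j then 1 else 0 := rfl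

theorem mul_weyl_apply (g : GL (Fin n) F) (σ : Perm (Fin n)) (i j : Fin n) :
    (g * weyl F σ) i j = g i (σ j) := by
  simp [Matrix.mul_apply, weyl_apply]

theorem weyl_mul_apply (σ : Perm (Fin n)) (g : GL (Fin n) F) (i j : Fin n) :
    (weyl F σ * g) (σ i) j = g i j := by
  simp [Matrix.mul_apply, weyl_apply]

theorem weyl_inv_mul_apply (g : GL (Fin n) F) (σ : Perm (Fin n)) (i j : Fin n) :
    ((weyl F σ)⁻¹ * g) i j = g (σ i) j := by
  rw [← weyl_mul_apply σ, mul_inv_cancel_left]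

theorem weyl_mem_parabolic {α : Type*} [LinearOrder α] {b : Fin n → α} {σ : Perm (Fin n)}
    (h : ∀ i, b (σ i) = b i) : weyl F σ ∈ parabolic b := by
  intro i j hij
  rw [weyl_apply, if_neg]
  rintro rfl
  exact hij.ne (h j).symm

/-- The elementary matrix `1 + c E_{ij}`, as an element of `GL n F`. -/
def elementary {i j : Fin n} (hij : i ≠ j) (c : F) : GL (Fin n) F where
  val := transvection i j c
  inv := transvection i j (-c)
  val_inv := by simp [transvection_mul_transvection_same _ _ hij]
  inv_val := by simp [transvection_mul_transvection_same _ _ hij]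

theorem elementary_mem_unitriangular {i j : Fin n} (hij : i < j) (c : F) :
    elementary hij.ne c ∈ unitriangular F n := by
  refine ⟨blockTriangular_transvection hij.le c, fun k => ?_⟩
  have : ¬ (i = k ∧ j = k) := by rintro ⟨rfl, rfl⟩; exact hij.false
  simp [elementary, transvection, this]

theorem weyl_mul_elementary (σ : Perm (Fin n)) {i j : Fin n} (hij : i ≠ j) (c : F) :
    weyl F σ * elementary hij c = elementary (σ.injective.ne hij) c * weyl F σ := by
  rw [← eq_inv_mul_iff_mul_eq]
  ext a b
  rw [weyl_inv_mul_apply, mul_weyl_apply]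
  simp [elementary, transvection, one_apply, single_apply]

end Groups

section Bruhat

variable {F : Type*} [Field F] {n : ℕ}

/-- The map on indices identifying `j` with `i`. For `i ⋖ j`, the parabolic subgroup of
`collapse i j` is the minimal parabolic subgroup attached to the simple reflection `(i j)`. -/
def collapse (i j : Fin n) : Fin n → Fin n := fun k => if k = j then i else k

theorem collapse_monotone {i j : Fin n} (hij : i ⋖ j) : Monotone (collapse i j) := by
  intro x y hxy
  have := hij.lt
  have := hij.le_of_lt (c := x)
  grind [collapse]

theorem collapse_swap (i j k : Fin n) : collapse i j (swap i j k) = collapse i j k := by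
  grind [collapse]

theorem weyl_swap_mem_parabolic (i j : Fin n) : weyl F (swap i j) ∈ parabolic (collapse i j) :=
  weyl_mem_parabolic (collapse_swap i j)

theorem weyl_swap_mul_self (i j : Fin n) : weyl F (swap i j) * weyl F (swap i j) = 1 := by
  rw [← map_mul, Equiv.swap_mul_self, map_one]

theorem apply_eq_zero_of_mem_parabolic_collapse {i j : Fin n} (hij : i ⋖ j) {h : GL (Fin n) F}
    (hh : h ∈ parabolic (collapse i j)) {a b : Fin n} (hba : b < a) (hne : ¬(a = j ∧ b = i)) :
    h a b = 0 := by
  apply hh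
  have := hij.lt
  have := @hij.2
  grind [collapse]

theorem exists_eq_elementary_mul_weyl_swap_mul {i j : Fin n} (hij : i ⋖ j) {h : GL (Fin n) F}
    (hh : h ∈ parabolic (collapse i j)) (hb : h ∉ borel F n) :
    ∃ c, ∃ b ∈ borel F n, h = elementary hij.ne c * weyl F (swap i j) * b := by
  have hzero {a b : Fin n} (hba : b < a) (hne : ¬(a = j ∧ b = i)) : h a b = 0 :=
    apply_eq_zero_of_mem_parabolic_collapse hij hh hba hne
  have hji : h j i ≠ 0 := fun hji => hb <| mem_borel.2 fun a b hba => by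
    by_cases hab : a = j ∧ b = i
    · rw [hab.1, hab.2, hji]
    · exact hzero hba hab
  let c := h i i / h j i
  refine ⟨c, (weyl F (swap i j))⁻¹ * ((elementary hij.ne c)⁻¹ * h), ?_, by group⟩
  refine mem_borel.2 fun a b hba => ?_
  rw [weyl_inv_mul_apply]
  change (transvection i j (-c) * (h : Matrix (Fin n) (Fin n) F)) (swap i j a) b = 0
  have hlt := hij.lt
  rcases eq_or_ne a j with rfl | haj
  · rw [swap_apply_right, transvection_mul_apply_same]
    rcases eq_or_ne b i with rfl | hbi
    · simp [c, hji]
    · have hbi' : b < i := lt_of_le_of_ne (hij.le_of_lt hba) hbi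
      rw [hzero hbi' (by grind), hzero hba (by grind), mul_zero, add_zero]
  · rw [transvection_mul_apply_of_ne _ _ _ _ (by grind)]
    exact hzero (by grind) (by grind)

/-- The Bruhat cell of `σ`, written as `U σ B` instead of `B σ B`. -/
def bruhatCell (σ : Perm (Fin n)) : Set (GL (Fin n) F) :=
  {g | ∃ u ∈ unitriangular F n, ∃ b ∈ borel F n, g = u * weyl F σ * b}

theorem unitriangular_mul_mem_bruhatCell {σ : Perm (Fin n)} {u g : GL (Fin n) F}
    (hu : u ∈ unitriangular F n) (hg : g ∈ bruhatCell σ) : u * g ∈ bruhatCell σ := by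
  obtain ⟨v, hv, b, hb, rfl⟩ := hg
  exact ⟨u * v, mul_mem hu hv, b, hb, by simp only [mul_assoc]⟩

theorem weyl_mul_mem_bruhatCell_of_notMem_borel {i j : Fin n} (hij : i ⋖ j) {σ : Perm (Fin n)}
    (hσ : σ i < σ j) {h : GL (Fin n) F} (hh : h ∈ parabolic (collapse i j))
    (hB : h ∉ borel F n) : weyl F σ * h ∈ bruhatCell (σ * swap i j) := by
  obtain ⟨c, b, hb, rfl⟩ := exists_eq_elementary_mul_weyl_swap_mul hij hh hB
  refine ⟨_, elementary_mem_unitriangular hσ c, b, hb, ?_⟩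
  simp only [map_mul, ← mul_assoc, weyl_mul_elementary]

theorem exists_weyl_mul_mem_bruhatCell {i j : Fin n} (hij : i ⋖ j) (σ : Perm (Fin n))
    {h : GL (Fin n) F} (hh : h ∈ parabolic (collapse i j)) :
    ∃ τ, weyl F σ * h ∈ bruhatCell τ := by
  have of_ascent (σ : Perm (Fin n)) (hσ : σ i < σ j) {h : GL (Fin n) F}
      (hh : h ∈ parabolic (collapse i j)) : ∃ τ, weyl F σ * h ∈ bruhatCell τ := by
    by_cases hb : h ∈ borel F n
    · exact ⟨σ, 1, one_mem _, h, hb, by rw [one_mul]⟩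
    · exact ⟨_, weyl_mul_mem_bruhatCell_of_notMem_borel hij hσ hh hb⟩
  rcases lt_or_gt_of_ne (σ.injective.ne hij.ne) with hσ | hσ
  · exact of_ascent σ hσ hh
  · have := of_ascent (σ * swap i j) (by simpa using hσ)
      (mul_mem (weyl_swap_mem_parabolic i j) hh)
    rwa [map_mul, mul_assoc, ← mul_assoc (weyl F (swap i j)), weyl_swap_mul_self, one_mul] at this

theorem weyl_mem_of_forall_covBy {H : Subgroup (GL (Fin n) F)}
    (hH : ∀ i j : Fin n, i ⋖ j → weyl F (swap i j) ∈ H) (σ : Perm (Fin n)) : weyl F σ ∈ H := by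
  cases n with
  | zero => rw [Subsingleton.elim σ 1, map_one]; exact one_mem H
  | succ n =>
    have : (⊤ : Submonoid (Perm (Fin (n + 1)))) ≤ H.toSubmonoid.comap (weyl F) := by
      rw [← Perm.mclosure_swap_castSucc_succ, Submonoid.closure_le]
      rintro _ ⟨i, rfl⟩
      exact hH _ _ (by simp)
    exact this trivial

theorem eq_top_of_borel_le {H : Subgroup (GL (Fin n) F)} (hB : borel F n ≤ H)
    (hH : ∀ i j : Fin n, i ⋖ j → weyl F (swap i j) ∈ H) : H = ⊤ := by
  have elementary_mem {i j : Fin n} (hij : i ≠ j) (c : F) : elementary hij c ∈ H := by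
    rcases lt_or_gt_of_ne hij with hlt | hgt
    · exact hB (unitriangular_le_borel (elementary_mem_unitriangular hlt c))
    · have hw := weyl_mem_of_forall_covBy hH (swap j i)
      have := mul_mem (mul_mem hw
        (hB (unitriangular_le_borel (elementary_mem_unitriangular hgt c)))) hw
      simpa [weyl_mul_elementary, mul_assoc, weyl_swap_mul_self] using this
  refine eq_top_iff.2 fun g _ => ?_
  obtain ⟨g', hg', hval⟩ : ∃ g' ∈ H, (g' : Matrix (Fin n) (Fin n) F) = g := by
    refine diagonal_transvection_induction_of_det_ne_zero
      (fun M => ∃ g' ∈ H, (g' : Matrix (Fin n) (Fin n) F) = M) _ g.det_ne_zero ?_ ?_ ?_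
    · exact fun D hD =>
        ⟨GeneralLinearGroup.mkOfDetNeZero _ hD, hB (blockTriangular_diagonal D), rfl⟩
    · exact fun t => ⟨_, elementary_mem t.hij t.c, rfl⟩
    · rintro _ _ - - ⟨a, ha, rfl⟩ ⟨b, hb, rfl⟩
      exact ⟨a * b, mul_mem ha hb, rfl⟩
  rwa [← Units.ext hval]

/-- The union of the cells is stable under right multiplication by the Borel subgroup and by the
simple reflections, which together generate the group. -/
theorem exists_mem_bruhatCell (g : GL (Fin n) F) : ∃ σ, g ∈ bruhatCell σ := by
  let S : Set (GL (Fin n) F) := {g | g ∈ borel F n ∨ ∃ i j, i ⋖ j ∧ g = weyl F (swap i j)}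
  have hS : Subgroup.closure S = ⊤ :=
    eq_top_of_borel_le (fun b hb => Subgroup.subset_closure (.inl hb))
      fun i j hij => Subgroup.subset_closure (.inr ⟨i, j, hij, rfl⟩)
  have inv_mem {s : GL (Fin n) F} (hs : s ∈ S) : s⁻¹ ∈ S := by
    rcases hs with hs | ⟨i, j, hij, rfl⟩
    · exact .inl (inv_mem hs)
    · exact .inr ⟨i, j, hij, by rw [← map_inv, Equiv.swap_inv]⟩
  have step {x s : GL (Fin n) F} (hs : s ∈ S) (hx : ∃ σ, x ∈ bruhatCell σ) :
      ∃ σ, x * s ∈ bruhatCell σ := by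
    obtain ⟨σ, u, hu, b, hb, rfl⟩ := hx
    rcases hs with hs | ⟨i, j, hij, rfl⟩
    · exact ⟨σ, u, hu, b * s, mul_mem hb hs, mul_assoc _ _ _⟩
    · obtain ⟨τ, hτ⟩ := exists_weyl_mul_mem_bruhatCell (F := F) hij σ
        (mul_mem (borel_le_parabolic (collapse_monotone hij) hb) (weyl_swap_mem_parabolic i j))
      exact ⟨τ, by simpa only [mul_assoc] using unitriangular_mul_mem_bruhatCell hu hτ⟩
  have hg : g ∈ Subgroup.closure S := hS ▸ Subgroup.mem_top g
  induction hg using Subgroup.closure_induction_right with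
  | one => exact ⟨1, 1, one_mem _, 1, one_mem _, by simp⟩
  | mul_right x _ s hs hx => exact step hs hx
  | mul_inv_cancel x _ s hs hx => exact step (inv_mem hs) hx

theorem perm_eq_one_of_forall_le {α : Type*} [PartialOrder α] [WellFoundedGT α] {σ : Perm α}
    (h : ∀ a, a ≤ σ a) : σ = 1 := by
  ext a
  induction a using WellFoundedGT.induction with
  | ind a ih =>
    by_contra hne
    exact hne (σ.injective (ih (σ a) (lt_of_le_of_ne (h a) (Ne.symm hne))))

theorem eq_revPerm_of_forall_le_rev {σ : Perm (Fin n)} (h : ∀ a, a ≤ (σ a).rev) :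
    σ = Fin.revPerm := by
  have : Fin.revPerm * σ = 1 := perm_eq_one_of_forall_le h
  rw [eq_inv_of_mul_eq_one_right this]
  rfl

theorem eq_revPerm_or_exists_ascent (σ : Perm (Fin n)) :
    σ = Fin.revPerm ∨ ∃ i j : Fin n, i ⋖ j ∧ σ i < σ j := by
  by_contra! hcon
  obtain ⟨hne, hdesc⟩ := hcon
  refine hne (eq_revPerm_of_forall_le_rev ?_)
  cases n with
  | zero => exact fun a => a.elim0
  | succ n =>
    have hanti : StrictAnti σ := Fin.strictAnti_iff_succ_lt.2 fun i =>
      lt_of_le_of_ne (hdesc i.castSucc i.succ (by simp)) (by simp [Fin.ext_iff])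
    exact fun a => (Fin.rev_strictAnti.comp hanti).le_apply

theorem weyl_inv_mul_unitriangular_mul_mem_borel {v : GL (Fin n) F} (hv : v ∈ unitriangular F n)
    {σ : Perm (Fin n)} :
    (weyl F σ)⁻¹ * (v * weyl F Fin.revPerm) ∈ borel F n ↔ v = 1 ∧ σ = Fin.revPerm := by
  refine ⟨fun h => ?_, by rintro ⟨rfl, rfl⟩; simp [one_mem]⟩
  have hzero (a b : Fin n) (hba : b < a) : v (σ a) b.rev = 0 := by
    simpa only [weyl_inv_mul_apply, mul_weyl_apply, Fin.revPerm_apply] using mem_borel.1 h a b hba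
  have hσ : σ = Fin.revPerm := eq_revPerm_of_forall_le_rev fun a => by
    by_contra hlt
    have := hzero a (σ a).rev (not_le.1 hlt)
    rw [Fin.rev_rev, hv.2] at this
    exact one_ne_zero this
  refine ⟨?_, hσ⟩
  ext a b
  rcases lt_trichotomy a b with hab | rfl | hab
  · simpa [hσ, one_apply_ne hab.ne] using hzero a.rev b.rev (Fin.rev_lt_rev.2 hab)
  · rw [hv.2, Units.val_one, one_apply_eq]
  · rw [hv.1 hab, Units.val_one, one_apply_ne hab.ne']

end Bruhat

section Module

variable {F : Type*} [Field F] {n : ℕ} (R : Type*) [CommRing R]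

open MonoidAlgebra Representation

variable (F n) in
/-- The variety of complete flags, as a homogeneous space of `GL n F`. -/
abbrev Flag : Type _ := GL (Fin n) F ⧸ borel F n

/-- The projection of the flag variety onto the quotient by the minimal parabolic subgroup of the
simple reflection `(i j)`. -/
def flagProj {i j : Fin n} (hij : i ⋖ j) :
    Flag F n → GL (Fin n) F ⧸ (parabolic (collapse i j) : Subgroup (GL (Fin n) F)) :=
  Subgroup.quotientMapOfLE (borel_le_parabolic (collapse_monotone hij))

theorem flagProj_mk {i j : Fin n} (hij : i ⋖ j) (g : GL (Fin n) F) :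
    flagProj hij (QuotientGroup.mk g) = QuotientGroup.mk g := rfl

theorem flagProj_smul {i j : Fin n} (hij : i ⋖ j) (g : GL (Fin n) F) (x : Flag F n) :
    flagProj hij (g • x) = g • flagProj hij x := by
  induction x using QuotientGroup.induction_on
  rfl

theorem mapDomainLinearMap_ofMulAction {G X Y : Type*} [Monoid G] [MulAction G X] [MulAction G Y]
    {φ : X → Y} {g : G} (hφ : ∀ x, φ (g • x) = g • φ x) (f : R[X]) :
    mapDomainLinearMap R R φ (ofMulAction R G X g f) =
      ofMulAction R G Y g (mapDomainLinearMap R R φ f) := by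
  induction f using MonoidAlgebra.induction_linear with
  | zero => simp
  | add f f' hf hf' => simp only [map_add, hf, hf']
  | single x r => simp [hφ]

theorem mapDomain_apply_of_forall_ne {α β M : Type*} [AddCommMonoid M] {φ : α → β} {f : α →₀ M}
    {x : α} (h : ∀ y, y ≠ x → φ y = φ x → f y = 0) : f.mapDomain φ (φ x) = f x := by
  rw [Finsupp.mapDomain, Finsupp.sum_apply, Finsupp.sum_eq_single x]
  · exact Finsupp.single_eq_same
  · intro y hy hne
    exact Finsupp.single_eq_of_ne fun hφ => hy (h y hne hφ.symm)
  · simp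

variable (F n) in
/-- The Steinberg module: the finitely supported functions on the flag variety `GL n F ⧸ borel`
whose sum over each fibre of the projection to the quotient by a minimal parabolic subgroup
vanishes. -/
noncomputable def steinberg : Subrepresentation (ofMulAction R (GL (Fin n) F) (Flag F n)) where
  toSubmodule := ⨅ (i) (j) (hij : i ⋖ j), LinearMap.ker (mapDomainLinearMap R R (flagProj hij))
  apply_mem_toSubmodule g f hf := by
    simp only [Submodule.mem_iInf, LinearMap.mem_ker] at hf ⊢
    intro i j hij
    rw [mapDomainLinearMap_ofMulAction R (flagProj_smul hij g), hf, map_zero]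

variable {R}

theorem mem_steinberg {f : R[Flag F n]} :
    f ∈ steinberg F n R ↔
      ∀ (i j : Fin n) (hij : i ⋖ j), mapDomainLinearMap R R (flagProj hij) f = 0 := by
  change f ∈ (steinberg F n R).toSubmodule ↔ _
  simp [steinberg]

theorem coeff_eq_zero_of_mem_steinberg {f : R[Flag F n]} (hf : f ∈ steinberg F n R) {i j : Fin n}
    (hij : i ⋖ j) {g : GL (Fin n) F}
    (h0 : ∀ h ∈ parabolic (collapse i j), h ∉ borel F n →
      f.coeff (QuotientGroup.mk (g * h)) = 0) :
    f.coeff (QuotientGroup.mk g) = 0 := by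
  have hsum := congrArg (fun f => f.coeff (QuotientGroup.mk g)) (mem_steinberg.1 hf i j hij)
  rwa [coeff_mapDomainLinearMap, ← flagProj_mk hij, mapDomain_apply_of_forall_ne] at hsum
  intro y hne hy
  induction y using QuotientGroup.induction_on with
  | H y =>
    rw [← mul_inv_cancel_left g y]
    exact h0 _ (QuotientGroup.eq.1 hy.symm) fun hb => hne (QuotientGroup.eq.2 hb).symm

theorem toLex_lt_toLex_mul_swap {i j : Fin n} (hij : i < j) {σ : Perm (Fin n)}
    (hσ : σ i < σ j) : toLex (σ : Fin n → Fin n) < toLex ⇑(σ * swap i j) := by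
  refine ⟨i, fun k hk => ?_, by simpa using hσ⟩
  simp [Equiv.swap_apply_of_ne_of_ne hk.ne (hk.trans hij).ne]

/-- If `σ i < σ j` then, in each fibre of `flagProj` meeting the cell of `σ`, all flags but one lie
in the longer cell of `σ * swap i j`; so vanishing propagates down from the big cell. -/
theorem eq_zero_of_forall_bigCell {f : R[Flag F n]} (hf : f ∈ steinberg F n R)
    (h0 : ∀ u ∈ unitriangular F n, f.coeff (QuotientGroup.mk (u * weyl F Fin.revPerm)) = 0) :
    f = 0 := by
  have vanish_on_cell (x : Lex (Fin n → Fin n)) (σ : Perm (Fin n)) (hx : x = toLex ⇑σ) :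
      ∀ g ∈ bruhatCell σ, f.coeff (QuotientGroup.mk g) = 0 := by
    induction x using WellFoundedGT.induction generalizing σ with
    | ind x ih =>
    subst hx
    rintro _ ⟨u, hu, b, hb, rfl⟩
    rw [QuotientGroup.mk_mul_of_mem _ hb]
    rcases eq_revPerm_or_exists_ascent σ with rfl | ⟨i, j, hij, hσ⟩
    · exact h0 u hu
    refine coeff_eq_zero_of_mem_steinberg hf hij fun h hh hB => ?_
    rw [mul_assoc]
    exact ih _ (toLex_lt_toLex_mul_swap hij.lt hσ) _ rfl _ <|
      unitriangular_mul_mem_bruhatCell hu (weyl_mul_mem_bruhatCell_of_notMem_borel hij hσ hh hB)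
  ext x
  induction x using QuotientGroup.induction_on with
  | H g =>
    obtain ⟨σ, hg⟩ := exists_mem_bruhatCell g
    exact vanish_on_cell _ σ rfl g hg

variable (R) in
theorem cast_sign_mul_self {α : Type*} [Fintype α] [DecidableEq α] (σ : Perm α) :
    ((Perm.sign σ : ℤ) : R) * (Perm.sign σ : ℤ) = 1 := by
  rw [← Int.cast_mul, ← Units.val_mul, Int.units_mul_self, Units.val_one, Int.cast_one]

variable (F n R) in
/-- The alternating sum of the flags in the standard apartment, normalised to have coefficient `1`
at the flag opposite to the standard one. -/
noncomputable def apartment : R[Flag F n] :=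
  ∑ σ : Perm (Fin n), single (QuotientGroup.mk (weyl F σ)) (Perm.sign (σ * Fin.revPerm) : R)

theorem apartment_mem_steinberg : apartment F n R ∈ steinberg F n R := by
  refine mem_steinberg.2 fun i j hij => ?_
  rw [apartment, map_sum]
  refine Finset.sum_involution (fun σ _ => σ * swap i j) (fun σ _ => ?_) (fun σ _ _ => ?_)
    (by simp) (fun σ _ => ?_)
  · have hmk : (weyl F (σ * swap i j) : GL (Fin n) F ⧸ parabolic (collapse i j)) = weyl F σ := by
      rw [map_mul, QuotientGroup.mk_mul_of_mem _ (weyl_swap_mem_parabolic i j)]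
    rw [mapDomainLinearMap_single, mapDomainLinearMap_single, flagProj_mk, flagProj_mk, hmk,
      ← MonoidAlgebra.single_add]
    simp [Perm.sign_swap hij.ne]
  · simpa using hij.ne
  · simp [mul_assoc]

theorem coeff_apartment (g : GL (Fin n) F) [DecidablePred (· ∈ borel F n)] :
    (apartment F n R).coeff (QuotientGroup.mk g) =
      ∑ σ, if (weyl F σ)⁻¹ * g ∈ borel F n then (Perm.sign (σ * Fin.revPerm) : R) else 0 := by
  simp only [apartment, coeff_sum, coeff_single, Finsupp.finsetSum_apply, Finsupp.single_apply,
    QuotientGroup.eq]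

theorem coeff_apartment_bigCell [DecidableEq F] {v : GL (Fin n) F} (hv : v ∈ unitriangular F n) :
    (apartment F n R).coeff (QuotientGroup.mk (v * weyl F Fin.revPerm)) =
      if v = 1 then 1 else 0 := by
  classical
  simp only [coeff_apartment, weyl_inv_mul_unitriangular_mul_mem_borel hv]
  split_ifs with h
  · simp only [h, true_and]
    rw [Finset.sum_eq_single Fin.revPerm (by simp +contextual) (by simp), if_pos rfl,
      Perm.sign_mul, Units.val_mul, Int.cast_mul, cast_sign_mul_self]
  · simp [h]

theorem weyl_mem_borel {σ : Perm (Fin n)} : weyl F σ ∈ borel F n ↔ σ = 1 := by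
  refine ⟨fun h => inv_eq_one.1 (perm_eq_one_of_forall_le fun a => ?_), ?_⟩
  · by_contra hlt
    have := mem_borel.1 h a (σ⁻¹ a) (not_le.1 hlt)
    simp [weyl_apply] at this
  · rintro rfl
    rw [map_one]
    exact one_mem _

theorem coeff_apartment_of_mem_borel {b : GL (Fin n) F} (hb : b ∈ borel F n) :
    (apartment F n R).coeff (QuotientGroup.mk b) =
      (Perm.sign (Fin.revPerm : Perm (Fin n)) : R) := by
  classical
  simp [coeff_apartment, Subgroup.mul_mem_cancel_right _ hb, weyl_mem_borel]

variable (F n R) in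
/-- The Steinberg representation of `GL n F`. -/
noncomputable abbrev steinbergRep :
    Representation R (GL (Fin n) F) (steinberg F n R).toSubmodule :=
  (steinberg F n R).toRepresentation

theorem coeff_steinbergRep_apply (g : GL (Fin n) F) (f : (steinberg F n R).toSubmodule)
    (x : Flag F n) : (steinbergRep F n R g f).1.coeff x = f.1.coeff (g⁻¹ • x) :=
  coeff_ofMulAction g f.1 x

theorem bigCell_injective : Function.Injective
    fun v : unitriangular F n =>
      (QuotientGroup.mk (v.1 * weyl F Fin.revPerm) : Flag F n) := by
  intro v w hvw
  have := (weyl_inv_mul_unitriangular_mul_mem_borel (v⁻¹ * w).2 (σ := Fin.revPerm)).1 <| by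
    simpa [mul_assoc] using QuotientGroup.eq.1 hvw
  exact (inv_mul_eq_one.1 (Subtype.ext this.1))

variable (F n R) in
/-- The restriction of a function in the Steinberg module to the big cell, which is a torsor under
the unitriangular group. -/
noncomputable def bigCellRestriction :
    (steinberg F n R).toSubmodule →ₗ[R] unitriangular F n →₀ R :=
  Finsupp.lcomapDomain _ bigCell_injective ∘ₗ (coeffLinearEquiv R).toLinearMap ∘ₗ
    (steinberg F n R).toSubmodule.subtype

theorem bigCellRestriction_apply (f : (steinberg F n R).toSubmodule)
    (v : unitriangular F n) :
    bigCellRestriction F n R f v = f.1.coeff (QuotientGroup.mk (v.1 * weyl F Fin.revPerm)) := rfl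

theorem bigCellRestriction_injective : Function.Injective (bigCellRestriction F n R) := by
  refine (injective_iff_map_eq_zero _).2 fun f hf => Subtype.ext ?_
  exact eq_zero_of_forall_bigCell f.2 fun u hu => DFunLike.congr_fun hf ⟨u, hu⟩

variable (R) in
/-- The translate of `apartment` by a unitriangular matrix. -/
noncomputable def apartmentTranslate (u : unitriangular F n) :
    (steinberg F n R).toSubmodule :=
  steinbergRep F n R u ⟨apartment F n R, apartment_mem_steinberg⟩

theorem bigCellRestriction_apartmentTranslate (u : unitriangular F n) :
    bigCellRestriction F n R (apartmentTranslate R u) = Finsupp.single u 1 := by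
  classical
  ext v
  have := coeff_apartment_bigCell (R := R) (u⁻¹ * v).2
  rw [bigCellRestriction_apply, apartmentTranslate, coeff_steinbergRep_apply,
    MulAction.Quotient.smul_mk, smul_eq_mul, ← mul_assoc]
  simpa only [OneMemClass.coe_eq_one, inv_mul_eq_one, Finsupp.single_apply] using! this

variable (F n R) in
theorem bigCellRestriction_bijective : Function.Bijective (bigCellRestriction F n R) := by
  refine ⟨bigCellRestriction_injective, fun c =>
    ⟨Finsupp.linearCombination R (apartmentTranslate R) c, ?_⟩⟩
  simp only [Finsupp.linearCombination_apply, map_finsuppSum, map_smul,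
    bigCellRestriction_apartmentTranslate, Finsupp.smul_single_one, Finsupp.sum_single]

variable (F n R) in
/-- The basis of unitriangular translates of `apartment`, which identifies the Steinberg module with
the regular representation of the unitriangular group. -/
noncomputable def steinbergBasis :
    Module.Basis (unitriangular F n) R (steinberg F n R).toSubmodule :=
  .ofRepr (.ofBijective _ (bigCellRestriction_bijective F n R))

theorem steinbergBasis_apply (u : unitriangular F n) :
    steinbergBasis F n R u = apartmentTranslate R u := by
  rw [Module.Basis.apply_eq_iff]
  exact bigCellRestriction_apartmentTranslate u

theorem steinbergRep_steinbergBasis (u v : unitriangular F n) :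
    steinbergRep F n R u (steinbergBasis F n R v) = steinbergBasis F n R (u * v) := by
  simp only [steinbergBasis_apply, apartmentTranslate, Subgroup.coe_mul, map_mul,
    Module.End.mul_apply]

theorem coeff_steinbergBasis_one (u : unitriangular F n) :
    (steinbergBasis F n R u).1.coeff (QuotientGroup.mk 1) =
      (Perm.sign (Fin.revPerm : Perm (Fin n)) : R) := by
  rw [steinbergBasis_apply, apartmentTranslate, coeff_steinbergRep_apply,
    MulAction.Quotient.smul_mk, smul_eq_mul, mul_one]
  exact coeff_apartment_of_mem_borel (unitriangular_le_borel (u⁻¹).2)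

theorem trace_steinbergRep_eq_zero [Finite F] {u : GL (Fin n) F} (hu : u ∈ unitriangular F n)
    (h1 : u ≠ 1) : LinearMap.trace R _ (steinbergRep F n R u) = 0 := by
  classical
  have := Fintype.ofFinite (unitriangular F n)
  rw [LinearMap.trace_eq_matrix_trace R (steinbergBasis F n R), Matrix.trace]
  refine Finset.sum_eq_zero fun v _ => ?_
  rw [Matrix.diag_apply, LinearMap.toMatrix_apply, steinbergRep_steinbergBasis ⟨u, hu⟩ v,
    Module.Basis.repr_self, Finsupp.single_eq_of_ne]
  simpa using h1

variable (F n R) in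
theorem sum_steinbergRep_apply [Fintype (unitriangular F n)] (f : (steinberg F n R).toSubmodule) :
    ∑ u : unitriangular F n, steinbergRep F n R u f =
      ((Perm.sign (Fin.revPerm : Perm (Fin n)) : R) * f.1.coeff (QuotientGroup.mk 1)) •
        ∑ u, steinbergBasis F n R u := by
  suffices h : (∑ u : unitriangular F n, steinbergRep F n R u) =
      ((Perm.sign (Fin.revPerm : Perm (Fin n)) : R) • (Finsupp.lapply (QuotientGroup.mk 1) ∘ₗ
        (coeffLinearEquiv R).toLinearMap ∘ₗ (steinberg F n R).toSubmodule.subtype)).smulRight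
        (∑ u, steinbergBasis F n R u) by
    simpa using LinearMap.congr_fun h f
  refine (steinbergBasis F n R).ext fun v => ?_
  have hsum : ∑ u : unitriangular F n, steinbergRep F n R u (steinbergBasis F n R v) =
      ∑ u, steinbergBasis F n R u := by
    simpa only [steinbergRep_steinbergBasis, Equiv.coe_mulRight] using
      Equiv.sum_comp (Equiv.mulRight v) (steinbergBasis F n R)
  simp [hsum, coeff_steinbergBasis_one, cast_sign_mul_self]

end Module

section Irreducible

open Representation

theorem isIrreducible_of_forall_mem {k G V : Type*} [Field k] [Monoid G] [AddCommGroup V]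
    [Module k V] {ρ : Representation k G V} [IsSemisimpleRepresentation ρ] {v : V} (hv : v ≠ 0)
    (h : ∀ W : Subrepresentation ρ, W ≠ ⊥ → v ∈ W) : ρ.IsIrreducible := by
  have : Nontrivial (Subrepresentation ρ) :=
    ⟨⊥, ⊤, fun e => hv ((Submodule.mem_bot k).1 (congrArg (v ∈ ·) e ▸ Submodule.mem_top))⟩
  refine ⟨fun W => or_iff_not_imp_left.2 fun hW => ?_⟩
  obtain ⟨W', hW'⟩ := exists_isCompl W
  have hbot : W' = ⊥ := by
    by_contra hne
    have : v ∈ W ⊓ W' := ⟨h W hW, h W' hne⟩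
    rw [hW'.inf_eq_bot] at this
    exact hv (Submodule.mem_bot k |>.1 this)
  rw [← hW'.sup_eq_top, hbot, sup_bot_eq]

variable {F : Type*} [Field F] {n : ℕ} {K : Type*} [Field K]

theorem sum_steinbergBasis_ne_zero [Fintype (unitriangular F n)] :
    ∑ u, steinbergBasis F n K u ≠ 0 := fun h =>
  one_ne_zero (α := K) <| Fintype.linearIndependent_iff.1 (steinbergBasis F n K).linearIndependent
    (fun _ => 1) (by simpa using h) 1

theorem sum_steinbergBasis_mem [Fintype (unitriangular F n)]
    {W : Subrepresentation (steinbergRep F n K)} (hW : W ≠ ⊥) :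
    ∑ u, steinbergBasis F n K u ∈ W := by
  obtain ⟨f, hfW, hf⟩ : ∃ f ∈ W, f ≠ 0 := by
    by_contra! h
    exact hW (eq_bot_iff.2 h)
  obtain ⟨x, hx⟩ : ∃ x, f.1.coeff x ≠ 0 := by
    by_contra! h
    exact hf (Subtype.ext (MonoidAlgebra.ext (Finsupp.ext h)))
  induction x using QuotientGroup.induction_on with
  | H g =>
  have hsum : ∑ u : unitriangular F n, steinbergRep F n K u (steinbergRep F n K g⁻¹ f) ∈ W :=
    sum_mem (S := W.toSubmodule) fun u _ =>
      W.apply_mem_toSubmodule _ (W.apply_mem_toSubmodule _ hfW)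
  rw [sum_steinbergRep_apply, coeff_steinbergRep_apply] at hsum
  refine (W.toSubmodule.smul_mem_iff (mul_ne_zero ?_ ?_)).1 hsum
  · exact left_ne_zero_of_mul_eq_one (cast_sign_mul_self K _)
  · simpa using hx

theorem isIrreducible_steinbergRep [Finite F] [NeZero (Nat.card (GL (Fin n) F) : K)] :
    (steinbergRep F n K).IsIrreducible := by
  have := Fintype.ofFinite (unitriangular F n)
  exact isIrreducible_of_forall_mem sum_steinbergBasis_ne_zero fun _ => sum_steinbergBasis_mem

end Irreducible

section Unipotent

open Module

theorem exists_linearIndependent_apply_mem_span {K V : Type*} [Field K] [AddCommGroup V]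
    [Module K V] {N : End K V} (hN : IsNilpotent N) {k : ℕ} (hk : k ≤ finrank K V) :
    ∃ w : Fin k → V, LinearIndependent K w ∧ ∀ j, N (w j) ∈ Submodule.span K (w '' Set.Iio j) := by
  induction k with
  | zero => exact ⟨Fin.elim0, linearIndependent_empty_type, fun j => j.elim0⟩
  | succ k ih =>
  obtain ⟨w, hw, hNw⟩ := ih (by omega)
  obtain ⟨x, hx⟩ : ∃ x, x ∉ Submodule.span K (Set.range w) := by
    by_contra! h
    have hspan := finrank_span_eq_card hw
    rw [(Submodule.eq_top_iff').2 h, finrank_top, Fintype.card_fin] at hspan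
    omega
  obtain ⟨m, hm⟩ := hN
  obtain ⟨v, hv, hNv⟩ :
      ∃ v, v ∉ Submodule.span K (Set.range w) ∧ N v ∈ Submodule.span K (Set.range w) := by
    by_contra! h
    have : ∀ l, (N ^ l) x ∉ Submodule.span K (Set.range w) := fun l => by
      induction l with
      | zero => exact hx
      | succ l ihl => rw [pow_succ']; exact h _ ihl
    exact this m (by simp [hm])
  refine ⟨Fin.snoc w v, hw.finSnoc hv, Fin.lastCases ?_ fun j => ?_⟩
  · rw [Fin.snoc_last]
    refine Submodule.span_mono ?_ hNv
    rintro _ ⟨i, rfl⟩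
    exact ⟨i.castSucc, i.castSucc_lt_last, by simp⟩
  · rw [Fin.snoc_castSucc]
    refine Submodule.span_mono ?_ (hNw j)
    rintro _ ⟨i, hi, rfl⟩
    exact ⟨i.castSucc, by simpa using hi, by simp⟩

variable {F : Type*} [Field F] {n : ℕ}

theorem exists_conj_mem_unitriangular {g : GL (Fin n) F}
    (hg : ((g : Matrix (Fin n) (Fin n) F) - 1) ^ n = 0) :
    ∃ x : GL (Fin n) F, x * g * x⁻¹ ∈ unitriangular F n := by
  let N := (g : Matrix (Fin n) (Fin n) F) - 1
  have hN : IsNilpotent (toLin' N) := ⟨n, by rw [← toLin'_pow, hg, map_zero]⟩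
  obtain ⟨w, hw, hNw⟩ := exists_linearIndependent_apply_mem_span hN (k := n) (by simp)
  obtain ⟨x, hx⟩ : IsUnit (Matrix.of w)ᵀ := linearIndependent_cols_iff_isUnit.1 hw
  have hwx (k : Fin n) : w k = x.1 *ᵥ Pi.single k 1 := by
    rw [hx, mulVec_single_one]
    rfl
  have hcoord {i j : Fin n} (hji : j ≤ i) {y : Fin n → F}
      (hy : y ∈ Submodule.span F (w '' Set.Iio j)) : (x⁻¹.1 *ᵥ y) i = 0 := by
    suffices h : Submodule.span F (w '' Set.Iio j) ≤
        LinearMap.ker (LinearMap.proj i ∘ₗ toLin' x⁻¹.1) by simpa using h hy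
    rw [Submodule.span_le]
    rintro _ ⟨k, hk, rfl⟩
    change (x⁻¹.1 *ᵥ w k) i = 0
    rw [hwx, mulVec_mulVec, Units.inv_mul, one_mulVec, Pi.single_eq_of_ne (hk.trans_le hji).ne']
  have hstrict {i j : Fin n} (hji : j ≤ i) : (x⁻¹.1 * N * x.1) i j = 0 := by
    have := hcoord hji (hNw j)
    rwa [toLin'_apply, hwx, mulVec_mulVec, mulVec_mulVec, mulVec_single_one] at this
  have hconj : (x⁻¹ * g * x).1 = 1 + x⁻¹.1 * N * x.1 := by
    simp [N, mul_sub, sub_mul]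
  refine ⟨x⁻¹, ?_⟩
  rw [inv_inv]
  refine ⟨mem_borel.2 fun i j hji => ?_, fun i => ?_⟩
  · rw [hconj, Matrix.add_apply, hstrict hji.le, one_apply_ne hji.ne', add_zero]
  · rw [hconj, Matrix.add_apply, hstrict le_rfl, one_apply_eq, add_zero]

end Unipotent

section FDRep

open CategoryTheory

universe u v

theorem id_eq_zero_iff_subsingleton {K : Type u} {G : Type v} [Field K] [Monoid G]
    (V : FDRep K G) : 𝟙 V = 0 ↔ Subsingleton V := by
  refine ⟨fun h => ⟨fun x y => ?_⟩, fun h => ?_⟩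
  · have (x : V) : x = 0 := congrArg (fun φ : V ⟶ V => φ.hom.hom.hom x) h
    rw [this x, this y]
  · ext x
    exact Subsingleton.elim (α := V) _ _

theorem simple_of_isIrreducible {K V : Type u} {G : Type v} [Field K] [Monoid G] [AddCommGroup V]
    [Module K V] [Module.Finite K V] {ρ : Representation K G V} (hρ : ρ.IsIrreducible) :
    Simple (FDRep.of ρ) where
  mono_isIso_iff_nonzero {Y} f _ := by
    refine ⟨?_, fun hf => ?_⟩
    · rintro hiso rfl
      have hid : 𝟙 (FDRep.of ρ) = 0 :=
        ((Limits.isIsoZero_iff_source_target_isZero _ _).1 hiso).2.eq_zero_of_src _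
      have : Subsingleton V := (id_eq_zero_iff_subsingleton _).1 hid
      exact bot_ne_top (α := Subrepresentation ρ) <|
        Subrepresentation.toSubmodule_injective (Subsingleton.elim _ _)
    · let F := forget₂ (FDRep K G) (Rep K G)
      have : (F.obj (FDRep.of ρ)).ρ.IsIrreducible := hρ
      have hsurj : Function.Surjective (F.map f).hom :=
        (Representation.IsIrreducible.surjective_or_eq_zero _).resolve_right fun h =>
          hf (F.map_injective (Rep.hom_ext h))
      have : Epi f := F.epi_of_epi_map ((Rep.epi_iff_surjective _).2 hsurj)
      exact isIso_of_mono_of_epi f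

theorem character_one_ne_zero {K : Type u} {G : Type v} [Field K] [CharZero K] [Group G]
    (V : FDRep K G) [Simple V] :
    V.character 1 ≠ 0 := by
  rw [FDRep.char_one, Nat.cast_ne_zero]
  intro h
  exact id_nonzero V ((id_eq_zero_iff_subsingleton V).2 (Module.finrank_zero_iff.1 h))

variable {F : Type u} [Field F] [Finite F] {n : ℕ} {K : Type u} [Field K]

instance finite_steinberg : Module.Finite K (steinberg F n K).toSubmodule :=
  .of_basis (steinbergBasis F n K)

theorem character_steinbergRep_eq_zero {g : GL (Fin n) F}
    (hg : ((g : Matrix (Fin n) (Fin n) F) - 1) ^ n = 0) (h1 : g ≠ 1) :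
    (FDRep.of (steinbergRep F n K)).character g = 0 := by
  obtain ⟨x, hx⟩ := exists_conj_mem_unitriangular hg
  rw [← FDRep.char_conj _ g x]
  exact trace_steinbergRep_eq_zero hx (by simpa using h1)

variable [CharZero K]

theorem simple_steinbergRep : Simple (FDRep.of (steinbergRep F n K)) :=
  have : NeZero (Nat.card (GL (Fin n) F) : K) := ⟨Nat.cast_ne_zero.2 Nat.card_pos.ne'⟩
  simple_of_isIrreducible isIrreducible_steinbergRep

theorem sum_unipotent_character_ne_zero {F : Type u} [Field F] [Fintype F] [DecidableEq F]
    (V : FDRep K (GL (Fin n) F)) [Simple V] :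
    ∑ g ∈ Finset.univ.filter
        (fun g : GL (Fin n) F => ((g : Matrix (Fin n) (Fin n) F) - 1) ^ n = 0),
      (FDRep.of (steinbergRep F n K)).character g * V.character g⁻¹ ≠ 0 := by
  have := simple_steinbergRep (F := F) (n := n) (K := K)
  rw [Finset.sum_eq_single 1]
  · rw [inv_one]
    exact mul_ne_zero (character_one_ne_zero _) (character_one_ne_zero V)
  · intro g hg h1
    rw [character_steinbergRep_eq_zero (Finset.mem_filter.1 hg).2 h1, zero_mul]
  · refine fun h => absurd (Finset.mem_filter.2 ⟨Finset.mem_univ _, ?_⟩) h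
    rw [Units.val_one, sub_self]
    cases n
    · exact Subsingleton.elim _ _
    · exact zero_pow (Nat.succ_ne_zero _)

end FDRep

end Steinberg

theorem oneBlock_is_all_of_irr_general.{u} {F K : Type u} [Field F] [Fintype F] [DecidableEq F]
    [Field K] [CharZero K] {n : ℕ} (χ ψ : FDRep K (Matrix.GeneralLinearGroup (Fin n) F))
    (hχ : CategoryTheory.Simple χ) (hψ : CategoryTheory.Simple ψ) :
    Relation.EqvGen
      (fun A B : FDRep K (Matrix.GeneralLinearGroup (Fin n) F) =>
        CategoryTheory.Simple A ∧ CategoryTheory.Simple B ∧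
        ∑ g ∈ Finset.univ.filter
            (fun g : Matrix.GeneralLinearGroup (Fin n) F =>
              ((g : Matrix (Fin n) (Fin n) F) - 1) ^ n = 0),
          A.character g * B.character g⁻¹ ≠ 0)
      χ ψ := by
  have hSt := Steinberg.simple_steinbergRep (F := F) (n := n) (K := K)
  exact .trans _ _ _
    (.symm _ _ (.rel _ _ ⟨hSt, hχ, Steinberg.sum_unipotent_character_ne_zero χ⟩))
    (.rel _ _ ⟨hSt, hψ, Steinberg.sum_unipotent_character_ne_zero ψ⟩)

/-- Let `q = p ^ k` be a prime power, `n ≥ 1`, `G = GL(n, 𝔽_q)` and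
`G_u` the set of unipotent elements of `G`. Then the equivalence relation on the
irreducible complex characters of `G` generated by direct linking across `G_u`
(i.e. `χ, ψ` are directly linked if `Σ_{g ∈ G_u} χ(g) ψ(g⁻¹) ≠ 0`) relates any two
irreducible characters: the only 1-block of `G` is the whole of `Irr(G)`. -/
theorem oneBlock_is_all_of_irr
    (p k n : ℕ) (hp : p.Prime) (hk : 0 < k) (hn : 1 ≤ n)
    (F : Type) [Field F] [Fintype F] [DecidableEq F]
    (hq : Fintype.card F = p ^ k)
    (χ ψ : FDRep ℂ (Matrix.GeneralLinearGroup (Fin n) F))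
    (hχ : CategoryTheory.Simple χ) (hψ : CategoryTheory.Simple ψ) :
    Relation.EqvGen
      (fun A B : FDRep ℂ (Matrix.GeneralLinearGroup (Fin n) F) =>
        CategoryTheory.Simple A ∧ CategoryTheory.Simple B ∧
        ∑ g ∈ Finset.univ.filter
            (fun g : Matrix.GeneralLinearGroup (Fin n) F =>
              ((g : Matrix (Fin n) (Fin n) F) - 1) ^ n = 0),
          A.character g * B.character g⁻¹ ≠ 0)
      χ ψ :=
  oneBlock_is_all_of_irr_general χ ψ hχ hψ
end

section
/- Let q be a prime power, let f be a monic irreducible polynomial over 𝔽_q of degree d with f ≠ X, let k ≥ 1, and let V be an 𝔽_q-vector space of dimension k·d. Let h ∈ GL(V) be an (invertible, semisimple, primary) element whose minimal polynomial over 𝔽_q equals f. Then the centralizer of h in GL(V) is isomorphic, as a group, to the general linear group GL(k, K) of degree k over the field K = 𝔽_q[X]/(f), a field with q^d elements; i.e. C_{GL(kd, q)}(h) ≅ GL(k, q^d). -/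
/-! Evaluating polynomials at `h` makes `V` a vector space over the field `K = F[X]/(f)`, on which
the class of `X` acts as `h`. As `K` is generated over `F` by that class, an `F`-linear endomorphism
of `V` commutes with `h` exactly when it is `K`-linear. Hence the centralizer of `h` in the algebra
`End F V` is `End K V`, a full matrix algebra over `K` whose size `dim_K V` is determined by
`dim_F V = d * dim_K V`; the group statement follows by passing to units. -/

open Module Polynomial

section UnitsCentralizer

variable {M : Type*} [Monoid M]

theorem units_centralizer_image_val (s : Set Mˣ) :
    (Submonoid.centralizer (Units.val '' s)).units = Subgroup.centralizer s := by
  have mem_iff (u : Mˣ) :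
      (u : M) ∈ Submonoid.centralizer (Units.val '' s) ↔ u ∈ Subgroup.centralizer s := by
    simp [Submonoid.mem_centralizer_iff, Subgroup.mem_centralizer_iff, Units.ext_iff]
  ext u
  rw [Submonoid.mem_units_iff, mem_iff, mem_iff, inv_mem_iff, and_self]

/-- The centralizer of a set `s` of units in the group of units is the group of units of the
centralizer of `s` in the monoid. -/
def centralizerUnitsMulEquiv (s : Set Mˣ) :
    Subgroup.centralizer s ≃* (Submonoid.centralizer (Units.val '' s))ˣ :=
  (MulEquiv.subgroupCongr (units_centralizer_image_val s).symm).trans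
    (Submonoid.centralizer (Units.val '' s)).unitsEquivUnitsType

end UnitsCentralizer

section EndCentralizer

variable {R A M : Type*} [CommSemiring R] [Semiring A] [Algebra R A] [AddCommMonoid M] [Module R M]
  [Module A M] [IsScalarTower R A M] {s : Set A}

theorem mem_centralizer_lsmul_image_iff (hs : Algebra.adjoin R s = ⊤) {g : End R M} :
    g ∈ Subalgebra.centralizer R (Algebra.lsmul R R M '' s) ↔
      ∀ (a : A) (m : M), g (a • m) = a • g m := by
  constructor
  · intro hg a
    have ha : Algebra.lsmul R R M a ∈ Algebra.adjoin R (Algebra.lsmul R R M '' s) := by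
      rw [← AlgHom.map_adjoin, hs]
      exact Subalgebra.mem_map.mpr ⟨a, Algebra.mem_top, rfl⟩
    exact LinearMap.congr_fun (Algebra.adjoin_le_centralizer_centralizer R _ ha g hg)
  · rintro hg _ ⟨a, -, rfl⟩
    ext m
    exact (hg a m).symm

/-- If `s` generates `A` as an `R`-algebra, then the algebra of `A`-linear endomorphisms of `M` is
the centralizer of the action of `s` in the algebra of `R`-linear endomorphisms. -/
def endAlgEquivCentralizer (hs : Algebra.adjoin R s = ⊤) :
    End A M ≃ₐ[R] Subalgebra.centralizer R (Algebra.lsmul R R M '' s) where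
  toFun g := ⟨g.restrictScalars R, (mem_centralizer_lsmul_image_iff hs).mpr g.map_smul⟩
  invFun g := { g.1 with map_smul' := (mem_centralizer_lsmul_image_iff hs).mp g.2 }
  map_mul' _ _ := rfl
  map_add' _ _ := rfl
  commutes' _ := rfl

end EndCentralizer

/-- If `s` generates the commutative `R`-algebra `A`, then a finite `A`-basis of `M` identifies the
centralizer of the action of `s` on `M` with a matrix algebra over `A`. -/
noncomputable def centralizerAlgEquivMatrix {R A M ι : Type*} [CommSemiring R] [CommSemiring A]
    [Algebra R A] [AddCommMonoid M] [Module R M] [Module A M] [IsScalarTower R A M] [Fintype ι]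
    [DecidableEq ι] (b : Basis ι A M) {s : Set A} (hs : Algebra.adjoin R s = ⊤) :
    Subalgebra.centralizer R (Algebra.lsmul R R M '' s) ≃ₐ[R] Matrix ι ι A :=
  (endAlgEquivCentralizer hs).symm.trans ((algEquivMatrix b).restrictScalars R)

section AdjoinRootMinpoly

variable {R A : Type*} [CommRing R] [Ring A] [Algebra R A]

/-- Evaluation of polynomials at `x`, as a homomorphism from `R[X]/(minpoly R x)`. Unlike for
`AdjoinRoot.liftAlgHom`, the target need not be commutative, so that `x` may be an endomorphism. -/
noncomputable def aevalAdjoinRootMinpoly (x : A) : AdjoinRoot (minpoly R x) →ₐ[R] A :=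
  Ideal.Quotient.liftₐ (Ideal.span {minpoly R x}) (aeval x) fun _ hp ↦
    aeval_eq_zero_of_dvd_aeval_eq_zero (Ideal.mem_span_singleton.mp hp) (minpoly.aeval R x)

theorem aevalAdjoinRootMinpoly_root (x : A) :
    aevalAdjoinRootMinpoly x (AdjoinRoot.root (minpoly R x)) = x :=
  aeval_X x

end AdjoinRootMinpoly

section VectorSpace

variable {F V : Type*} [Field F] [AddCommGroup V] [Module F V]

theorem finrank_adjoinRoot_mul_natDegree (f : F[X]) [Fact (Irreducible f)]
    [Module (AdjoinRoot f) V] [IsScalarTower F (AdjoinRoot f) V] :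
    finrank (AdjoinRoot f) V * f.natDegree = finrank F V := by
  have hK : finrank F (AdjoinRoot f) = f.natDegree := finrank_quotient_span_eq_natDegree
  rw [← hK, mul_comm, finrank_mul_finrank]

variable [FiniteDimensional F V]

theorem nonempty_centralizer_algEquiv_matrix_adjoinRoot {φ : End F V}
    (hirr : Irreducible (minpoly F φ)) {k : ℕ}
    (hdim : finrank F V = k * (minpoly F φ).natDegree) :
    Nonempty (Subalgebra.centralizer F {φ} ≃ₐ[F]
      Matrix (Fin k) (Fin k) (AdjoinRoot (minpoly F φ))) := by
  have : Fact (Irreducible (minpoly F φ)) := ⟨hirr⟩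
  let ψ := aevalAdjoinRootMinpoly (R := F) φ
  let _ : Module (AdjoinRoot (minpoly F φ)) V := Module.compHom V ψ.toRingHom
  have : IsScalarTower F (AdjoinRoot (minpoly F φ)) V :=
    ⟨fun r a v ↦ LinearMap.congr_fun (map_smul ψ r a) v⟩
  have hroot : Algebra.lsmul F F V (AdjoinRoot.root (minpoly F φ)) = φ :=
    aevalAdjoinRootMinpoly_root φ
  have : Module.Finite (AdjoinRoot (minpoly F φ)) V := .of_restrictScalars_finite F _ _
  have hrank : finrank (AdjoinRoot (minpoly F φ)) V = k :=
    Nat.eq_of_mul_eq_mul_right hirr.natDegree_pos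
      ((finrank_adjoinRoot_mul_natDegree (minpoly F φ)).trans hdim)
  let b := finBasisOfFinrankEq (AdjoinRoot (minpoly F φ)) V hrank
  have e := centralizerAlgEquivMatrix b (AdjoinRoot.adjoinRoot_eq_top (f := minpoly F φ))
  rw [Set.image_singleton, hroot] at e
  exact ⟨e⟩

theorem centralizer_semisimple_primary_iso_general {f : F[X]} (hirr : Irreducible f) {k : ℕ}
    (hdim : finrank F V = k * f.natDegree) (h : (End F V)ˣ)
    (hmin : minpoly F (h : End F V) = f) :
    Nonempty (Subgroup.centralizer {h} ≃* Matrix.GeneralLinearGroup (Fin k) (AdjoinRoot f)) := by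
  subst hmin
  obtain ⟨e⟩ := nonempty_centralizer_algEquiv_matrix_adjoinRoot hirr hdim
  rw [← Set.image_singleton (f := Units.val)] at e
  exact ⟨(centralizerUnitsMulEquiv {h}).trans (Units.mapEquiv e.toMulEquiv)⟩

end VectorSpace

/-- Let `𝔽_q` be a finite field, `f ≠ X` a monic irreducible
polynomial over `𝔽_q` of degree `d`, `k ≥ 1`, and `V` an `𝔽_q`-vector space of
dimension `k·d`. If `h ∈ GL(V)` has minimal polynomial `f` (such an element is
invertible, semisimple and primary), then the centralizer of `h` in `GL(V)` is
isomorphic as a group to `GL(k, K)` where `K = 𝔽_q[X]/(f)` is a field with `q^d`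
elements; i.e. `C_{GL(kd,q)}(h) ≅ GL(k, q^d)`. -/
theorem centralizer_semisimple_primary_iso
    (F : Type) [Field F] [Fintype F]
    (f : Polynomial F) (hmonic : f.Monic) (hirr : Irreducible f)
    (hfX : f ≠ Polynomial.X)
    (d k : ℕ) (hd : f.natDegree = d) (hk : 1 ≤ k)
    (V : Type) [AddCommGroup V] [Module F V] [FiniteDimensional F V]
    (hdim : Module.finrank F V = k * d)
    (h : (Module.End F V)ˣ)
    (hmin : minpoly F (h : Module.End F V) = f) :
    Nonempty
      ((Subgroup.centralizer {h} : Subgroup (Module.End F V)ˣ) ≃*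
        Matrix.GeneralLinearGroup (Fin k) (AdjoinRoot f)) := by
  subst hd
  exact centralizer_semisimple_primary_iso_general hirr hdim h hmin
end

section
/- Fix an integer d ≥ 1, let x ∈ 𝒳_d and let y ∈ 𝒴_d(x). Then the centralizer of the product xy in G is contained in the centralizer of x: C_G(xy) ≤ C_G(x). -/
open Polynomial

/-- For `g ∈ GL(V)` with `n = dim V`, the subspace `V_g = range((g - 1)^n)`. -/
noncomputable def primaryRange {F V : Type} [Field F] [AddCommGroup V] [Module F V]
    (g : (Module.End F V)ˣ) : Submodule F V :=
  LinearMap.range (((g : Module.End F V) - 1) ^ Module.finrank F V)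

/-- For `g ∈ GL(V)` with `n = dim V`, the subspace `V_g⁰ = ker((g - 1)^n)`. -/
noncomputable def primaryKer {F V : Type} [Field F] [AddCommGroup V] [Module F V]
    (g : (Module.End F V)ˣ) : Submodule F V :=
  LinearMap.ker (((g : Module.End F V) - 1) ^ Module.finrank F V)

/-- The set `𝒳_d` of `d`-elements of `GL(V)`: those `g` fixing `V_g⁰` pointwise such
that every monic irreducible factor of the characteristic polynomial of `g` other
than `X - 1` has degree divisible by `d`. -/
noncomputable def dElements (F V : Type) [Field F] [AddCommGroup V] [Module F V]
    [FiniteDimensional F V] (d : ℕ) : Set (Module.End F V)ˣ :=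
  {g | (∀ v ∈ primaryKer g, (g : Module.End F V) v = v) ∧
    ∀ f : Polynomial F, f.Monic → Irreducible f →
      f ∣ LinearMap.charpoly (g : Module.End F V) → f ≠ X - 1 → d ∣ f.natDegree}

/-- For `x ∈ 𝒳_d`, the set `𝒴_d(x)`: those `y ∈ GL(V)` fixing `V_x` pointwise,
mapping `V_x⁰` into itself, and such that every monic irreducible factor of the
characteristic polynomial of `y` other than `X - 1` has degree not divisible by `d`. -/
noncomputable def dRegular (F V : Type) [Field F] [AddCommGroup V] [Module F V]
    [FiniteDimensional F V] (d : ℕ) (x : (Module.End F V)ˣ) :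
    Set (Module.End F V)ˣ :=
  {y | (∀ v ∈ primaryRange x, (y : Module.End F V) v = v) ∧
    (∀ v ∈ primaryKer x, (y : Module.End F V) v ∈ primaryKer x) ∧
    ∀ f : Polynomial F, f.Monic → Irreducible f →
      f ∣ LinearMap.charpoly (y : Module.End F V) → f ≠ X - 1 → ¬ d ∣ f.natDegree}

/-!
Put `g = xy`. Since `V = V_x ⊕ V_x⁰` with `y = 1` on `V_x` and `x = 1` on `V_x⁰`, we have
`(x - 1)(y - 1) = 0 = (y - 1)(x - 1)`; hence `(x - 1) p(g) = p(x) (x - 1)` and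
`(y - 1) p(g) = p(y) (y - 1)` for every polynomial `p`. Write the characteristic polynomial of `x`
as `(X - 1)^m P` with `P(1) ≠ 0`; then `P(x)` maps `V` into `V_x⁰`, so `(x - 1) P(x) = 0`. The
degree conditions make `P` coprime to the characteristic polynomial `Q` of `y`, say `a P + b Q = 1`.
Now `(x - 1) P(g) = 0` and `(y - 1) Q(g) = 0`, so `x = 1 + (g - 1) b(g) Q(g)` is a polynomial in
`g`, and whatever commutes with `g` commutes with `x`.
-/

theorem semiconjBy_aeval {R A : Type*} [CommSemiring R] [Semiring A] [Algebra R A] {c a b : A}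
    (h : SemiconjBy c a b) (p : R[X]) : SemiconjBy c (aeval a p) (aeval b p) := by
  induction p using Polynomial.induction_on' with
  | add p q hp hq => simpa only [map_add] using hp.add_right hq
  | monomial n r =>
    simpa only [aeval_monomial] using
      SemiconjBy.mul_right (Algebra.commute_algebraMap_right r c) (h.pow_right n)

theorem mem_adjoin_mul_of_isCoprime {R A : Type*} [CommRing R] [Ring A] [Algebra R A] {x y : A}
    (hxy : (x - 1) * (y - 1) = 0) (hyx : (y - 1) * (x - 1) = 0) {P Q : R[X]} (hPQ : IsCoprime P Q)
    (hP : aeval x ((X - 1) * P) = 0) (hQ : aeval y ((X - 1) * Q) = 0) :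
    x ∈ Algebra.adjoin R {x * y} := by
  have hxg : SemiconjBy (x - 1) (x * y) x := by
    rw [SemiconjBy]
    linear_combination (norm := noncomm_ring) x * hxy
  have hyg : SemiconjBy (y - 1) (x * y) y := by
    rw [SemiconjBy]
    linear_combination (norm := noncomm_ring) hyx * y
  have hg : x * y - 1 = (x - 1) + x * (y - 1) := by noncomm_ring
  rw [mul_comm, map_mul, map_sub, aeval_X, map_one] at hP hQ
  obtain ⟨a, b, hab⟩ := hPQ
  set g := x * y
  have hxP : (x - 1) * aeval g P = 0 := (semiconjBy_aeval hxg P).eq.trans hP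
  have hyQ : (y - 1) * aeval g Q = 0 := (semiconjBy_aeval hyg Q).eq.trans hQ
  have bezout : aeval g P * aeval g a + aeval g Q * aeval g b = 1 := by
    rw [← map_mul, ← map_mul, ← map_add, mul_comm P, mul_comm Q, hab, map_one]
  have x_eq : aeval g (1 + (X - 1) * (Q * b)) = x := calc
    aeval g (1 + (X - 1) * (Q * b)) = 1 + (g - 1) * (aeval g Q * aeval g b) := by simp
    _ = 1 + (x - 1) * (aeval g Q * aeval g b) + x * ((y - 1) * aeval g Q) * aeval g b := by
      rw [hg]; noncomm_ring
    _ = 1 + (x - 1) * (1 - aeval g P * aeval g a) := by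
      rw [hyQ, ← bezout, add_sub_cancel_left, mul_zero, zero_mul, add_zero]
    _ = x - (x - 1) * aeval g P * aeval g a := by noncomm_ring
    _ = x := by rw [hxP, zero_mul, sub_zero]
  exact x_eq ▸ aeval_mem_adjoin_singleton R g

theorem isCoprime_of_forall_monic_irreducible {K : Type*} [Field K] {p q : K[X]}
    (h : ∀ f : K[X], f.Monic → Irreducible f → f ∣ p → ¬ f ∣ q) : IsCoprime p q := by
  classical
  by_contra hpq
  obtain ⟨f, hmonic, hirr, hdvd⟩ :=
    exists_monic_irreducible_factor (gcd p q) (mt (gcd_isUnit_iff p q).mp hpq)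
  exact h f hmonic hirr (hdvd.trans (gcd_dvd_left p q)) (hdvd.trans (gcd_dvd_right p q))

theorem sub_one_mul_sub_one_eq_zero {R M : Type*} [Semiring R] [AddCommGroup M] [Module R M]
    {f g : Module.End R M} {p q : Submodule R M} (hpq : Codisjoint p q)
    (hg : ∀ v ∈ p, g v = v) (hf : ∀ v ∈ q, f v = v) (hgq : ∀ v ∈ q, g v ∈ q) :
    (f - 1) * (g - 1) = 0 := by
  refine LinearMap.ext_on_codisjoint hpq (fun v hv => ?_) fun v hv => ?_
  · simp [hg v hv]
  · simp [hf v hv, hf _ (hgq v hv)]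

theorem exists_dvd_charpoly_range_aeval_le_maxGenEigenspace {R M : Type*} [CommRing R]
    [Nontrivial R] [AddCommGroup M] [Module R M] [Module.Free R M] [Module.Finite R M]
    (f : Module.End R M) (μ : R) :
    ∃ P : R[X], P ∣ f.charpoly ∧ ¬ P.IsRoot μ ∧
      LinearMap.range (aeval f P) ≤ f.maxGenEigenspace μ := by
  obtain ⟨P, hP, hroot⟩ :=
    exists_eq_pow_rootMultiplicity_mul_and_not_dvd f.charpoly f.charpoly_monic.ne_zero μ
  refine ⟨P, hP ▸ dvd_mul_left _ _, mt dvd_iff_isRoot.mpr hroot, ?_⟩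
  rintro _ ⟨v, rfl⟩
  refine Module.End.mem_maxGenEigenspace f μ _ |>.mpr ⟨f.charpoly.rootMultiplicity μ, ?_⟩
  have annihilates := LinearMap.congr_fun (hP ▸ f.aeval_self_charpoly) v
  simpa [Algebra.algebraMap_eq_smul_one] using annihilates

section PrimaryDecomposition

variable {F V : Type} [Field F] [AddCommGroup V] [Module F V]

theorem apply_mem_primaryRange (x : (Module.End F V)ˣ) :
    ∀ v ∈ primaryRange x, (x : Module.End F V) v ∈ primaryRange x := by
  have hcomm : Commute (((x : Module.End F V) - 1) ^ Module.finrank F V) (x : Module.End F V) :=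
    ((Commute.refl _).sub_left (Commute.one_left _)).pow_left _
  rintro _ ⟨v, rfl⟩
  exact ⟨(x : Module.End F V) v, LinearMap.congr_fun hcomm.eq v⟩

variable [FiniteDimensional F V]

theorem primaryKer_eq_maxGenEigenspace (x : (Module.End F V)ˣ) :
    primaryKer x = (x : Module.End F V).maxGenEigenspace 1 := by
  rw [Module.End.maxGenEigenspace_eq_genEigenspace_finrank, Module.End.genEigenspace_nat, one_smul,
    primaryKer]

theorem isCompl_primaryRange_primaryKer (x : (Module.End F V)ˣ) :
    IsCompl (primaryRange x) (primaryKer x) := by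
  refine (Submodule.isCompl_iff_disjoint _ _ (LinearMap.finrank_range_add_finrank_ker _).ge).mpr ?_
  simpa only [Module.End.genEigenrange_nat, Module.End.genEigenspace_nat, one_smul] using
    Module.End.generalized_eigenvec_disjoint_range_ker (x : Module.End F V) 1

theorem mem_adjoin_mul_of_mem_dRegular {d : ℕ} {x y : (Module.End F V)ˣ}
    (hx : x ∈ dElements F V d) (hy : y ∈ dRegular F V d x) :
    (x : Module.End F V) ∈ Algebra.adjoin F {(x : Module.End F V) * y} := by
  obtain ⟨hx_fix, hx_dvd⟩ := hx
  obtain ⟨hy_fix, hy_stable, hy_not_dvd⟩ := hy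
  have hcompl := isCompl_primaryRange_primaryKer x
  obtain ⟨P, hP_dvd, hP_root, hP_range⟩ :=
    exists_dvd_charpoly_range_aeval_le_maxGenEigenspace (x : Module.End F V) 1
  have hcoprime : IsCoprime P (LinearMap.charpoly (y : Module.End F V)) := by
    refine isCoprime_of_forall_monic_irreducible fun f hmonic hirr hfP hfy => ?_
    have hne : f ≠ X - 1 := by
      rintro rfl
      exact hP_root (dvd_iff_isRoot.mp (by rwa [C_1]))
    exact hy_not_dvd f hmonic hirr hfy hne (hx_dvd f hmonic hirr (hfP.trans hP_dvd) hne)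
  have hP_zero : aeval (x : Module.End F V) ((X - 1) * P) = 0 := by
    ext v
    have hv := hx_fix _ (primaryKer_eq_maxGenEigenspace x ▸ hP_range ⟨v, rfl⟩)
    simpa [sub_eq_zero] using hv
  refine mem_adjoin_mul_of_isCoprime
    (sub_one_mul_sub_one_eq_zero hcompl.codisjoint hy_fix hx_fix hy_stable)
    (sub_one_mul_sub_one_eq_zero hcompl.symm.codisjoint hx_fix hy_fix (apply_mem_primaryRange x))
    hcoprime hP_zero ?_
  rw [map_mul, LinearMap.aeval_self_charpoly, mul_zero]

theorem centralizer_mul_le_centralizer_general {d : ℕ} {x y : (Module.End F V)ˣ}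
    (hx : x ∈ dElements F V d) (hy : y ∈ dRegular F V d x) :
    Subgroup.centralizer ({x * y} : Set (Module.End F V)ˣ) ≤
      Subgroup.centralizer ({x} : Set (Module.End F V)ˣ) := by
  intro z hz
  rw [Subgroup.mem_centralizer_singleton_iff] at hz ⊢
  have hz_mul : Commute (z : Module.End F V) ((x : Module.End F V) * y) := congrArg Units.val hz
  exact Units.ext <|
    Algebra.commute_of_mem_adjoin_singleton_of_commute (mem_adjoin_mul_of_mem_dRegular hx hy) hz_mul

end PrimaryDecomposition

/-- For `d ≥ 1`, `x ∈ 𝒳_d` and `y ∈ 𝒴_d(x)`, the centralizer of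
`x * y` in `G = GL(V)` is contained in the centralizer of `x`: `C_G(xy) ≤ C_G(x)`. -/
theorem centralizer_mul_le_centralizer
    (F V : Type) [Field F] [Fintype F] [AddCommGroup V] [Module F V]
    [FiniteDimensional F V] (hn : 1 ≤ Module.finrank F V)
    (d : ℕ) (hd : 1 ≤ d)
    (x : (Module.End F V)ˣ) (hx : x ∈ dElements F V d)
    (y : (Module.End F V)ˣ) (hy : y ∈ dRegular F V d x) :
    Subgroup.centralizer ({x * y} : Set (Module.End F V)ˣ) ≤
      Subgroup.centralizer ({x} : Set (Module.End F V)ˣ) := by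
  exact centralizer_mul_le_centralizer_general hx hy
end
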